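/- Let P be a simple 3-polytope with p_3 = 0, p_k = 0 for all k ≥ 8, and p_7 ≤ 1, and let B_k be a k-belt consisting of b_i i-gonal facets for 4 ≤ i ≤ 7 (so b_4+b_5+b_6+b_7 = k), with W_1 and W_2 the two sets of facets on the two sides of B_k. Then one of the following holds: (1) B_k surrounds a k-gonal facet on each side (W_1 = {F_s}, W_2 = {F_t}, both k-gons) and all facets of B_k are quadrangles; (2) B_k surrounds a k-gonal facet F_s on one side and borders an l-loop on the other side with l = b_5 + 2b_6 + 3b_7 ≥ 2; (3) B_k borders an l_1-loop L_1 ⊂ W_1 and an l_2-loop L_2 ⊂ W_2 with l_1, l_2 ≥ 2, where (a) l_α = Σ_{j=1}^{k}(α_j − 1) where α_j is the number of edges F_{i_j} has on the corresponding boundary cycle, (b) l_1 + l_2 = 2k − 2b_4 − b_5 + b_7 ≤ 2k + 1, (c) min{l_1,l_2} ≤ k − b_4 − ⌈(b_5 − b_7)/2⌉ ≤ k, and (d) if b_7 = 0 and l_1, l_2 ≥ k then l_1 = l_2 = k and b_4 = b_5 = 0, b_6 = k. Moreover, if a bordering loop has length l_α = 2, say L_α = (F_i, F_j) with F_i an s_i-gon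 and F_j an s_j-gon, then k = s_i + s_j − 4 ≥ 4. -/

import Mathlib

open Set

noncomputable section

/-- The ambient space `ℝ³`. -/
abbrev E3 := EuclideanSpace ℝ (Fin 3)

/-- The cyclic successor in `Fin k`. -/
def nxt {k : ℕ} (i : Fin k) : Fin k := ⟨(i.1 + 1) % k, Nat.mod_lt _ i.pos⟩

/-- The cyclic predecessor in `Fin k`. -/
def prv {k : ℕ} (i : Fin k) : Fin k := ⟨(i.1 + (k - 1)) % k, Nat.mod_lt _ i.pos⟩

/-- A convex polytope in `ℝ³`: the convex hull of a finite set of points. -/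
def IsPolytope (P : Set E3) : Prop := ∃ V : Finset E3, P = convexHull ℝ (V : Set E3)

/-- The dimension of a subset of `ℝ³` (the dimension of its affine hull). -/
def setDim (A : Set E3) : ℕ := Module.finrank ℝ ↥(vectorSpan ℝ A)

/-- A face of a polytope: a nonempty closed convex extreme subset. -/
def IsFaceOf (F P : Set E3) : Prop :=
  F.Nonempty ∧ IsClosed F ∧ Convex ℝ F ∧ IsExtreme ℝ P F

/-- A facet: a `2`-dimensional face. -/
def IsFacetOf (F P : Set E3) : Prop := IsFaceOf F P ∧ setDim F = 2

/-- An edge: a `1`-dimensional face. -/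
def IsEdgeOf (F P : Set E3) : Prop := IsFaceOf F P ∧ setDim F = 1

/-- A vertex: a point whose singleton is a face. -/
def IsVertexOf (v : E3) (P : Set E3) : Prop := IsFaceOf {v} P

/-- The set of facets of `P`. -/
def facets (P : Set E3) : Set (Set E3) := {F | IsFacetOf F P}

/-- A simple 3-polytope: a 3-dimensional convex polytope each of whose vertices
is contained in exactly 3 facets. -/
def IsSimplePolytope3 (P : Set E3) : Prop :=
  IsPolytope P ∧ setDim P = 3 ∧
    ∀ v : E3, IsVertexOf v P → {F | IsFacetOf F P ∧ v ∈ F}.ncard = 3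

/-- The number of edges of a facet `F` of `P`. -/
def facetEdges (P F : Set E3) : ℕ := {e | IsEdgeOf e P ∧ e ⊆ F}.ncard

/-- `pVec P k` is the number of `k`-gonal facets of `P`. -/
def pVec (P : Set E3) (k : ℕ) : ℕ := {F | IsFacetOf F P ∧ facetEdges P F = k}.ncard

/-- A (mathematical) fullerene: a simple 3-polytope with all facets pentagons
and hexagons. -/
def IsFullerene (P : Set E3) : Prop :=
  IsSimplePolytope3 P ∧ ∀ F, IsFacetOf F P → facetEdges P F = 5 ∨ facetEdges P F = 6

/-- A `k`-loop in `P` (`k ≥ 2`): a cyclic sequence of facets in which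
(cyclically) consecutive facets intersect in an edge; a `1`-loop is a single facet. -/
def IsLoop (P : Set E3) {k : ℕ} (L : Fin k → Set E3) : Prop :=
  0 < k ∧ (∀ i, IsFacetOf (L i) P) ∧ (2 ≤ k → ∀ i, IsEdgeOf (L i ∩ L (nxt i)) P)

/-- A simple loop: a loop with pairwise different facets. -/
def IsSimpleLoop (P : Set E3) {k : ℕ} (L : Fin k → Set E3) : Prop :=
  IsLoop P L ∧ Function.Injective L

/-- A `k`-belt (`k ≥ 3`): a `k`-loop such that for `k = 3` the three facets have empty
total intersection, and for `k ≥ 4` two facets intersect iff they are cyclically successive. -/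
def IsBelt (P : Set E3) {k : ℕ} (L : Fin k → Set E3) : Prop :=
  3 ≤ k ∧ IsLoop P L ∧
    (k = 3 → ∀ i, L i ∩ L (nxt i) ∩ L (nxt (nxt i)) = ∅) ∧
    (4 ≤ k → ∀ p q, p ≠ q → ((L p ∩ L q).Nonempty ↔ q = nxt p ∨ p = nxt q))

/-- A flag 3-polytope: a simple 3-polytope different from the tetrahedron
(i.e. not having exactly 4 facets) without 3-belts. -/
def IsFlag3Polytope (P : Set E3) : Prop :=
  IsSimplePolytope3 P ∧ (facets P).ncard ≠ 4 ∧ ∀ B : Fin 3 → Set E3, ¬ IsBelt P B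

/-- `γ` is the simple edge-cycle of `P` traced by the cyclically ordered distinct
vertices `v 0, …, v (n-1)` (`n ≥ 3`), consecutive ones joined by edges of `P`. -/
def IsSimpleEdgeCycleVia (P γ : Set E3) {n : ℕ} (v : Fin n → E3) : Prop :=
  3 ≤ n ∧ Function.Injective v ∧ (∀ i, IsVertexOf (v i) P) ∧
    (∀ i, IsEdgeOf (segment ℝ (v i) (v (nxt i))) P) ∧
    γ = ⋃ i, segment ℝ (v i) (v (nxt i))

/-- A simple edge-cycle in the graph of `P`. -/
def IsSimpleEdgeCycle (P γ : Set E3) : Prop :=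
  ∃ (n : ℕ) (v : Fin n → E3), IsSimpleEdgeCycleVia P γ v

/-- `C` is a connected component of the set `A`. -/
def IsCompOf (C A : Set E3) : Prop := ∃ x ∈ A, C = connectedComponentIn A x

/-- The loop `L` is obtained by walking round the simple edge-cycle `γ` inside the
connected component `C` of `∂P ∖ γ`: the facets of `L` lie on the side `C`, and the
edges of `γ`, in cyclic order, lie in the facets of `L` in cyclic order (the loop
index advancing exactly when the facet changes, and making exactly one turn). -/
def WalksRound (P γ C : Set E3) {k : ℕ} (L : Fin k → Set E3) : Prop :=
  IsLoop P L ∧ (∀ i, intrinsicInterior ℝ (L i) ⊆ C) ∧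
    ∃ (n : ℕ) (v : Fin n → E3) (φ : Fin n → Fin k),
      IsSimpleEdgeCycleVia P γ v ∧
      (∀ i, segment ℝ (v i) (v (nxt i)) ⊆ L (φ i)) ∧
      (∀ i, φ (nxt i) = φ i ∨ φ (nxt i) = nxt (φ i)) ∧
      Function.Surjective φ ∧
      (2 ≤ k → (Finset.univ.filter (fun i : Fin n => φ (nxt i) ≠ φ i)).card = k)

/-- Two loops border each other: they are obtained by walking round the same simple
edge-cycle `γ` in the two different connected components of `∂P ∖ γ`. -/
def Borders (P : Set E3) {k₁ k₂ : ℕ} (L₁ : Fin k₁ → Set E3) (L₂ : Fin k₂ → Set E3) : Prop :=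
  ∃ γ C₁ C₂ : Set E3, IsCompOf C₁ (frontier P \ γ) ∧ IsCompOf C₂ (frontier P \ γ) ∧
    C₁ ≠ C₂ ∧ WalksRound P γ C₁ L₁ ∧ WalksRound P γ C₂ L₂

/-- A loop surrounds the facet `F` if it borders the `1`-loop `(F)`. -/
def Surrounds (P : Set E3) {k : ℕ} (L : Fin k → Set E3) (F : Set E3) : Prop :=
  IsFacetOf F P ∧ Borders P L (fun _ : Fin 1 => F)

/-- The number of edges of `P` lying in the facet `F` and in the set `γ`. -/
def edgesInCommon (P F γ : Set E3) : ℕ := {e | IsEdgeOf e P ∧ e ⊆ F ∧ e ⊆ γ}.ncard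
/-- A simple 3-polytope all of whose facets are pentagons and hexagons except for
at most one exceptional facet, which is a quadrangle or a heptagon. -/
def IsAlmostFullerene (P : Set E3) : Prop :=
  IsSimplePolytope3 P ∧
    (∀ F, IsFacetOf F P → facetEdges P F ∈ ({4, 5, 6, 7} : Set ℕ)) ∧
    {F | IsFacetOf F P ∧ (facetEdges P F = 4 ∨ facetEdges P F = 7)}.ncard ≤ 1

/-- The (combinatorial) dodecahedron: a simple 3-polytope with all facets pentagons. -/
def IsDodecahedron (P : Set E3) : Prop :=
  IsSimplePolytope3 P ∧ ∀ F, IsFacetOf F P → facetEdges P F = 5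

/-- `e` and `e'` are opposite edges of the hexagonal facet `H`: they are disjoint and no
edge of `H` meets both of them. -/
def OppositeEdges (P H e e' : Set E3) : Prop :=
  IsEdgeOf e P ∧ IsEdgeOf e' P ∧ e ⊆ H ∧ e' ⊆ H ∧ e ∩ e' = ∅ ∧
    ∀ e'', IsEdgeOf e'' P → e'' ⊆ H → (e'' ∩ e).Nonempty → e'' ≠ e → e'' ∩ e' = ∅

/-- A cap: a pentagonal facet `F₀` together with a surrounding 5-belt of pentagons. -/
def IsCapOf (P F₀ : Set E3) (L : Fin 5 → Set E3) : Prop :=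
  IsFacetOf F₀ P ∧ facetEdges P F₀ = 5 ∧ (∀ i, facetEdges P (L i) = 5) ∧
    IsBelt P L ∧ Surrounds P L F₀

/-- The number of 5-belts of `P` (counted as sets of facets). -/
def fiveBeltCount (P : Set E3) : ℕ :=
  {S : Set (Set E3) | ∃ B : Fin 5 → Set E3, IsBelt P B ∧ S = Set.range B}.ncard

/-- The structure of the `k`-th fullerene of Family I: two caps separated by `k`
hexagonal 5-belts, each bordering the next (for `k = 0` the caps border each other,
giving the dodecahedron). -/
def FamilyI (P : Set E3) (k : ℕ) : Prop :=
  ∃ (F₀ F₀' : Set E3) (L L' : Fin 5 → Set E3) (B : ℕ → Fin 5 → Set E3),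
    IsCapOf P F₀ L ∧ IsCapOf P F₀' L' ∧
    (∀ i < k, IsBelt P (B i) ∧ ∀ j, facetEdges P (B i j) = 6) ∧
    (∀ i, i + 1 < k → Borders P (B i) (B (i + 1))) ∧
    (0 < k → Borders P L (B 0) ∧ Borders P (B (k - 1)) L') ∧
    (k = 0 → Borders P L L') ∧
    facets P = {F₀, F₀'} ∪ Set.range L ∪ Set.range L' ∪ ⋃ i ∈ Set.Iio k, Set.range (B i)

/-- `P` is obtained from `Q` by an `(s,k;t₀,t₁)`-truncation with new edge `Enew`:
`P` is cut off from `Q` by a halfspace `{f ≤ c}` whose boundary plane crosses exactly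
two edges `E₀ ≠ E₁` of a `k`-gonal facet `F` of `Q`, cutting off exactly `s` vertices,
all belonging to `F`; `G₀` and `G₁` are the facets meeting `F` along `E₀` and `E₁`, and
they are `t₀`- and `t₁`-gons; `Enew` is the new edge dividing `F`. -/
def IsTruncation (s k t₀ t₁ : ℕ) (Q P Enew : Set E3) : Prop :=
  IsSimplePolytope3 Q ∧ IsSimplePolytope3 P ∧
    ∃ (F E₀ E₁ G₀ G₁ : Set E3) (f : E3 →ₗ[ℝ] ℝ) (c : ℝ),
      IsFacetOf F Q ∧ facetEdges Q F = k ∧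
      IsEdgeOf E₀ Q ∧ IsEdgeOf E₁ Q ∧ E₀ ≠ E₁ ∧ E₀ ⊆ F ∧ E₁ ⊆ F ∧
      IsFacetOf G₀ Q ∧ IsFacetOf G₁ Q ∧ G₀ ≠ F ∧ G₁ ≠ F ∧ E₀ ⊆ G₀ ∧ E₁ ⊆ G₁ ∧
      facetEdges Q G₀ = t₀ ∧ facetEdges Q G₁ = t₁ ∧
      P = Q ∩ {x | f x ≤ c} ∧
      (∀ e, IsEdgeOf e Q → (∃ x ∈ e, c < f x) → (∃ x ∈ e, f x < c) → e = E₀ ∨ e = E₁) ∧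
      (∃ x ∈ E₀, c < f x) ∧ (∃ x ∈ E₀, f x < c) ∧
      (∃ x ∈ E₁, c < f x) ∧ (∃ x ∈ E₁, f x < c) ∧
      (∀ v, IsVertexOf v Q → f v ≠ c) ∧
      {v | IsVertexOf v Q ∧ c < f v}.ncard = s ∧
      (∀ v, IsVertexOf v Q → c < f v → v ∈ F) ∧
      Enew = F ∩ {x | f x = c}

/-- Combinatorial equivalence of polytopes: an inclusion-preserving bijection
between the sets of faces. -/
def CombEquiv (P Q : Set E3) : Prop :=
  ∃ φ : {A : Set E3 // IsFaceOf A P} ≃ {A : Set E3 // IsFaceOf A Q},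
    ∀ A B : {A : Set E3 // IsFaceOf A P}, A.1 ⊆ B.1 ↔ (φ A).1 ⊆ (φ B).1

/-- Combinatorial equivalence sending the face `Ep` of `P` to the face `Eq` of `Q`. -/
def CombEquivMapping (P Q Ep Eq : Set E3) : Prop :=
  ∃ φ : {A : Set E3 // IsFaceOf A P} ≃ {A : Set E3 // IsFaceOf A Q},
    (∀ A B : {A : Set E3 // IsFaceOf A P}, A.1 ⊆ B.1 ↔ (φ A).1 ⊆ (φ B).1) ∧
    ∀ h : IsFaceOf Ep P, ((φ ⟨Ep, h⟩) : {A : Set E3 // IsFaceOf A Q}).1 = Eq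

/-- The straightening of `P` along the edge `E` is defined: `P` is combinatorially
obtained from some simple 3-polytope `Q` by an `(s,k)`-truncation whose new edge
corresponds to `E`. -/
def StraighteningDefined (P E : Set E3) : Prop :=
  ∃ (s k t₀ t₁ : ℕ) (Q P₁ E₁ : Set E3),
    IsTruncation s k t₀ t₁ Q P₁ E₁ ∧ CombEquivMapping P P₁ E E₁

/-- `P` is obtained from `Q` by one of the truncations
`(1;4,5)`, `(1;5,5)`, `(2,6;4,5)`, `(2,6;5,5)`, `(2,6;5,6)`, `(2,7;5,5)`, `(2,7;5,6)`. -/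
def FullereneStep (Q P : Set E3) : Prop :=
  ∃ (s k t₀ t₁ : ℕ) (Enew : Set E3), IsTruncation s k t₀ t₁ Q P Enew ∧
    ((s = 1 ∧ (({t₀, t₁} : Finset ℕ) = {4, 5} ∨ ({t₀, t₁} : Finset ℕ) = {5, 5})) ∨
     (s = 2 ∧ k = 6 ∧ (({t₀, t₁} : Finset ℕ) = {4, 5} ∨ ({t₀, t₁} : Finset ℕ) = {5, 5} ∨
        ({t₀, t₁} : Finset ℕ) = {5, 6})) ∨
     (s = 2 ∧ k = 7 ∧ (({t₀, t₁} : Finset ℕ) = {5, 5} ∨ ({t₀, t₁} : Finset ℕ) = {5, 6})))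

/-!
Walk round the belt on one of its sides. At each vertex of the walk three facets meet, two of which
are passed on one side of the walk and one on the other, so exactly one of the following happens:
the belt facet changes, or the facet opposite to it changes. Hence the facets opposite to the belt
change `∑ j, (αⱼ - 1)` times, where `αⱼ ≥ 1` is the number of edges of `Bⱼ` on this side. No cyclic
sequence changes exactly once: if there are no changes, the side is a single facet, and otherwise
merging repetitions gives a loop of that length. The facet `Bⱼ` has `αⱼ + α'ⱼ + 2` edges, namely
those on the two sides and those shared with its neighbours in the belt, so the two lengths add up
to `∑ j, (facetEdges P (B j) - 4) = b₅ + 2 b₆ + 3 b₇`.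

For a bordering loop of two facets the walk has `k` changes on the side of the belt and two on the
other, so `k + 2` edges. Each of the two facets has one edge besides those on the walk, namely their
common one, which gives `sᵢ + sⱼ = k + 4`.

The cyclic order of the neighbours of a facet comes from the outer normal vectors: along the edge of
two facets with normals `a` and `b` one travels in the direction `a × b`.
-/

open scoped InnerProductSpace

/-! ### Convex sets and their supporting hyperplanes -/

lemma mem_of_isExtreme_of_add_smul_sub_mem {E : Type*} [AddCommGroup E] [Module ℝ E] {A F : Set E}
    (hF : IsExtreme ℝ A F) {x y : E} (hx : x ∈ F) (hy : y ∈ A) {ε : ℝ} (hε : 0 < ε)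
    (hmem : x + ε • (x - y) ∈ A) : y ∈ F := by
  refine hF.left_mem_of_mem_openSegment hy hmem hx
    ⟨ε / (1 + ε), 1 / (1 + ε), by positivity, by positivity, by field_simp; ring, ?_⟩
  have hne : 1 + ε ≠ 0 := by positivity
  rw [show (ε / (1 + ε)) • y + (1 / (1 + ε)) • (x + ε • (x - y)) = ((1 + ε) / (1 + ε)) • x by
    match_scalars <;> field_simp; ring, div_self hne, one_smul]

section TopologicalVectorSpace

variable {E : Type*} [AddCommGroup E] [Module ℝ E] [TopologicalSpace E] [IsTopologicalAddGroup E]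
  [ContinuousSMul ℝ E]

lemma exists_pos_add_smul_mem_of_mem_interior {s : Set E} {x : E} (hx : x ∈ interior s) (d : E) :
    ∃ ε : ℝ, 0 < ε ∧ x + ε • d ∈ s := by
  have hcont : Continuous fun t : ℝ => x + t • d := by fun_prop
  have hnhds : (fun t : ℝ => x + t • d) ⁻¹' interior s ∈ nhds 0 :=
    (isOpen_interior.preimage hcont).mem_nhds (by simpa using hx)
  obtain ⟨ε, hε, hball⟩ := Metric.mem_nhds_iff.1 hnhds
  exact ⟨ε / 2, by positivity, interior_subset (hball (by simp [abs_of_pos hε, hε]))⟩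

lemma exists_pos_add_smul_sub_mem_of_mem_intrinsicInterior {s : Set E} {x y : E}
    (hx : x ∈ intrinsicInterior ℝ s) (hy : y ∈ affineSpan ℝ s) :
    ∃ ε : ℝ, 0 < ε ∧ x + ε • (x - y) ∈ s := by
  obtain ⟨z, hz, rfl⟩ := mem_intrinsicInterior.1 hx
  have hmem (t : ℝ) : (z : E) + t • ((z : E) - y) ∈ affineSpan ℝ s := by
    convert AffineMap.lineMap_mem (1 + t) hy z.2 using 1
    simp only [AffineMap.lineMap_apply, vsub_eq_sub, vadd_eq_add]
    module
  let ray : ℝ → affineSpan ℝ s := fun t => ⟨(z : E) + t • ((z : E) - y), hmem t⟩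
  have hcont : Continuous ray := by
    apply Continuous.subtype_mk; fun_prop
  have hray0 : ray 0 = z := Subtype.ext (by simp [ray])
  have hnhds : ray ⁻¹' interior ((↑) ⁻¹' s : Set (affineSpan ℝ s)) ∈ nhds 0 :=
    (isOpen_interior.preimage hcont).mem_nhds (by simpa [hray0] using hz)
  obtain ⟨ε, hε, hball⟩ := Metric.mem_nhds_iff.1 hnhds
  have hε2 : ε / 2 ∈ Metric.ball 0 ε := by simp [abs_of_pos hε, hε]
  have hmem' : ray (ε / 2) ∈ ((↑) ⁻¹' s : Set (affineSpan ℝ s)) := interior_subset (hball hε2)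
  exact ⟨ε / 2, by positivity, hmem'⟩

lemma subset_of_isExtreme_of_mem_intrinsicInterior {s t A : Set E} {x : E} (ht : IsExtreme ℝ A t)
    (hs : s ⊆ A) (hx : x ∈ intrinsicInterior ℝ s) (hxt : x ∈ t) : s ⊆ t := fun _ hy =>
  have ⟨_, hε, hmem⟩ :=
    exists_pos_add_smul_sub_mem_of_mem_intrinsicInterior hx (subset_affineSpan ℝ s hy)
  mem_of_isExtreme_of_add_smul_sub_mem ht hxt (hs hy) hε (hs hmem)

end TopologicalVectorSpace

section InnerProductSpace

variable {E : Type*} [NormedAddCommGroup E] [InnerProductSpace ℝ E]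

lemma inner_lt_of_mem_interior {s : Set E} {a : E} {c : ℝ} (ha : a ≠ 0)
    (hle : ∀ x ∈ s, ⟪a, x⟫_ℝ ≤ c) {p : E} (hp : p ∈ interior s) : ⟪a, p⟫_ℝ < c := by
  obtain ⟨ε, hε, hmem⟩ := exists_pos_add_smul_mem_of_mem_interior hp a
  have hbound := hle _ hmem
  rw [inner_add_right, inner_smul_right] at hbound
  have := mul_pos hε (real_inner_self_pos.2 ha)
  linarith

lemma ne_zero_of_inner_eq_of_lt {a x y : E} {c : ℝ} (hx : ⟪a, x⟫_ℝ = c)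
    (hy : c < ⟪a, y⟫_ℝ) : a ≠ 0 := by
  rintro rfl
  simp only [inner_zero_left] at hx hy
  exact hy.ne' hx

lemma inner_le_of_mem_convexHull {s : Set E} {a : E} {c : ℝ} (h : ∀ v ∈ s, ⟪a, v⟫_ℝ ≤ c) {x : E}
    (hx : x ∈ convexHull ℝ s) : ⟪a, x⟫_ℝ ≤ c :=
  convexHull_min (t := {x | ⟪a, x⟫_ℝ ≤ c}) h
    (convex_halfSpace_le (innerₛₗ ℝ a).isLinear c) hx

lemma vectorSpan_le_orthogonal {s : Set E} {a : E} {c : ℝ} (h : ∀ x ∈ s, ⟪a, x⟫_ℝ = c) :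
    vectorSpan ℝ s ≤ (ℝ ∙ a)ᗮ := by
  rw [vectorSpan_def, Submodule.span_le]
  rintro _ ⟨x, hx, y, hy, rfl⟩
  simp [Submodule.mem_orthogonal_singleton_iff_inner_right, inner_sub_right, h x hx, h y hy]

lemma isExposed_inner_eq {s : Set E} {a : E} {c : ℝ} (hle : ∀ x ∈ s, ⟪a, x⟫_ℝ ≤ c) :
    IsExposed ℝ s {x ∈ s | ⟪a, x⟫_ℝ = c} := by
  rintro ⟨z, hzs, hz⟩
  refine ⟨innerSL ℝ a, Set.ext fun x => and_congr_right fun hx => ?_⟩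
  simp only [innerSL_apply_apply]
  exact ⟨fun h y hy => h ▸ hle y hy, fun h => (hle x hx).antisymm (hz ▸ h z hzs)⟩

lemma exists_mem_orthogonal_inner_lt [FiniteDimensional ℝ E] {V : Set E}
    (hV : (interior (convexHull ℝ V)).Nonempty) {D : Submodule ℝ E} (hD : D ≠ ⊤) (t : E) :
    ∃ g ∈ Dᗮ, ∃ w ∈ V, ⟪g, t⟫_ℝ < ⟪g, w⟫_ℝ := by
  obtain ⟨g, hgD, hg⟩ := Submodule.exists_mem_ne_zero_of_ne_bot
    (mt (Submodule.orthogonal_eq_bot_iff (K := D)).1 hD)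
  by_contra! hle
  obtain ⟨p, hp⟩ := hV
  have hupper := inner_lt_of_mem_interior hg (fun x => inner_le_of_mem_convexHull (hle g hgD)) hp
  have hlower := inner_lt_of_mem_interior (neg_ne_zero.2 hg)
    (fun x => inner_le_of_mem_convexHull (hle (-g) (Dᗮ.neg_mem hgD))) hp
  simp only [inner_neg_left] at hlower
  linarith

end InnerProductSpace

/-- Rotating the supporting functional `f` towards `g` until a new point `w` becomes active. -/
lemma exists_rotated_max {α : Type*} {s : Finset α} {f g : α → ℝ} {t : α}
    (hf : ∀ v ∈ s, f v ≤ f t) (hg : ∃ w ∈ s, g t < g w) :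
    ∃ w ∈ s, g t < g w ∧ ∃ m : ℝ, f w + m * g w = f t + m * g t ∧
      ∀ v ∈ s, f v + m * g v ≤ f t + m * g t := by
  classical
  obtain ⟨w₀, hw₀, hlt₀⟩ := hg
  obtain ⟨w, hw, hmin⟩ := Finset.exists_min_image (s.filter (fun v => g t < g v))
    (fun v => (f t - f v) / (g v - g t)) ⟨w₀, by simp [hw₀, hlt₀]⟩
  simp only [Finset.mem_filter] at hw hmin
  obtain ⟨hws, hgw⟩ := hw
  have hpos : 0 < g w - g t := sub_pos.2 hgw
  set m := (f t - f w) / (g w - g t)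
  have hm0 : 0 ≤ m := div_nonneg (by linarith [hf w hws]) hpos.le
  have hmw : m * (g w - g t) = f t - f w := div_mul_cancel₀ _ hpos.ne'
  refine ⟨w, hws, hgw, m, by linarith, fun v hv => ?_⟩
  rcases lt_or_ge (g t) (g v) with hgv | hgv
  · have := hmin v ⟨hv, hgv⟩
    rw [le_div_iff₀ (sub_pos.2 hgv)] at this
    linarith
  · linarith [hf v hv, mul_le_mul_of_nonneg_left hgv hm0]

/-! ### The facet inequalities of a polytope -/

lemma finrank_orthogonal_singleton_E3 {a : E3} (ha : a ≠ 0) :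
    Module.finrank ℝ ((ℝ ∙ a)ᗮ : Submodule ℝ E3) = 2 :=
  have : Fact (Module.finrank ℝ E3 = 2 + 1) := ⟨by simp⟩
  Submodule.finrank_orthogonal_span_singleton ha

lemma vectorSpan_eq_orthogonal {F : Set E3} {a : E3} {c : ℝ} (h : ∀ x ∈ F, ⟪a, x⟫_ℝ = c)
    (ha : a ≠ 0) (hF : setDim F = 2) : vectorSpan ℝ F = (ℝ ∙ a)ᗮ :=
  Submodule.eq_of_le_of_finrank_le (vectorSpan_le_orthogonal h) <| by
    rw [finrank_orthogonal_singleton_E3 ha]; exact hF.ge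

lemma isFaceOf_inner_eq {P : Set E3} (hconv : Convex ℝ P) (hclosed : IsClosed P) {a : E3} {c : ℝ}
    (hle : ∀ x ∈ P, ⟪a, x⟫_ℝ ≤ c) (hne : {x ∈ P | ⟪a, x⟫_ℝ = c}.Nonempty) :
    IsFaceOf {x ∈ P | ⟪a, x⟫_ℝ = c} P :=
  have hexp := isExposed_inner_eq hle
  ⟨hne, hexp.isClosed hclosed, hexp.convex hconv, hexp.isExtreme⟩

lemma eq_of_isFaceOf_of_subset {P F G : Set E3} (hF : IsFaceOf F P) (hG : IsFaceOf G P)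
    (hFG : F ⊆ G) (hdim : setDim G ≤ setDim F) : F = G := by
  refine hFG.antisymm fun y hy => ?_
  obtain ⟨x, hx⟩ := hF.1.intrinsicInterior hF.2.2.1
  have hxF := intrinsicInterior_subset hx
  have hspan : vectorSpan ℝ F = vectorSpan ℝ G :=
    Submodule.eq_of_le_of_finrank_le (vectorSpan_mono ℝ hFG) hdim
  have hyF : y ∈ affineSpan ℝ F := by
    have hdir : y - x ∈ vectorSpan ℝ F := hspan ▸ vsub_mem_vectorSpan ℝ hy (hFG hxF)
    simpa using vadd_mem_affineSpan_of_mem_affineSpan_of_mem_vectorSpan (mem_affineSpan ℝ hxF) hdir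
  obtain ⟨ε, hε, hmem⟩ := exists_pos_add_smul_sub_mem_of_mem_intrinsicInterior hx hyF
  exact mem_of_isExtreme_of_add_smul_sub_mem hF.2.2.2 hxF (hG.2.2.2.subset hy) hε
    (hF.2.2.2.subset hmem)

lemma disjoint_interior_facet {P F : Set E3} (hdim : setDim P = 3) (hF : IsFacetOf F P) :
    Disjoint (interior P) F := by
  rw [Set.disjoint_left]
  intro x hx hxF
  have hext : IsExtreme ℝ P F := hF.1.2.2.2
  have hPF : P ⊆ F := fun y hy => by
    obtain ⟨ε, hε, hmem⟩ := exists_pos_add_smul_mem_of_mem_interior hx (x - y)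
    exact mem_of_isExtreme_of_add_smul_sub_mem hext hxF hy hε hmem
  have := hF.2
  rw [hext.subset.antisymm hPF, hdim] at this
  omega

lemma exists_facet_normal {P F : Set E3} (hconv : Convex ℝ P) (hclosed : IsClosed P)
    (hint : (interior P).Nonempty) (hdim : setDim P = 3) (hF : IsFacetOf F P) :
    ∃ (a : E3) (c : ℝ), a ≠ 0 ∧ (∀ x ∈ P, ⟪a, x⟫_ℝ ≤ c) ∧ F = {x ∈ P | ⟪a, x⟫_ℝ = c} := by
  obtain ⟨⟨hne, -, hFconv, hext⟩, hFdim⟩ := id hF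
  obtain ⟨f, c, hf, hle, hge⟩ := geometric_hahn_banach_of_nonempty_interior hconv hFconv
    (disjoint_interior_facet hdim hF) hint hne
  obtain ⟨a, rfl⟩ := (InnerProductSpace.toDual ℝ E3).surjective f
  have ha : a ≠ 0 := by rintro rfl; exact hf (map_zero _)
  simp only [InnerProductSpace.toDual_apply_apply] at hle hge
  have hsub : F ⊆ {x ∈ P | ⟪a, x⟫_ℝ = c} := fun x hx =>
    ⟨hext.subset hx, (hle x (hext.subset hx)).antisymm (hge x hx)⟩
  refine ⟨a, c, ha, hle, eq_of_isFaceOf_of_subset hF.1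
    (isFaceOf_inner_eq hconv hclosed hle (hne.mono hsub)) hsub ?_⟩
  rw [hFdim, ← finrank_orthogonal_singleton_E3 ha]
  exact Submodule.finrank_mono (vectorSpan_le_orthogonal fun x hx => hx.2)

/-- `T` is the set of points of `V` on a supporting hyperplane of `V` that strictly separates `y`
from `V`. -/
def IsSeparatingTrace (V : Finset E3) (y : E3) (T : Set E3) : Prop :=
  T.Nonempty ∧ ∃ (a : E3) (c : ℝ), (∀ v ∈ V, ⟪a, v⟫_ℝ ≤ c) ∧ c < ⟪a, y⟫_ℝ ∧
    T = {v | v ∈ V ∧ ⟪a, v⟫_ℝ = c}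

lemma exists_isSeparatingTrace {V : Finset E3} (hV : V.Nonempty) {y : E3}
    (hy : y ∉ convexHull ℝ (V : Set E3)) : ∃ T, IsSeparatingTrace V y T := by
  obtain ⟨f, u, hfu, huy⟩ := geometric_hahn_banach_closed_point (convex_convexHull ℝ (V : Set E3))
    (V.finite_toSet.isCompact_convexHull ℝ).isClosed hy
  obtain ⟨a, rfl⟩ := (InnerProductSpace.toDual ℝ E3).surjective f
  simp only [InnerProductSpace.toDual_apply_apply] at hfu huy
  obtain ⟨v, hv, hmax⟩ := Finset.exists_max_image V (fun v => ⟪a, v⟫_ℝ) hV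
  exact ⟨{w | w ∈ V ∧ ⟪a, w⟫_ℝ = ⟪a, v⟫_ℝ}, ⟨v, hv, rfl⟩, a, ⟪a, v⟫_ℝ, hmax,
    (hfu v (subset_convexHull ℝ _ hv)).trans huy, rfl⟩

/-- If the trace spanned less than a plane, the hyperplane could be rotated about `T` and `y`
until it hits a further point of `V`. -/
lemma two_le_finrank_of_maximal_isSeparatingTrace {V : Finset E3}
    (hV : (interior (convexHull ℝ (V : Set E3))).Nonempty) {y : E3} {T : Set E3}
    (hT : Maximal (IsSeparatingTrace V y) T) : 2 ≤ Module.finrank ℝ (vectorSpan ℝ T) := by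
  by_contra! hlt
  obtain ⟨⟨t, ht⟩, a, c, hle, hcy, rfl⟩ : IsSeparatingTrace V y T := hT.prop
  set T := {v | v ∈ V ∧ ⟪a, v⟫_ℝ = c}
  let D : Submodule ℝ E3 := vectorSpan ℝ T ⊔ ℝ ∙ (y - t)
  have hD : D ≠ ⊤ := by
    intro htop
    have hsup : Module.finrank ℝ D ≤ _ := Submodule.finrank_add_le_finrank_add_finrank _ _
    have hline := finrank_span_le_card (R := ℝ) ({y - t} : Set E3)
    rw [htop, finrank_top, finrank_euclideanSpace_fin] at hsup
    simp only [toFinset_singleton, Finset.card_singleton] at hline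
    omega
  obtain ⟨g, hgD, hinc⟩ := exists_mem_orthogonal_inner_lt hV hD t
  have hg_of_mem {v : E3} (hv : v - t ∈ D) : ⟪g, v⟫_ℝ = ⟪g, t⟫_ℝ := by
    rw [← sub_eq_zero, ← inner_sub_right]
    exact (Submodule.mem_orthogonal' D g).1 hgD _ hv
  have hgT : ∀ v ∈ T, ⟪g, v⟫_ℝ = ⟪g, t⟫_ℝ := fun v hv =>
    hg_of_mem (Submodule.mem_sup_left (vsub_mem_vectorSpan ℝ hv ht))
  have hgy : ⟪g, y⟫_ℝ = ⟪g, t⟫_ℝ :=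
    hg_of_mem (Submodule.mem_sup_right (Submodule.mem_span_singleton_self _))
  obtain ⟨w, hwV, hgw, m, hmw, hmle⟩ :=
    exists_rotated_max (f := fun v => ⟪a, v⟫_ℝ) (fun v hv => ht.2 ▸ hle v hv) hinc
  simp only [ht.2] at hmw hmle
  let T' : Set E3 := {v | v ∈ V ∧ ⟪a + m • g, v⟫_ℝ = c + m * ⟪g, t⟫_ℝ}
  have hTT' : T ⊆ T' := fun v hv =>
    ⟨hv.1, by rw [inner_add_left, real_inner_smul_left, hv.2, hgT v hv]⟩
  have hT' : IsSeparatingTrace V y T' := by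
    refine ⟨⟨t, hTT' ht⟩, a + m • g, _, fun v hv => ?_, ?_, rfl⟩ <;>
      rw [inner_add_left, real_inner_smul_left]
    · exact hmle v hv
    · rw [hgy]; gcongr
  have hwT' : w ∈ T' := ⟨hwV, by rw [inner_add_left, real_inner_smul_left, hmw]⟩
  exact hgw.ne' (hgT w (hT.le_of_ge hT' hTT' hwT'))

lemma exists_facet_separating {V : Finset E3}
    (hV : (interior (convexHull ℝ (V : Set E3))).Nonempty) {y : E3}
    (hy : y ∉ convexHull ℝ (V : Set E3)) :
    ∃ (a : E3) (c : ℝ), (∀ x ∈ convexHull ℝ (V : Set E3), ⟪a, x⟫_ℝ ≤ c) ∧ c < ⟪a, y⟫_ℝ ∧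
      IsFacetOf {x ∈ convexHull ℝ (V : Set E3) | ⟪a, x⟫_ℝ = c} (convexHull ℝ (V : Set E3)) := by
  have hVne : V.Nonempty := by
    rw [Finset.nonempty_iff_ne_empty]; rintro rfl; simp at hV
  have hfinite : {T | IsSeparatingTrace V y T}.Finite := by
    refine V.finite_toSet.finite_subsets.subset ?_
    rintro _ ⟨-, a, c, -, -, rfl⟩ v hv
    exact hv.1
  obtain ⟨T, hT⟩ := hfinite.exists_maximal (exists_isSeparatingTrace hVne hy)
  have hrank := two_le_finrank_of_maximal_isSeparatingTrace hV hT
  obtain ⟨⟨t, ht⟩, a, c, hle, hcy, rfl⟩ : IsSeparatingTrace V y T := hT.prop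
  obtain ⟨htV, htc⟩ := ht
  have ha : a ≠ 0 := ne_zero_of_inner_eq_of_lt htc hcy
  have hhull := fun x => inner_le_of_mem_convexHull (x := x) hle
  refine ⟨a, c, hhull, hcy, isFaceOf_inner_eq (convex_convexHull ℝ _)
    (V.finite_toSet.isCompact_convexHull ℝ).isClosed hhull
    ⟨t, subset_convexHull ℝ _ htV, htc⟩, le_antisymm ?_ ?_⟩
  · rw [← finrank_orthogonal_singleton_E3 ha]
    exact Submodule.finrank_mono (vectorSpan_le_orthogonal fun x hx => hx.2)
  · exact hrank.trans (Submodule.finrank_mono (vectorSpan_mono ℝ fun v hv =>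
      ⟨subset_convexHull ℝ _ hv.1, hv.2⟩))

lemma inner_lt_of_facet_normals {P F : Set E3} {a a' y : E3} {c c' : ℝ}
    (hint : (interior P).Nonempty) (hF : IsFacetOf F P) (ha : a ≠ 0) (ha' : a' ≠ 0)
    (hle : ∀ x ∈ P, ⟪a, x⟫_ℝ ≤ c) (hle' : ∀ x ∈ P, ⟪a', x⟫_ℝ ≤ c')
    (heq : ∀ x ∈ F, ⟪a, x⟫_ℝ = c) (heq' : ∀ x ∈ F, ⟪a', x⟫_ℝ = c') (hy : c < ⟪a, y⟫_ℝ) :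
    c' < ⟪a', y⟫_ℝ := by
  have hspan : (ℝ ∙ a : Submodule ℝ E3) = ℝ ∙ a' := by
    rw [← Submodule.orthogonal_orthogonal (ℝ ∙ a), ← Submodule.orthogonal_orthogonal (ℝ ∙ a'),
      ← vectorSpan_eq_orthogonal heq ha hF.2, ← vectorSpan_eq_orthogonal heq' ha' hF.2]
  obtain ⟨r, rfl⟩ : ∃ r : ℝ, r • a = a' :=
    Submodule.mem_span_singleton.1 (hspan ▸ Submodule.mem_span_singleton_self a')
  obtain ⟨x, hx⟩ := hF.1.1
  obtain ⟨q, hq⟩ := hint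
  have hx' := heq' x hx
  have hq' := inner_lt_of_mem_interior ha' hle' hq
  rw [real_inner_smul_left] at hx' hq' ⊢
  rw [heq x hx] at hx'
  have hr : 0 < r := by nlinarith [inner_lt_of_mem_interior ha hle hq]
  nlinarith

lemma IsPolytope.convex {P : Set E3} (hP : IsPolytope P) : Convex ℝ P := by
  obtain ⟨V, rfl⟩ := hP
  exact convex_convexHull ℝ _

lemma IsPolytope.isCompact {P : Set E3} (hP : IsPolytope P) : IsCompact P := by
  obtain ⟨V, rfl⟩ := hP
  exact V.finite_toSet.isCompact_convexHull ℝ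

/-- A face is determined by its extreme points, which are among those of the polytope. -/
lemma IsPolytope.finite_facets {P : Set E3} (hP : IsPolytope P) : (facets P).Finite := by
  have hextreme : (P.extremePoints ℝ).Finite := by
    obtain ⟨V, rfl⟩ := hP
    exact V.finite_toSet.subset extremePoints_convexHull_subset
  have hrecover {F : Set E3} (hF : F ∈ facets P) :
      closure (convexHull ℝ (F.extremePoints ℝ)) = F :=
    closure_convexHull_extremePoints
      (hP.isCompact.of_isClosed_subset hF.1.2.1 hF.1.2.2.2.subset) hF.1.2.2.1
  refine Set.Finite.of_finite_image (f := fun F => F.extremePoints ℝ)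
    (hextreme.finite_subsets.subset ?_) fun F hF G hG (h : F.extremePoints ℝ = _) => ?_
  · rintro _ ⟨F, hF, rfl⟩
    exact hF.1.2.2.2.extremePoints_subset_extremePoints
  · rw [← hrecover hF, h, hrecover hG]

lemma interior_nonempty_of_setDim_eq {P : Set E3} (hconv : Convex ℝ P) (hdim : setDim P = 3) :
    (interior P).Nonempty := by
  have hne : P.Nonempty := by
    rw [Set.nonempty_iff_ne_empty]
    rintro rfl
    rw [setDim, vectorSpan_empty, finrank_bot] at hdim
    omega
  rw [hconv.interior_nonempty_iff_affineSpan_eq_top,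
    ← AffineSubspace.direction_eq_top_iff_of_nonempty ((affineSpan_nonempty ℝ).2 hne),
    direction_affineSpan]
  exact Submodule.eq_top_of_finrank_eq (hdim.trans (by simp))

/-- An irredundant description of a simple 3-polytope by linear inequalities
`⟪normal F, x⟫ ≤ level F`, one for each facet `F`; the values at other sets are irrelevant. -/
structure FacetPresentation (P : Set E3) where
  normal : Set E3 → E3
  level : Set E3 → ℝ
  convex : Convex ℝ P
  isCompact : IsCompact P
  interior_nonempty : (interior P).Nonempty
  finite_facets : (facets P).Finite
  normal_ne_zero : ∀ F ∈ facets P, normal F ≠ 0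
  inner_le : ∀ F ∈ facets P, ∀ x ∈ P, ⟪normal F, x⟫_ℝ ≤ level F
  facet_eq : ∀ F ∈ facets P, F = {x ∈ P | ⟪normal F, x⟫_ℝ = level F}
  mem_of_forall_le : ∀ x, (∀ F ∈ facets P, ⟪normal F, x⟫_ℝ ≤ level F) → x ∈ P
  ncard_facets_vertex : ∀ v, IsVertexOf v P → {F | F ∈ facets P ∧ v ∈ F}.ncard = 3

lemma IsSimplePolytope3.exists_facetPresentation {P : Set E3} (hP : IsSimplePolytope3 P) :
    Nonempty (FacetPresentation P) := by
  obtain ⟨hpoly, hdim, hsimple⟩ := hP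
  have hint := interior_nonempty_of_setDim_eq hpoly.convex hdim
  have hnormal (F : Set E3) (hF : F ∈ facets P) :=
    exists_facet_normal hpoly.convex hpoly.isCompact.isClosed hint hdim hF
  choose! normal level hne hle hfacet using hnormal
  have heq (F : Set E3) (hF : F ∈ facets P) : ∀ x ∈ F, ⟪normal F, x⟫_ℝ = level F := fun x hx => by
    rw [hfacet F hF] at hx; exact hx.2
  refine ⟨normal, level, hpoly.convex, hpoly.isCompact, hint, hpoly.finite_facets, hne, hle, hfacet,
    fun y hy => ?_, hsimple⟩
  by_contra hyP
  obtain ⟨V, rfl⟩ := hpoly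
  obtain ⟨a, c, hac, hcy, hF⟩ := exists_facet_separating hint hyP
  obtain ⟨x, hx⟩ := hF.1.1
  exact (inner_lt_of_facet_normals hint hF (ne_zero_of_inner_eq_of_lt hx.2 hcy) (hne _ hF) hac
    (hle _ hF) (fun x hx => hx.2) (heq _ hF) hcy).not_ge (hy _ hF)

lemma subset_of_mem_facets {P F : Set E3} (hF : F ∈ facets P) : F ⊆ P := hF.1.2.2.2.subset

/-- Two facets are adjacent if they are different and meet. -/
structure Adj (P F G : Set E3) : Prop where
  left : F ∈ facets P
  right : G ∈ facets P
  ne : F ≠ G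
  nonempty : (F ∩ G).Nonempty

lemma Adj.symm {P F G : Set E3} (h : Adj P F G) : Adj P G F :=
  ⟨h.right, h.left, h.ne.symm, by rw [inter_comm]; exact h.nonempty⟩

lemma Adj.isFaceOf_inter {P F G : Set E3} (h : Adj P F G) : IsFaceOf (F ∩ G) P :=
  ⟨h.nonempty, h.left.1.2.1.inter h.right.1.2.1, h.left.1.2.2.1.inter h.right.1.2.2.1,
    h.left.1.2.2.2.inter h.right.1.2.2.2⟩

/-! ### The cross product on Euclidean space -/

/-- The cross product of `ℝ³`, transported to `E3`. -/
def cross (a b : E3) : E3 := WithLp.toLp 2 (crossProduct a.ofLp b.ofLp)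

lemma inner_cross (a b c : E3) :
    ⟪a, cross b c⟫_ℝ = a 0 * (b 1 * c 2 - b 2 * c 1) + a 1 * (b 2 * c 0 - b 0 * c 2) +
      a 2 * (b 0 * c 1 - b 1 * c 0) := by
  simp [cross, cross_apply, PiLp.inner_apply, Fin.sum_univ_three, mul_comm]

lemma inner_left_cross (a b : E3) : ⟪a, cross a b⟫_ℝ = 0 := by
  rw [inner_cross]; ring

lemma inner_right_cross (a b : E3) : ⟪b, cross a b⟫_ℝ = 0 := by
  rw [inner_cross]; ring

lemma inner_cross_rotate (a b c : E3) : ⟪a, cross b c⟫_ℝ = ⟪b, cross c a⟫_ℝ := by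
  simp only [inner_cross]; ring

lemma cross_swap (a b : E3) : cross a b = -cross b a := by
  rw [cross, cross, ← cross_anticomm, WithLp.toLp_neg]

/-- Cramer's rule: both sides expand `⟪h, ·⟫` in the basis dual to `a`, `b`, `e`. -/
lemma inner_cross_mul_inner (a b e h u : E3) :
    ⟪e, cross a b⟫_ℝ * ⟪h, u⟫_ℝ =
      ⟪a, u⟫_ℝ * ⟪h, cross b e⟫_ℝ - ⟪b, u⟫_ℝ * ⟪h, cross a e⟫_ℝ + ⟪e, u⟫_ℝ * ⟪h, cross a b⟫_ℝ := by
  simp only [inner_cross]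
  simp only [PiLp.inner_apply, Fin.sum_univ_three, RCLike.inner_apply, conj_trivial]
  ring

/-- The coefficient is read off from Cramer's rule with `e = a × b`. -/
lemma exists_eq_smul_cross {a b y : E3} (hne : cross a b ≠ 0) (ha : ⟪a, y⟫_ℝ = 0)
    (hb : ⟪b, y⟫_ℝ = 0) : ∃ t : ℝ, y = t • cross a b := by
  have hpos : (⟪cross a b, cross a b⟫_ℝ : ℝ) ≠ 0 := inner_self_ne_zero.2 hne
  refine ⟨⟪cross a b, y⟫_ℝ / ⟪cross a b, cross a b⟫_ℝ, ext_inner_left ℝ fun h => ?_⟩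
  rw [inner_smul_right, div_mul_eq_mul_div, eq_div_iff hpos, mul_comm, inner_cross_mul_inner, ha,
    hb]
  ring

lemma exists_eq_smul_of_cross_eq_zero {a b : E3} (h : cross a b = 0) (ha : a ≠ 0) :
    ∃ t : ℝ, b = t • a := by
  have hdep : ¬ LinearIndependent ℝ ![a.ofLp, b.ofLp] := by
    rw [← crossProduct_ne_zero_iff_linearIndependent, not_not]
    exact congrArg WithLp.ofLp h
  rw [LinearIndependent.pair_iff' (by simpa using ha)] at hdep
  push Not at hdep
  obtain ⟨t, ht⟩ := hdep
  exact ⟨t, WithLp.ofLp_injective 2 ht.symm⟩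

/-! ### Local structure of the boundary of a simple 3-polytope -/

namespace FacetPresentation

variable {P : Set E3} (g : FacetPresentation P) {F G H F' G' H' : Set E3} {v v' x y d : E3}

lemma mem_facet_iff (hF : F ∈ facets P) :
    x ∈ F ↔ x ∈ P ∧ ⟪g.normal F, x⟫_ℝ = g.level F := by
  conv_lhs => rw [g.facet_eq F hF]
  rfl

lemma inner_eq (hF : F ∈ facets P) (hx : x ∈ F) : ⟪g.normal F, x⟫_ℝ = g.level F :=
  ((g.mem_facet_iff hF).1 hx).2

lemma inner_sub_eq_zero (hF : F ∈ facets P) (hx : x ∈ F) (hy : y ∈ F) :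
    ⟪g.normal F, y - x⟫_ℝ = 0 := by
  rw [inner_sub_right, g.inner_eq hF hx, g.inner_eq hF hy, sub_self]

lemma inner_sub_nonpos (hF : F ∈ facets P) (hx : x ∈ F) (hy : y ∈ P) :
    ⟪g.normal F, y - x⟫_ℝ ≤ 0 := by
  rw [inner_sub_right, g.inner_eq hF hx]
  exact sub_nonpos.2 (g.inner_le F hF y hy)

lemma exists_pos_add_smul_mem (hx : x ∈ P)
    (hd : ∀ F ∈ facets P, x ∈ F → ⟪g.normal F, d⟫_ℝ ≤ 0) :
    ∃ ε : ℝ, 0 < ε ∧ ∀ t ∈ Icc 0 ε, x + t • d ∈ P := by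
  have hall : ∀ᶠ t in nhdsWithin (0 : ℝ) (Ici 0), ∀ F ∈ facets P,
      ⟪g.normal F, x + t • d⟫_ℝ ≤ g.level F := by
    rw [Filter.eventually_all_finite g.finite_facets]
    intro F hF
    by_cases hxF : x ∈ F
    · filter_upwards [self_mem_nhdsWithin] with t ht
      rw [inner_add_right, inner_smul_right, g.inner_eq hF hxF]
      linarith [mul_nonpos_of_nonneg_of_nonpos (show 0 ≤ t from ht) (hd F hF hxF)]
    · have hlt : ⟪g.normal F, x + (0 : ℝ) • d⟫_ℝ < g.level F := by
        rw [zero_smul, add_zero]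
        exact (g.inner_le F hF x hx).lt_of_ne fun heq => hxF ((g.mem_facet_iff hF).2 ⟨hx, heq⟩)
      have hcont : Continuous fun t : ℝ => ⟪g.normal F, x + t • d⟫_ℝ := by fun_prop
      exact nhdsWithin_le_nhds ((hcont.tendsto 0).eventually (Iic_mem_nhds hlt))
  obtain ⟨ε, hε, hsub⟩ := mem_nhdsGE_iff_exists_Icc_subset.1 hall
  exact ⟨ε, hε, fun t ht => g.mem_of_forall_le _ (hsub ht)⟩

/-- The direction of the edge `F ∩ G`, oriented by the order of the two facets. -/
def edgeDir (F G : Set E3) : E3 := cross (g.normal F) (g.normal G)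

lemma edgeDir_swap (F G : Set E3) : g.edgeDir F G = -g.edgeDir G F := cross_swap _ _

/-- Otherwise the normals are proportional: positively, and the facets coincide, or negatively,
and they bound a slab, so they cannot meet. -/
lemma edgeDir_ne_zero (h : Adj P F G) : g.edgeDir F G ≠ 0 := by
  obtain ⟨hF, hG, hne, x, hxF, hxG⟩ := h
  intro hzero
  obtain ⟨t, ht⟩ := exists_eq_smul_of_cross_eq_zero hzero (g.normal_ne_zero F hF)
  have hlevel : g.level G = t * g.level F := by
    rw [← g.inner_eq hG hxG, ht, real_inner_smul_left, g.inner_eq hF hxF]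
  obtain ⟨p, hp⟩ := g.interior_nonempty
  have hpF := inner_lt_of_mem_interior (g.normal_ne_zero F hF) (g.inner_le F hF) hp
  have hpG := inner_lt_of_mem_interior (g.normal_ne_zero G hG) (g.inner_le G hG) hp
  rw [ht, real_inner_smul_left, hlevel] at hpG
  have htpos : 0 < t := by nlinarith
  refine hne (Set.ext fun y => ?_)
  rw [g.mem_facet_iff hF, g.mem_facet_iff hG, ht, real_inner_smul_left, hlevel,
    mul_right_inj' htpos.ne']

lemma exists_sub_eq_smul_edgeDir (h : Adj P F G) (hx : x ∈ F ∩ G) (hy : y ∈ F ∩ G) :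
    ∃ t : ℝ, y - x = t • g.edgeDir F G :=
  exists_eq_smul_cross (g.edgeDir_ne_zero h) (g.inner_sub_eq_zero h.left hx.1 hy.1)
    (g.inner_sub_eq_zero h.right hx.2 hy.2)

/-- `v` is the vertex at which the edge `F ∩ G`, run through in the direction `g.edgeDir F G`, ends,
and `H` is the third facet at `v`. -/
structure IsTerminal (F G : Set E3) (v : E3) (H : Set E3) : Prop where
  adj : Adj P F G
  mem : v ∈ F ∩ G
  isVertexOf : IsVertexOf v P
  mem_facets : H ∈ facets P
  ne_left : H ≠ F
  ne_right : H ≠ G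
  mem_third : v ∈ H
  eq_or : ∀ K ∈ facets P, v ∈ K → K = F ∨ K = G ∨ K = H
  inner_pos : 0 < ⟪g.normal H, g.edgeDir F G⟫_ℝ
  inner_le : ∀ y ∈ F ∩ G, ⟪g.edgeDir F G, y⟫_ℝ ≤ ⟪g.edgeDir F G, v⟫_ℝ

lemma exists_nonneg_eq_add_smul_edgeDir (h : Adj P F G) (hv : v ∈ F ∩ G)
    (hmax : ∀ y ∈ F ∩ G, ⟪g.edgeDir F G, y⟫_ℝ ≤ ⟪g.edgeDir F G, v⟫_ℝ) (hx : x ∈ F ∩ G) :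
    ∃ t : ℝ, 0 ≤ t ∧ v = x + t • g.edgeDir F G := by
  obtain ⟨t, ht⟩ := g.exists_sub_eq_smul_edgeDir h hx hv
  refine ⟨t, ?_, by rw [← ht, add_sub_cancel]⟩
  have hnonneg : 0 ≤ ⟪g.edgeDir F G, v - x⟫_ℝ := by
    rw [inner_sub_right]; exact sub_nonneg.2 (hmax x hx)
  rw [ht, inner_smul_right] at hnonneg
  exact nonneg_of_mul_nonneg_left hnonneg (real_inner_self_pos.2 (g.edgeDir_ne_zero h))

lemma isVertexOf_of_max (h : Adj P F G) (hv : v ∈ F ∩ G)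
    (hmax : ∀ y ∈ F ∩ G, ⟪g.edgeDir F G, y⟫_ℝ ≤ ⟪g.edgeDir F G, v⟫_ℝ) : IsVertexOf v P := by
  have hsingleton : {y ∈ F ∩ G | ⟪g.edgeDir F G, y⟫_ℝ = ⟪g.edgeDir F G, v⟫_ℝ} = {v} := by
    refine Set.eq_singleton_iff_unique_mem.2 ⟨⟨hv, rfl⟩, fun y hy => ?_⟩
    obtain ⟨t, -, ht⟩ := g.exists_nonneg_eq_add_smul_edgeDir h hv hmax hy.1
    have heq := hy.2
    rw [ht, inner_add_right, inner_smul_right, left_eq_add, mul_eq_zero,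
      or_iff_left (real_inner_self_pos.2 (g.edgeDir_ne_zero h)).ne'] at heq
    rw [ht, heq, zero_smul, add_zero]
  have hext := h.isFaceOf_inter.2.2.2.trans (isExposed_inner_eq hmax).isExtreme
  rw [hsingleton] at hext
  exact ⟨⟨v, rfl⟩, isClosed_singleton, convex_singleton v, hext⟩

lemma exists_third_facet (g : FacetPresentation P) (hv : IsVertexOf v P) (h : Adj P F G)
    (hvFG : v ∈ F ∩ G) :
    ∃ H ∈ facets P, H ≠ F ∧ H ≠ G ∧ v ∈ H ∧ ∀ K ∈ facets P, v ∈ K → K = F ∨ K = G ∨ K = H := by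
  let S := {K | K ∈ facets P ∧ v ∈ K}
  have hS : S.ncard = 3 := g.ncard_facets_vertex v hv
  have hsub : {F, G} ⊆ S := pair_subset ⟨h.left, hvFG.1⟩ ⟨h.right, hvFG.2⟩
  have hdiff : (S \ {F, G}).ncard = 1 := by
    rw [ncard_sdiff hsub (by simp), hS, ncard_pair h.ne]
  obtain ⟨H, hH⟩ := ncard_eq_one.1 hdiff
  have hHmem : H ∈ S \ {F, G} := hH ▸ rfl
  obtain ⟨⟨hHfacet, hvH⟩, hHne⟩ := hHmem
  simp only [mem_insert_iff, mem_singleton_iff, not_or] at hHne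
  refine ⟨H, hHfacet, hHne.1, hHne.2, hvH, fun K hK hvK => ?_⟩
  by_contra! hcon
  exact hcon.2.2 (show K ∈ ({H} : Set _) from hH ▸ ⟨⟨hK, hvK⟩, by simp [hcon.1, hcon.2.1]⟩)

lemma exists_isTerminal (h : Adj P F G) : ∃ v H, g.IsTerminal F G v H := by
  have hcompact : IsCompact (F ∩ G) :=
    g.isCompact.of_isClosed_subset h.isFaceOf_inter.2.1
      (inter_subset_left.trans (subset_of_mem_facets h.left))
  obtain ⟨v, hv, hmax⟩ := hcompact.exists_isMaxOn h.nonempty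
    (f := fun y => ⟪g.edgeDir F G, y⟫_ℝ) (by fun_prop)
  have hvert := g.isVertexOf_of_max h hv hmax
  obtain ⟨H, hH, hHF, hHG, hvH, honly⟩ := g.exists_third_facet hvert h hv
  refine ⟨v, H, h, hv, hvert, hH, hHF, hHG, hvH, honly, ?_, hmax⟩
  by_contra! hneg
  obtain ⟨ε, hε, hmem⟩ := g.exists_pos_add_smul_mem (d := g.edgeDir F G)
    (subset_of_mem_facets h.left hv.1)
    fun K hK hvK => by
      rcases honly K hK hvK with rfl | rfl | rfl
      exacts [(inner_left_cross _ _).le, (inner_right_cross _ _).le, hneg]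
  have hmemP := hmem ε ⟨hε.le, le_rfl⟩
  have hmemFG : v + ε • g.edgeDir F G ∈ F ∩ G := by
    refine ⟨(g.mem_facet_iff h.left).2 ⟨hmemP, ?_⟩, (g.mem_facet_iff h.right).2 ⟨hmemP, ?_⟩⟩
    · rw [inner_add_right, inner_smul_right, edgeDir, inner_left_cross, g.inner_eq h.left hv.1]
      ring
    · rw [inner_add_right, inner_smul_right, edgeDir, inner_right_cross, g.inner_eq h.right hv.2]
      ring
  have hle : ⟪g.edgeDir F G, v + ε • g.edgeDir F G⟫_ℝ ≤ ⟪g.edgeDir F G, v⟫_ℝ := hmax hmemFG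
  rw [inner_add_right, inner_smul_right] at hle
  linarith [mul_pos hε (real_inner_self_pos.2 (g.edgeDir_ne_zero h))]

namespace IsTerminal

variable {g}

lemma exists_nonneg_eq_add_smul (hT : g.IsTerminal F G v H) (hx : x ∈ F ∩ G) :
    ∃ t : ℝ, 0 ≤ t ∧ v = x + t • g.edgeDir F G :=
  g.exists_nonneg_eq_add_smul_edgeDir hT.adj hT.mem hT.inner_le hx

lemma adj_third (hT : g.IsTerminal F G v H) : Adj P G H :=
  ⟨hT.adj.right, hT.mem_facets, hT.ne_right.symm, v, hT.mem.2, hT.mem_third⟩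

lemma rotate (hT : g.IsTerminal F G v H) : g.IsTerminal G H v F where
  adj := hT.adj_third
  mem := ⟨hT.mem.2, hT.mem_third⟩
  isVertexOf := hT.isVertexOf
  mem_facets := hT.adj.left
  ne_left := hT.adj.ne
  ne_right := hT.ne_left.symm
  mem_third := hT.mem.1
  eq_or K hK hvK := by rcases hT.eq_or K hK hvK with h | h | h <;> simp [h]
  inner_pos := by
    rw [edgeDir, inner_cross_rotate, inner_cross_rotate]; exact hT.inner_pos
  inner_le y hy := by
    have hpos : 0 < ⟪g.normal F, g.edgeDir G H⟫_ℝ := by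
      rw [edgeDir, inner_cross_rotate, inner_cross_rotate]; exact hT.inner_pos
    obtain ⟨t, ht⟩ := g.exists_sub_eq_smul_edgeDir hT.adj_third ⟨hT.mem.2, hT.mem_third⟩ hy
    have hnonpos : ⟪g.normal F, y - v⟫_ℝ ≤ 0 :=
      g.inner_sub_nonpos hT.adj.left hT.mem.1 (subset_of_mem_facets hT.adj.right hy.1)
    rw [ht, inner_smul_right] at hnonpos
    rw [← sub_nonpos, ← inner_sub_right, ht, inner_smul_right]
    exact mul_nonpos_of_nonpos_of_nonneg (nonpos_of_mul_nonpos_left hnonpos hpos)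
      real_inner_self_nonneg

lemma vertex_unique (hT : g.IsTerminal F G v H) (hT' : g.IsTerminal F G v' H') : v = v' := by
  obtain ⟨s, hs, hsv⟩ := hT.exists_nonneg_eq_add_smul hT'.mem
  obtain ⟨t, ht, htv⟩ := hT'.exists_nonneg_eq_add_smul hT.mem
  have hcancel : (s + t) • g.edgeDir F G = 0 := by
    rw [htv, add_assoc, ← add_smul, left_eq_add, add_comm] at hsv
    exact hsv
  have hs0 : s = 0 := by
    rcases smul_eq_zero.1 hcancel with h | h
    exacts [by linarith, absurd h (g.edgeDir_ne_zero hT.adj)]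
  rw [hsv, hs0, zero_smul, add_zero]

lemma third_unique (hT : g.IsTerminal F G v H) (hT' : g.IsTerminal F G v' H') : H = H' := by
  obtain rfl := hT.vertex_unique hT'
  rcases hT.eq_or H' hT'.mem_facets hT'.mem_third with h | h | h
  exacts [absurd h hT'.ne_left, absurd h hT'.ne_right, h.symm]

lemma vertex_ne_swap (hT : g.IsTerminal F G v H) (hT' : g.IsTerminal G F v' H') : v ≠ v' := by
  rintro rfl
  rcases hT.eq_or H' hT'.mem_facets hT'.mem_third with h | h | rfl
  · exact hT'.ne_right h
  · exact hT'.ne_left h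
  · have hpos := hT'.inner_pos
    rw [edgeDir_swap, inner_neg_right] at hpos
    linarith [hT.inner_pos]

lemma exists_pos_eq_add_smul (hT : g.IsTerminal F G v H) (hx : x ∈ F ∩ G) (hne : v ≠ x) :
    ∃ t : ℝ, 0 < t ∧ v = x + t • g.edgeDir F G := by
  obtain ⟨t, ht, hv⟩ := hT.exists_nonneg_eq_add_smul hx
  exact ⟨t, ht.lt_of_ne (by rintro rfl; simp [hne] at hv), hv⟩

lemma eq_of_mem_third (hT : g.IsTerminal F G v H) (hx : x ∈ F ∩ G) (hxH : x ∈ H) : v = x := by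
  by_contra hne
  obtain ⟨t, ht, hv⟩ := hT.exists_pos_eq_add_smul hx hne
  have hzero := g.inner_sub_eq_zero hT.mem_facets hxH hT.mem_third
  rw [hv, add_sub_cancel_left, inner_smul_right] at hzero
  exact (mul_pos ht hT.inner_pos).ne' hzero

lemma third_ne_swap (hT : g.IsTerminal F G v H) (hT' : g.IsTerminal G F v' H') : H ≠ H' := by
  rintro rfl
  exact hT.vertex_ne_swap hT' (hT.eq_of_mem_third hT'.mem.symm hT'.mem_third)

lemma eq_or_eq_or_forall (hT : g.IsTerminal F G v H) (hT' : g.IsTerminal G F v' H')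
    (hx : x ∈ F ∩ G) : x = v ∨ x = v' ∨ ∀ K ∈ facets P, x ∈ K → K = F ∨ K = G := by
  by_contra! ⟨hxv, hxv', K, hK, hxK, hKF, hKG⟩
  obtain ⟨s, hs, hsv⟩ := hT.exists_pos_eq_add_smul hx hxv.symm
  obtain ⟨t, ht, htv⟩ := hT'.exists_pos_eq_add_smul hx.symm hxv'.symm
  have hvP := subset_of_mem_facets hT.adj.left hT.mem.1
  have hfwd := g.inner_sub_nonpos hK hxK hvP
  have hbwd := g.inner_sub_nonpos hK hxK (subset_of_mem_facets hT'.adj.left hT'.mem.1)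
  rw [hsv, add_sub_cancel_left, inner_smul_right] at hfwd
  rw [htv, add_sub_cancel_left, inner_smul_right, edgeDir_swap, inner_neg_right] at hbwd
  have hzero : ⟪g.normal K, g.edgeDir F G⟫_ℝ = 0 := by
    apply le_antisymm <;> nlinarith
  have hvK : v ∈ K := (g.mem_facet_iff hK).2 ⟨hvP, by
    rw [hsv, inner_add_right, inner_smul_right, hzero, g.inner_eq hK hxK]; ring⟩
  rcases hT.eq_or K hK hvK with h | h | rfl
  exacts [hKF h, hKG h, hT.inner_pos.ne' hzero]

lemma inter_eq_segment (hT : g.IsTerminal F G v H) (hT' : g.IsTerminal G F v' H') :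
    F ∩ G = segment ℝ v' v := by
  refine Subset.antisymm (fun x hx => ?_)
    (hT.adj.isFaceOf_inter.2.2.1.segment_subset hT'.mem.symm hT.mem)
  obtain ⟨s, hs, hsv⟩ := hT.exists_nonneg_eq_add_smul hx
  obtain ⟨t, ht, htv⟩ := hT'.exists_nonneg_eq_add_smul hx.symm
  rw [edgeDir_swap, smul_neg] at htv
  rw [mem_segment_iff_sameRay, htv, hsv, sub_add_cancel_left, neg_neg, add_sub_cancel_left]
  exact (SameRay.refl _).nonneg_smul_left ht |>.nonneg_smul_right hs

lemma isEdgeOf_inter (hT : g.IsTerminal F G v H) (hT' : g.IsTerminal G F v' H') :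
    IsEdgeOf (F ∩ G) P := by
  refine ⟨hT.adj.isFaceOf_inter, ?_⟩
  have hle : vectorSpan ℝ (F ∩ G) ≤ ℝ ∙ g.edgeDir F G := by
    rw [vectorSpan_def, Submodule.span_le]
    rintro _ ⟨x, hx, y, hy, rfl⟩
    obtain ⟨t, ht⟩ := g.exists_sub_eq_smul_edgeDir hT.adj hy hx
    exact Submodule.mem_span_singleton.2 ⟨t, ht.symm⟩
  have hne : vectorSpan ℝ (F ∩ G) ≠ ⊥ := by
    rw [Ne, vectorSpan_eq_bot_iff_subsingleton]
    exact fun hsub => hT.vertex_ne_swap hT' (hsub hT.mem hT'.mem.symm)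
  have hupper := Submodule.finrank_mono hle
  rw [finrank_span_singleton (g.edgeDir_ne_zero hT.adj)] at hupper
  exact hupper.antisymm (Nat.one_le_iff_ne_zero.2 (mt Submodule.finrank_eq_zero.1 hne))

/-- The tangent cone of `F` at `v` is spanned by the directions of its two edges there. -/
lemma inner_le_of_edgeDir (hT : g.IsTerminal F G v H) {u : E3}
    (hG : 0 ≤ ⟪u, g.edgeDir F G⟫_ℝ) (hH : ⟪u, g.edgeDir F H⟫_ℝ ≤ 0) (hy : y ∈ F) :
    ⟪u, y⟫_ℝ ≤ ⟪u, v⟫_ℝ := by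
  have hyP := subset_of_mem_facets hT.adj.left hy
  have hzero := g.inner_sub_eq_zero hT.adj.left hT.mem.1 hy
  have hleG := g.inner_sub_nonpos hT.adj.right hT.mem.2 hyP
  have hleH := g.inner_sub_nonpos hT.mem_facets hT.mem_third hyP
  have hcramer := inner_cross_mul_inner (g.normal F) (g.normal G) (g.normal H) u (y - v)
  rw [hzero, zero_mul, zero_sub] at hcramer
  have hpos := hT.inner_pos
  simp only [edgeDir] at hpos hG hH
  rw [← sub_nonpos, ← inner_sub_right]
  refine nonpos_of_mul_nonpos_right (a := ⟪g.normal H, cross (g.normal F) (g.normal G)⟫_ℝ) ?_ hpos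
  nlinarith

end IsTerminal

end FacetPresentation

namespace FacetPresentation

variable {P : Set E3} (g : FacetPresentation P) {F G H K e : Set E3} {v x : E3}

lemma isEdgeOf_inter_of_adj (g : FacetPresentation P) (h : Adj P F G) : IsEdgeOf (F ∩ G) P := by
  obtain ⟨v, H, hT⟩ := g.exists_isTerminal h
  obtain ⟨v', H', hT'⟩ := g.exists_isTerminal h.symm
  exact hT.isEdgeOf_inter hT'

/-- Otherwise all facets through `x` share one normal vector, and some direction orthogonal to it
leads from `x` out of the line spanned by `e`, but stays in `P` both ways. -/
lemma exists_adj_of_isEdgeOf (g : FacetPresentation P) (he : IsEdgeOf e P) (hx : x ∈ e) :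
    ∃ F G, Adj P F G ∧ x ∈ F ∩ G := by
  have hext : IsExtreme ℝ P e := he.1.2.2.2
  by_contra! hcon
  obtain ⟨p, hp⟩ : ∃ p : E3, ∀ K ∈ facets P, x ∈ K → g.normal K = p := by
    by_cases! hF : ∃ F ∈ facets P, x ∈ F
    · obtain ⟨F, hF, hxF⟩ := hF
      refine ⟨g.normal F, fun K hK hxK => ?_⟩
      by_contra hne
      exact hcon K F ⟨hK, hF, fun h => hne (h ▸ rfl), x, hxK, hxF⟩ ⟨hxK, hxF⟩
    · exact ⟨0, fun K hK hxK => absurd hxK (hF K hK)⟩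
  obtain ⟨u, hup, hue⟩ : ∃ u ∈ (ℝ ∙ p)ᗮ, u ∉ vectorSpan ℝ e := by
    rw [← SetLike.not_le_iff_exists]
    intro hle
    have hsum := Submodule.finrank_add_finrank_orthogonal (ℝ ∙ p)
    have hspan := finrank_span_le_card (R := ℝ) ({p} : Set E3)
    have hrank := (Submodule.finrank_mono hle).trans_eq he.2
    rw [finrank_euclideanSpace_fin] at hsum
    simp only [toFinset_singleton, Finset.card_singleton] at hspan
    omega
  rw [Submodule.mem_orthogonal_singleton_iff_inner_right] at hup
  have hxP := hext.subset hx
  obtain ⟨ε, hε, hfwd⟩ := g.exists_pos_add_smul_mem (d := u) hxP fun K hK hxK => by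
    rw [hp K hK hxK, hup]
  obtain ⟨δ, hδ, hbwd⟩ := g.exists_pos_add_smul_mem (d := -u) hxP fun K hK hxK => by
    rw [hp K hK hxK, inner_neg_right, hup, neg_zero]
  have hmem : x + ε • u ∈ e := by
    refine mem_of_isExtreme_of_add_smul_sub_mem hext hx (hfwd ε ⟨hε.le, le_rfl⟩) (div_pos hδ hε) ?_
    convert hbwd δ ⟨hδ.le, le_rfl⟩ using 2
    rw [sub_add_cancel_left, smul_neg, smul_smul, div_mul_cancel₀ _ hε.ne', smul_neg]
  have hdir : ε • u ∈ vectorSpan ℝ e := by simpa using vsub_mem_vectorSpan ℝ hmem hx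
  exact hue ((Submodule.smul_mem_iff _ hε.ne').1 hdir)

lemma exists_adj_eq_inter (g : FacetPresentation P) (he : IsEdgeOf e P) :
    ∃ F G, Adj P F G ∧ e = F ∩ G := by
  obtain ⟨x, hx⟩ := he.1.1.intrinsicInterior he.1.2.2.1
  obtain ⟨F, G, h, hxFG⟩ := g.exists_adj_of_isEdgeOf he (intrinsicInterior_subset hx)
  have hsub : e ⊆ F ∩ G := subset_of_isExtreme_of_mem_intrinsicInterior h.isFaceOf_inter.2.2.2
    he.1.2.2.2.subset hx hxFG
  exact ⟨F, G, h, eq_of_isFaceOf_of_subset he.1 h.isFaceOf_inter hsub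
    ((g.isEdgeOf_inter_of_adj h).2.trans he.2.symm).le⟩

section Rotation

variable {next : Set E3 → Set E3 → Set E3} {vert : Set E3 → Set E3 → E3}
  (hrot : ∀ F G, Adj P F G → g.IsTerminal F G (vert F G) (next F G))

lemma next_rotate
    (hrot : ∀ F G, Adj P F G → g.IsTerminal F G (vert F G) (next F G)) (h : Adj P F G) :
    next G (next F G) = F ∧ vert G (next F G) = vert F G := by
  have hrotated := (hrot F G h).rotate
  have hT := hrot _ _ hrotated.adj
  exact ⟨hT.third_unique hrotated, hT.vertex_unique hrotated⟩

lemma exists_adj_eq_vert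
    (hrot : ∀ F G, Adj P F G → g.IsTerminal F G (vert F G) (next F G))
    (hv : IsVertexOf v P) : ∃ F G, Adj P F G ∧ v = vert F G := by
  obtain ⟨F, G, H, hFG, hFH, hGH, hfacets⟩ := ncard_eq_three.1 (g.ncard_facets_vertex v hv)
  have hF : F ∈ facets P ∧ v ∈ F := hfacets.ge (by simp)
  have hG : G ∈ facets P ∧ v ∈ G := hfacets.ge (by simp)
  have hH : H ∈ facets P ∧ v ∈ H := hfacets.ge (by simp)
  have h : Adj P F G := ⟨hF.1, hG.1, hFG, v, hF.2, hG.2⟩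
  rcases (hrot F G h).eq_or_eq_or_forall (hrot G F h.symm) ⟨hF.2, hG.2⟩ with hv | hv | honly
  · exact ⟨F, G, h, hv⟩
  · exact ⟨G, F, h.symm, hv⟩
  · rcases honly H hH.1 hH.2 with rfl | rfl
    exacts [absurd rfl hFH, absurd rfl hGH]

/-- The rotation of the neighbours of `F` about `F`. -/
def neighborPerm (F : Set E3) : Equiv.Perm {K // Adj P F K} where
  toFun K := ⟨next F K, (hrot F K K.2).rotate.rotate.adj.symm⟩
  invFun K := ⟨next K F, (hrot K F K.2.symm).rotate.adj⟩
  left_inv K := Subtype.ext <|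
    (hrot _ F (hrot F K K.2).rotate.rotate.adj).third_unique (hrot F K K.2).rotate.rotate
  right_inv K := Subtype.ext (g.next_rotate hrot K.2.symm).1

lemma vert_neighborPerm (K : {K // Adj P F K}) : vert (g.neighborPerm hrot F K) F = vert F K :=
  (hrot _ F (g.neighborPerm hrot F K).2.symm).vertex_unique (hrot F K K.2).rotate.rotate

/-- Among the vertices of `F` on the edges of the orbit, one that is extreme in the direction of the
normal of `H` is so among all points of `F`, so it lies in `H`. -/
lemma sameCycle_neighborPerm (K L : {K // Adj P F K}) :
    (g.neighborPerm hrot F).SameCycle K L := by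
  set σ := g.neighborPerm hrot F
  obtain ⟨L, hL⟩ := L
  have : Finite {K // Adj P F K} := g.finite_facets.subset fun K (hK : Adj P F K) => hK.right
  let height (K : {K // Adj P F K}) : ℝ := ⟪g.normal L, vert F K⟫_ℝ
  obtain ⟨M, hM, hmax⟩ := {M | σ.SameCycle K M}.toFinite.exists_maximalFor height _ ⟨K, .refl σ K⟩
  have hle (N) (hN : σ.SameCycle K N) : height N ≤ height M := (le_total _ _).elim id (hmax hN)
  have hT := hrot F M M.2
  have hMle : 0 ≤ ⟪g.normal L, g.edgeDir F M⟫_ℝ := by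
    obtain ⟨t, ht, hvert⟩ := hT.exists_pos_eq_add_smul (hrot M F M.2.symm).mem.symm
      (hT.vertex_ne_swap (hrot M F M.2.symm))
    have hprev := hle (σ.symm M) (Equiv.Perm.sameCycle_symm_apply_right.2 hM)
    have hvertM : vert F (σ.symm M) = vert M F := by
      rw [← g.vert_neighborPerm hrot, Equiv.apply_symm_apply]
    simp only [height, hvertM, hvert, inner_add_right, inner_smul_right] at hprev
    nlinarith
  have hMge : ⟪g.normal L, g.edgeDir F (σ M)⟫_ℝ ≤ 0 := by
    have hN := hrot F (σ M) (σ M).2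
    obtain ⟨t, ht, hvert⟩ := hN.exists_pos_eq_add_smul (hrot _ F (σ M).2.symm).mem.symm
      (hN.vertex_ne_swap (hrot _ F (σ M).2.symm))
    have hnext := hle (σ M) (Equiv.Perm.sameCycle_apply_right.2 hM)
    simp only [height, hvert, inner_add_right, inner_smul_right, σ, g.vert_neighborPerm hrot M]
      at hnext
    nlinarith
  obtain ⟨y, hyF, hyL⟩ := hL.nonempty
  have hvL : vert F M ∈ L := by
    have hFP := subset_of_mem_facets hL.left
    have hle := g.inner_le L hL.right _ (hFP hT.mem.1)
    exact (g.mem_facet_iff hL.right).2 ⟨hFP hT.mem.1, hle.antisymm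
      ((g.inner_eq hL.right hyL).symm.trans_le (hT.inner_le_of_edgeDir hMle hMge hyF))⟩
  rcases hT.eq_or L hL.right hvL with h | h | h
  · exact absurd h.symm hL.ne
  · rwa [Subtype.ext (a1 := ⟨L, hL⟩) h]
  · rw [Subtype.ext (a1 := ⟨L, hL⟩) (a2 := σ M) h]
    exact Equiv.Perm.sameCycle_apply_right.2 hM

lemma exists_iterate_next_eq
    (hrot : ∀ F G, Adj P F G → g.IsTerminal F G (vert F G) (next F G))
    (hG : Adj P F G) (hH : Adj P F H) : ∃ i : ℕ, (next F)^[i] G = H := by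
  have : Finite {K // Adj P F K} := g.finite_facets.subset fun K (hK : Adj P F K) => hK.right
  obtain ⟨i, hi⟩ := (g.sameCycle_neighborPerm hrot ⟨G, hG⟩ ⟨H, hH⟩).exists_nat_pow_eq
  have hsemi : Function.Semiconj Subtype.val (g.neighborPerm hrot F) (next F) := fun _ => rfl
  refine ⟨i, ?_⟩
  rw [← (hsemi.iterate_right i) ⟨G, hG⟩, ← Equiv.Perm.coe_pow, hi]

end Rotation

end FacetPresentation

/-- An orientation of the boundary complex of a simple 3-polytope: seen from one side, `next F`
rotates the facets adjacent to `F` about `F`, and `vert F G` is the end of the edge `F ∩ G` that it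
shares with `F ∩ next F G`. -/
structure RotationSystem (P : Set E3) where
  /-- The rotation of the facets adjacent to a given one. -/
  next : Set E3 → Set E3 → Set E3
  /-- The terminal vertex of an edge. -/
  vert : Set E3 → Set E3 → E3
  adj_next {F G : Set E3} : Adj P F G → Adj P G (next F G)
  next_next {F G : Set E3} : Adj P F G → next G (next F G) = F
  vert_next {F G : Set E3} : Adj P F G → vert G (next F G) = vert F G
  vert_mem {F G : Set E3} : Adj P F G → vert F G ∈ F ∩ G
  eq_or_of_vert_mem {F G K : Set E3} :
    Adj P F G → K ∈ facets P → vert F G ∈ K → K = F ∨ K = G ∨ K = next F G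
  next_ne_swap {F G : Set E3} : Adj P F G → next F G ≠ next G F
  vert_ne_swap {F G : Set E3} : Adj P F G → vert F G ≠ vert G F
  isVertexOf_vert {F G : Set E3} : Adj P F G → IsVertexOf (vert F G) P
  exists_eq_vert {v : E3} : IsVertexOf v P → ∃ F G, Adj P F G ∧ v = vert F G
  inter_eq_segment {F G : Set E3} : Adj P F G → F ∩ G = segment ℝ (vert G F) (vert F G)
  isEdgeOf_inter {F G : Set E3} : Adj P F G → IsEdgeOf (F ∩ G) P
  eq_vert_or_forall {F G : Set E3} {x : E3} : Adj P F G → x ∈ F ∩ G →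
    x = vert F G ∨ x = vert G F ∨ ∀ K ∈ facets P, x ∈ K → K = F ∨ K = G
  exists_eq_inter {e : Set E3} : IsEdgeOf e P → ∃ F G, Adj P F G ∧ e = F ∩ G
  exists_iterate_next_eq {F G H : Set E3} :
    Adj P F G → Adj P F H → ∃ i : ℕ, (next F)^[i] G = H

lemma FacetPresentation.exists_rotationSystem {P : Set E3} (g : FacetPresentation P) :
    Nonempty (RotationSystem P) := by
  choose! vert next hrot using fun F G => g.exists_isTerminal (F := F) (G := G)
  exact ⟨{
    next, vert
    adj_next := fun h => (hrot _ _ h).adj_third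
    next_next := fun h => (g.next_rotate hrot h).1
    vert_next := fun h => (g.next_rotate hrot h).2
    vert_mem := fun h => (hrot _ _ h).mem
    eq_or_of_vert_mem := fun h => (hrot _ _ h).eq_or _
    next_ne_swap := fun h => (hrot _ _ h).third_ne_swap (hrot _ _ h.symm)
    vert_ne_swap := fun h => (hrot _ _ h).vertex_ne_swap (hrot _ _ h.symm)
    isVertexOf_vert := fun h => (hrot _ _ h).isVertexOf
    exists_eq_vert := g.exists_adj_eq_vert hrot
    inter_eq_segment := fun h => (hrot _ _ h).inter_eq_segment (hrot _ _ h.symm)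
    isEdgeOf_inter := g.isEdgeOf_inter_of_adj
    eq_vert_or_forall := fun h => (hrot _ _ h).eq_or_eq_or_forall (hrot _ _ h.symm)
    exists_eq_inter := g.exists_adj_eq_inter
    exists_iterate_next_eq := g.exists_iterate_next_eq hrot }⟩

lemma IsSimplePolytope3.exists_rotationSystem {P : Set E3} (hP : IsSimplePolytope3 P) :
    Nonempty (RotationSystem P) :=
  hP.exists_facetPresentation.elim FacetPresentation.exists_rotationSystem

namespace RotationSystem

variable {P F G K F' G' : Set E3} (R : RotationSystem P)

lemma next_third (h : Adj P F G) : R.next (R.next F G) F = G := by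
  simpa only [R.next_next h] using R.next_next (R.adj_next h)

lemma vert_third (h : Adj P F G) : R.vert (R.next F G) F = R.vert F G := by
  simpa only [R.next_next h, R.vert_next h] using R.vert_next (R.adj_next h)

lemma adj_next_left (h : Adj P F G) : Adj P F (R.next F G) := by
  simpa only [R.next_next h] using (R.adj_next (R.adj_next h)).symm

lemma vert_mem_next (h : Adj P F G) : R.vert F G ∈ R.next F G := by
  rw [← R.vert_third h]
  exact (R.vert_mem (R.adj_next_left h).symm).1

lemma adj_iterate_next (h : Adj P F G) (i : ℕ) : Adj P F ((R.next F)^[i] G) := by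
  induction i with
  | zero => exact h
  | succ i ih =>
    rw [Function.iterate_succ_apply']
    exact R.adj_next_left ih

lemma setOf_adj_subset (h : Adj P F G) {S : Set (Set E3)} (hG : G ∈ S)
    (hS : MapsTo (R.next F) S S) : {K | Adj P F K} ⊆ S := by
  intro K hK
  obtain ⟨i, rfl⟩ := R.exists_iterate_next_eq h hK
  exact hS.iterate i hG

lemma next_next_ne (h : Adj P F G) : R.next F (R.next F G) ≠ G := by
  intro heq
  have hthird := R.next_third (R.adj_next_left h)
  rw [heq] at hthird
  exact R.next_ne_swap h hthird.symm

/-- The rotation system of the reversed orientation of the boundary. It exchanges the two sides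
of a belt, so that everything proved for one side holds for the other one. -/
def mirror : RotationSystem P where
  next F G := R.next G F
  vert F G := R.vert G F
  adj_next h := R.adj_next_left h.symm
  next_next h := R.next_third h.symm
  vert_next h := R.vert_third h.symm
  vert_mem h := (R.vert_mem h.symm).symm
  eq_or_of_vert_mem h hK hv := (or_left_comm.1 (R.eq_or_of_vert_mem h.symm hK hv))
  next_ne_swap h := R.next_ne_swap h.symm
  vert_ne_swap h := R.vert_ne_swap h.symm
  isVertexOf_vert h := R.isVertexOf_vert h.symm
  exists_eq_vert hv :=
    let ⟨F, G, h, hvert⟩ := R.exists_eq_vert hv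
    ⟨G, F, h.symm, hvert⟩
  inter_eq_segment h := by rw [R.inter_eq_segment h, segment_symm]
  isEdgeOf_inter := R.isEdgeOf_inter
  eq_vert_or_forall h hx := or_left_comm.1 (R.eq_vert_or_forall h hx)
  exists_eq_inter := R.exists_eq_inter
  exists_iterate_next_eq {F G H} h hH := by
    obtain ⟨i, rfl⟩ := R.exists_iterate_next_eq hH h
    refine ⟨i, ?_⟩
    induction i with
    | zero => rfl
    | succ i ih =>
      have hi := R.adj_iterate_next hH i
      rw [Function.iterate_succ_apply, Function.iterate_succ_apply', R.next_third hi]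
      exact ih hi

lemma exists_mem_inter_forall (R : RotationSystem P) (h : Adj P F G) :
    ∃ x ∈ F ∩ G, ∀ K ∈ facets P, x ∈ K → K = F ∨ K = G := by
  have hmem : midpoint ℝ (R.vert G F) (R.vert F G) ∈ F ∩ G := by
    rw [R.inter_eq_segment h]
    exact midpoint_mem_segment _ _
  refine ⟨_, hmem, ?_⟩
  rcases R.eq_vert_or_forall h hmem with heq | heq | hall
  · exact absurd ((midpoint_eq_right_iff ℝ).1 heq).symm (R.vert_ne_swap h)
  · exact absurd ((midpoint_eq_left_iff ℝ).1 heq).symm (R.vert_ne_swap h)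
  · exact hall

lemma eq_or_eq_of_inter_subset (R : RotationSystem P) (h : Adj P F G) (hK : K ∈ facets P)
    (hsub : F ∩ G ⊆ K) : K = F ∨ K = G :=
  let ⟨_, hx, hall⟩ := R.exists_mem_inter_forall h
  hall K hK (hsub hx)

lemma eq_and_eq_or_of_inter_eq (R : RotationSystem P) (h : Adj P F G) (h' : Adj P F' G')
    (heq : F ∩ G = F' ∩ G') :
    (F' = F ∧ G' = G) ∨ (F' = G ∧ G' = F) := by
  have hF' := R.eq_or_eq_of_inter_subset h h'.left (heq ▸ inter_subset_left)
  have hG' := R.eq_or_eq_of_inter_subset h h'.right (heq ▸ inter_subset_right)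
  have hne := h'.ne
  grind

lemma inter_injOn (R : RotationSystem P) (F : Set E3) : InjOn (F ∩ ·) {G | Adj P F G} := by
  intro G hG G' hG' heq
  rcases R.eq_and_eq_or_of_inter_eq hG hG' heq with h | h
  · exact h.2.symm
  · exact absurd h.1 hG.ne

lemma eq_and_eq_or_of_vert_eq (h : Adj P F G) (h' : Adj P F' G')
    (heq : R.vert F G = R.vert F' G') :
    (F' = F ∧ G' = G) ∨ (F' = G ∧ G' = R.next F G) ∨ (F' = R.next F G ∧ G' = F) := by
  have hmem : R.vert F G ∈ F' ∩ G' := heq ▸ R.vert_mem h'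
  have hF' := R.eq_or_of_vert_mem h h'.left hmem.1
  have hG' := R.eq_or_of_vert_mem h h'.right hmem.2
  have hne := h'.ne
  have hvert := R.vert_ne_swap h
  have hvert₁ := R.vert_ne_swap (R.adj_next h)
  have hvert₂ := R.vert_ne_swap (R.adj_next_left h).symm
  rw [R.vert_next h] at hvert₁
  rw [R.vert_third h] at hvert₂
  grind

lemma mem_periodicPts_next (h : Adj P F G) : G ∈ Function.periodicPts (R.next F) := by
  obtain ⟨i, hi⟩ := R.exists_iterate_next_eq (R.adj_next_left h) h
  exact ⟨i + 1, i.succ_pos, by rwa [Function.IsPeriodicPt, Function.IsFixedPt,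
    Function.iterate_succ_apply]⟩

lemma setOf_isEdgeOf_subset_eq (R : RotationSystem P) (hF : F ∈ facets P) :
    {e | IsEdgeOf e P ∧ e ⊆ F} = (F ∩ ·) '' {G | Adj P F G} := by
  ext e
  constructor
  · rintro ⟨he, hsub⟩
    obtain ⟨A, B, hAB, rfl⟩ := R.exists_eq_inter he
    rcases R.eq_or_eq_of_inter_subset hAB hF hsub with rfl | rfl
    · exact ⟨B, hAB, rfl⟩
    · exact ⟨A, hAB.symm, inter_comm _ _⟩
  · rintro ⟨G, hG, rfl⟩
    exact ⟨R.isEdgeOf_inter hG, inter_subset_left⟩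

lemma facetEdges_eq_ncard_adj (R : RotationSystem P) (hF : F ∈ facets P) :
    facetEdges P F = {G | Adj P F G}.ncard := by
  rw [facetEdges, R.setOf_isEdgeOf_subset_eq hF, (R.inter_injOn F).ncard_image]

lemma facetEdges_eq_minimalPeriod (h : Adj P F G) :
    facetEdges P F = Function.minimalPeriod (R.next F) G := by
  have himage : {H | Adj P F H} =
      (fun i ↦ (R.next F)^[i] G) '' Iio (Function.minimalPeriod (R.next F) G) := by
    ext H
    constructor
    · intro hH
      obtain ⟨i, rfl⟩ := R.exists_iterate_next_eq h hH
      exact ⟨_, Nat.mod_lt _ (Function.minimalPeriod_pos_of_mem_periodicPts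
        (R.mem_periodicPts_next h)), Function.iterate_mod_minimalPeriod_eq⟩
    · rintro ⟨i, -, rfl⟩
      exact R.adj_iterate_next h i
  rw [R.facetEdges_eq_ncard_adj h.left, himage,
    Function.iterate_injOn_Iio_minimalPeriod.ncard_image]
  simp

lemma exists_lt_iterate_next_eq (hG : Adj P F G) (hK : Adj P F K) :
    ∃ i < facetEdges P F, (R.next F)^[i] G = K := by
  obtain ⟨i, rfl⟩ := R.exists_iterate_next_eq hG hK
  rw [R.facetEdges_eq_minimalPeriod hG]
  exact ⟨_, Nat.mod_lt _ (Function.minimalPeriod_pos_of_mem_periodicPts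
    (R.mem_periodicPts_next hG)), Function.iterate_mod_minimalPeriod_eq⟩

lemma iterate_next_inj (h : Adj P F G) {i j : ℕ} (hi : i < facetEdges P F)
    (hj : j < facetEdges P F) (heq : (R.next F)^[i] G = (R.next F)^[j] G) : i = j := by
  rw [R.facetEdges_eq_minimalPeriod h] at hi hj
  exact Function.iterate_injOn_Iio_minimalPeriod hi hj heq

lemma iterate_facetEdges (h : Adj P F G) : (R.next F)^[facetEdges P F] G = G := by
  rw [R.facetEdges_eq_minimalPeriod h]
  exact Function.iterate_minimalPeriod

lemma iterate_mirror_next (h : Adj P F G) {i : ℕ} (hi : i ≤ facetEdges P F) :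
    (R.mirror.next F)^[i] G = (R.next F)^[facetEdges P F - i] G := by
  induction i with
  | zero => exact (R.iterate_facetEdges h).symm
  | succ i ih =>
    rw [Function.iterate_succ_apply', ih (by omega),
      show facetEdges P F - i = facetEdges P F - (i + 1) + 1 by omega,
      Function.iterate_succ_apply']
    exact R.next_third (R.adj_iterate_next h _)

lemma three_le_facetEdges (R : RotationSystem P) (h : Adj P F G) : 3 ≤ facetEdges P F := by
  have hper := R.iterate_facetEdges h
  have hpos : facetEdges P F ≠ 0 := by
    rw [R.facetEdges_eq_minimalPeriod h]
    exact (Function.minimalPeriod_pos_of_mem_periodicPts (R.mem_periodicPts_next h)).ne'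
  have hone : facetEdges P F ≠ 1 := fun hd ↦ (R.adj_next h).ne.symm (by rwa [hd] at hper)
  have htwo : facetEdges P F ≠ 2 := fun hd ↦ R.next_next_ne h (by rwa [hd] at hper)
  omega

end RotationSystem

/-! ### The boundary surface -/

lemma IsSimplePolytope3.frontier_eq_sUnion_facets {P : Set E3} (hP : IsSimplePolytope3 P) :
    frontier P = ⋃₀ facets P := by
  obtain ⟨g⟩ := hP.exists_facetPresentation
  rw [g.isCompact.isClosed.frontier_eq]
  ext x
  constructor
  · rintro ⟨hx, hxint⟩
    by_contra hmem
    refine hxint (mem_interior.2 ⟨⋂ F ∈ facets P, {y | ⟪g.normal F, y⟫_ℝ < g.level F}, ?_, ?_, ?_⟩)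
    · exact fun y hy => g.mem_of_forall_le y fun F hF => le_of_lt (mem_iInter₂.1 hy F hF)
    · exact g.finite_facets.isOpen_biInter fun F _ => isOpen_lt (by fun_prop) continuous_const
    · refine mem_iInter₂.2 fun F hF => (g.inner_le F hF x hx).lt_of_ne fun heq =>
        hmem ⟨F, hF, (g.mem_facet_iff hF).2 ⟨hx, heq⟩⟩
  · rintro ⟨F, hF, hx⟩
    exact ⟨subset_of_mem_facets hF hx,
      fun hint => (disjoint_interior_facet hP.2.1 hF).le_bot ⟨hint, hx⟩⟩

lemma IsSimplePolytope3.isPreconnected_frontier {P : Set E3} (hP : IsSimplePolytope3 P) :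
    IsPreconnected (frontier P) := by
  obtain ⟨h, -, -, hsphere⟩ := exists_homeomorph_image_interior_closure_frontier_eq_unitBall
    hP.1.convex (interior_nonempty_of_setDim_eq hP.1.convex hP.2.1) hP.1.isCompact.isBounded
  rw [← h.isPreconnected_image, hsphere]
  exact isPreconnected_sphere (by rw [← Module.finrank_eq_rank]; simp) _ _

/-- The points of a facet lying in no other facet: a form of its relative interior that refers
to the incidence of facets only. -/
def openFacet (P F : Set E3) : Set E3 := {x ∈ F | ∀ G ∈ facets P, x ∈ G → G = F}

lemma intrinsicInterior_subset_openFacet {P F : Set E3} (hF : F ∈ facets P) :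
    intrinsicInterior ℝ F ⊆ openFacet P F := fun _ hx =>
  ⟨intrinsicInterior_subset hx, fun _ hG hxG =>
    (eq_of_isFaceOf_of_subset hF.1 hG.1
      (subset_of_isExtreme_of_mem_intrinsicInterior hG.1.2.2.2 (subset_of_mem_facets hF) hx hxG)
      (hG.2.trans hF.2.symm).le).symm⟩

lemma isPreconnected_insert_openFacet {P F : Set E3} (hF : F ∈ facets P) {x : E3} (hx : x ∈ F) :
    IsPreconnected (insert x (openFacet P F)) := by
  have hsub : insert x (openFacet P F) ⊆ F := insert_subset hx fun y hy => hy.1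
  have hopen : ∀ y ∈ openFacet P F, ∀ z ∈ F, openSegment ℝ y z ⊆ openFacet P F :=
    fun y hy z hz q hq =>
    ⟨hF.1.2.2.1.openSegment_subset hy.1 hz hq, fun G hG hqG => hy.2 G hG <|
      hG.1.2.2.2.left_mem_of_mem_openSegment (subset_of_mem_facets hF hy.1)
        (subset_of_mem_facets hF hz) hqG hq⟩
  refine Convex.isPreconnected (convex_iff_openSegment_subset.2 ?_)
  rintro y (rfl | hy) z hz
  · rcases hz with rfl | hz
    · simp [openSegment_same]
    · rw [openSegment_symm]
      exact (hopen z hz _ hx).trans (subset_insert _ _)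
  · exact (hopen y hy z (hsub hz)).trans (subset_insert _ _)

namespace IsCompOf
variable {C C' S A : Set E3} {x : E3}

lemma subset (hC : IsCompOf C S) : C ⊆ S := by
  obtain ⟨y, -, rfl⟩ := hC
  exact connectedComponentIn_subset _ _

lemma isPreconnected (hC : IsCompOf C S) : IsPreconnected C := by
  obtain ⟨y, -, rfl⟩ := hC
  exact isPreconnected_connectedComponentIn

lemma subset_of_isPreconnected (hC : IsCompOf C S) (hA : IsPreconnected A) (hAS : A ⊆ S)
    (hxA : x ∈ A) (hxC : x ∈ C) : A ⊆ C := by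
  obtain ⟨y, -, rfl⟩ := hC
  rw [connectedComponentIn_eq hxC]
  exact hA.subset_connectedComponentIn hxA hAS

lemma eq_of_mem (hC : IsCompOf C S) (hC' : IsCompOf C' S) (hx : x ∈ C) (hx' : x ∈ C') : C = C' :=
  (hC'.subset_of_isPreconnected hC.isPreconnected hC.subset hx hx').antisymm
    (hC.subset_of_isPreconnected hC'.isPreconnected hC'.subset hx' hx)

end IsCompOf

/-- The facets of `P` on the side `Q`, where `Q` is typically a component of the complement in
the boundary of a belt or of an edge-cycle. -/
def sideFacets (P Q : Set E3) : Set (Set E3) := {F | IsFacetOf F P ∧ intrinsicInterior ℝ F ⊆ Q}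

lemma mem_sideFacets_iff {P F C S : Set E3} {x : E3} (hF : F ∈ facets P) (hC : IsCompOf C S)
    (hS : openFacet P F ⊆ S) (hx : x ∈ F) (hxS : x ∈ S) : F ∈ sideFacets P C ↔ x ∈ C := by
  obtain ⟨y, hy⟩ := hF.1.1.intrinsicInterior hF.1.2.2.1
  have hyF := intrinsicInterior_subset_openFacet hF hy
  have hpre := isPreconnected_insert_openFacet hF hx
  have hsub : insert x (openFacet P F) ⊆ S := insert_subset hxS hS
  exact ⟨fun h => hC.subset_of_isPreconnected hpre hsub (mem_insert_of_mem _ hyF) (h.2 hy)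
      (mem_insert _ _),
    fun h => ⟨hF, (intrinsicInterior_subset_openFacet hF).trans <| (subset_insert _ _).trans <|
      hC.subset_of_isPreconnected hpre hsub (mem_insert _ _) h⟩⟩

lemma exists_mem_sideFacets {P C S : Set E3} (hP : IsSimplePolytope3 P) (hC : IsCompOf C S)
    (hSP : S ⊆ frontier P) (hS : ∀ F ∈ facets P, (F ∩ S).Nonempty → openFacet P F ⊆ S) :
    (sideFacets P C).Nonempty := by
  obtain ⟨x, hx, rfl⟩ := id hC
  have hxP := hSP hx
  rw [hP.frontier_eq_sUnion_facets] at hxP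
  obtain ⟨F, hF, hxF⟩ := hxP
  exact ⟨F, (mem_sideFacets_iff hF hC (hS F hF ⟨x, hxF, hx⟩) hxF hx).2
    (mem_connectedComponentIn hx)⟩

lemma mem_of_isPreconnected_of_closed_cover {X : Type*} [TopologicalSpace X] {𝓕 S : Set (Set X)}
    {A F G : Set X} {x y : X} (hfin : 𝓕.Finite) (hclosed : ∀ F ∈ 𝓕, IsClosed F)
    (hA : IsPreconnected A) (hcover : A ⊆ ⋃₀ 𝓕) (hS : S ⊆ 𝓕)
    (hmeet : ∀ z ∈ A, ∀ F ∈ S, ∀ G ∈ 𝓕, z ∈ F → z ∈ G → G ∈ S)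
    (hF : F ∈ S) (hxA : x ∈ A) (hxF : x ∈ F) (hG : G ∈ 𝓕) (hyA : y ∈ A) (hyG : y ∈ G) : G ∈ S := by
  have hdisj : A ∩ (⋃₀ S ∩ ⋃₀ (𝓕 \ S)) = ∅ := by
    rw [eq_empty_iff_forall_notMem]
    rintro z ⟨hzA, ⟨K, hK, hzK⟩, L, hL, hzL⟩
    exact hL.2 (hmeet z hzA K hK L hL.1 hzK hzL)
  have hUV : A ⊆ ⋃₀ S ∪ ⋃₀ (𝓕 \ S) := by
    rwa [← sUnion_union, union_sdiff_cancel hS]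
  rcases isPreconnected_iff_subset_of_disjoint_closed.1 hA _ _
    (sUnion_eq_biUnion ▸ (hfin.subset hS).isClosed_biUnion fun F hF => hclosed F (hS hF))
    (sUnion_eq_biUnion ▸ hfin.sdiff.isClosed_biUnion fun F hF => hclosed F hF.1) hUV hdisj
    with h | h
  · obtain ⟨K, hK, hyK⟩ := h hyA
    exact hmeet y hyA K hK G hG hyK hyG
  · exact ((eq_empty_iff_forall_notMem.1 hdisj) x ⟨hxA, ⟨F, hF, hxF⟩, h hxA⟩).elim

lemma mem_of_isPreconnected_of_adj_closed {P A F G : Set E3} {S : Set (Set E3)} {x y : E3}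
    (hP : IsSimplePolytope3 P) (hA : IsPreconnected A) (hAP : A ⊆ frontier P) (hS : S ⊆ facets P)
    (hmeet : ∀ z ∈ A, ∀ F ∈ S, ∀ G ∈ facets P, z ∈ F → z ∈ G → G ∈ S)
    (hF : F ∈ S) (hxA : x ∈ A) (hxF : x ∈ F) (hG : G ∈ facets P) (hyA : y ∈ A) (hyG : y ∈ G) :
    G ∈ S :=
  mem_of_isPreconnected_of_closed_cover hP.1.finite_facets (fun _ hK => hK.1.2.1) hA
    (hP.frontier_eq_sUnion_facets ▸ hAP) hS hmeet hF hxA hxF hG hyA hyG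

/-! ### Cyclic sequences -/

section Cyclic
variable {n : ℕ}

lemma nxt_val (i : Fin n) : (nxt i).1 = if i.1 + 1 = n then 0 else i.1 + 1 := by
  unfold nxt
  split_ifs with h
  · simp [h]
  · exact Nat.mod_eq_of_lt (by omega)

lemma prv_val (i : Fin n) : (prv i).1 = if i.1 = 0 then n - 1 else i.1 - 1 := by
  unfold prv
  split_ifs with h
  · simp [h]
  · exact (congrArg (· % n) (by omega : i.1 + (n - 1) = i.1 - 1 + n)).trans <|
      (Nat.add_mod_right _ _).trans (Nat.mod_eq_of_lt (by omega))

lemma nxt_prv (i : Fin n) : nxt (prv i) = i := by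
  have := i.2
  apply Fin.ext
  rw [nxt_val, prv_val]
  split_ifs <;> omega

lemma prv_nxt (i : Fin n) : prv (nxt i) = i := by
  have := i.2
  have := nxt_val i
  apply Fin.ext
  rw [prv_val]
  split_ifs at * <;> omega

lemma nxt_injective : Function.Injective (nxt : Fin n → Fin n) :=
  Function.LeftInverse.injective prv_nxt

lemma nxt_ne (hn : 2 ≤ n) (i : Fin n) : nxt i ≠ i := by
  intro h
  have h := congrArg Fin.val h
  rw [nxt_val] at h
  split_ifs at h <;> omega

lemma nxt_nxt_ne (hn : 3 ≤ n) (i : Fin n) : nxt (nxt i) ≠ i := by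
  intro h
  have h := congrArg Fin.val h
  rw [nxt_val, nxt_val] at h
  split_ifs at h <;> omega

lemma forall_of_forall_nxt {p : Fin n → Prop} {i : Fin n} (hi : p i)
    (h : ∀ j, p j → p (nxt j)) (j : Fin n) : p j := by
  have hiter : ∀ m, p ⟨(i + m) % n, Nat.mod_lt _ i.pos⟩ := by
    intro m
    induction m with
    | zero => simpa only [add_zero, Nat.mod_eq_of_lt i.2] using hi
    | succ m ih => simpa only [nxt, Nat.mod_add_mod, add_assoc] using h _ ih
  convert hiter (n - i + j)
  rw [show i.1 + (n - i + j) = j + n by omega, Nat.add_mod_right, Nat.mod_eq_of_lt j.2]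

variable {β : Type*}

open Classical in
/-- The number of indices `i < m` at which the sequence `Y` changes between `i` and `i + 1`. -/
def changeCount (Y : ℕ → β) (m : ℕ) : ℕ := Nat.count (fun i => Y (i + 1) ≠ Y i) m

section ChangeCount
variable {Y : ℕ → β}

lemma changeCount_mono : Monotone (changeCount Y) := by
  classical exact Nat.count_monotone _

open Classical in
lemma changeCount_succ (m : ℕ) :
    changeCount Y (m + 1) = changeCount Y m + if Y (m + 1) ≠ Y m then 1 else 0 :=
  Nat.count_succ _ m

lemma changeCount_add (hY : Function.Periodic Y n) (m : ℕ) :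
    changeCount Y (n + m) = changeCount Y n + changeCount Y m := by
  have hadd (m : ℕ) : Y (n + m) = Y m := by rw [add_comm, hY]
  rw [changeCount, Nat.count_add, changeCount, changeCount]
  congr! 4 with i
  exacts [hadd (i + 1), hadd i]

lemma eq_of_changeCount_eq {a b : ℕ} (hab : a ≤ b) (h : changeCount Y a = changeCount Y b) :
    Y a = Y b := by
  induction b, hab using Nat.le_induction with
  | base => rfl
  | succ b hab ih =>
    have hmono := changeCount_mono (Y := Y) hab
    rw [changeCount_succ] at h
    split_ifs at h with hne
    · omega
    · rw [not_not.1 hne, ih h]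

lemma eq_of_changeCount_modEq (hY : Function.Periodic Y n) {a b : ℕ} (ha : a < n) (hb : b < n)
    (h : changeCount Y a ≡ changeCount Y b [MOD changeCount Y n]) : Y a = Y b := by
  wlog hab : a ≤ b generalizing a b
  · exact (this hb ha h.symm (le_of_not_ge hab)).symm
  obtain ⟨d, hd⟩ := (Nat.modEq_iff_dvd' (changeCount_mono hab)).1 h
  have hmono := changeCount_mono (Y := Y) hab
  have hbn := changeCount_mono (Y := Y) hb.le
  have hcase : changeCount Y b = changeCount Y a ∨
      changeCount Y b = changeCount Y n + changeCount Y a := by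
    rcases d with - | - | d
    · left; omega
    · right; omega
    · have hle : changeCount Y n * 2 ≤ changeCount Y n * (d + 1 + 1) := by gcongr; omega
      omega
  rcases hcase with h | h
  · exact eq_of_changeCount_eq hab h.symm
  · have hwrap := eq_of_changeCount_eq (Y := Y) (show b ≤ n + a by omega)
      (h.trans (changeCount_add hY a).symm)
    rw [hwrap, add_comm, hY]

lemma exists_changeCount_eq {i : ℕ} (hi : i < changeCount Y n) :
    ∃ t < n, changeCount Y t = i ∧ Y (t + 1) ≠ Y t := by
  classical
  have hcard (hf : {i | Y (i + 1) ≠ Y i}.Finite) : i < hf.toFinset.card :=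
    hi.trans_le (Nat.count_le_card hf n)
  exact ⟨_, Nat.nth_lt_of_lt_count hi, Nat.count_nth hcard, Nat.nth_mem i hcard⟩

end ChangeCount

/-- A reading of the cyclic sequence `X` with repetitions merged: `X t = L (ψ t)`, and the index
`ψ t` advances by one exactly when `X` changes. -/
structure IsCyclicCompression {l : ℕ} (X : Fin n → β) (L : Fin l → β) (ψ : Fin n → Fin l) :
    Prop where
  eq_comp : ∀ t, X t = L (ψ t)
  eq_of_eq : ∀ t, X (nxt t) = X t → ψ (nxt t) = ψ t
  eq_nxt_of_ne : ∀ t, X (nxt t) ≠ X t → ψ (nxt t) = nxt (ψ t)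
  exists_change : ∀ i, ∃ t, ψ t = i ∧ X (nxt t) ≠ X t

open Classical in
lemma exists_isCyclicCompression (X : Fin n → β) {l : ℕ}
    (hl : (Finset.univ.filter fun t => X (nxt t) ≠ X t).card = l) (hl0 : 0 < l) :
    ∃ (L : Fin l → β) (ψ : Fin n → Fin l), IsCyclicCompression X L ψ := by
  have hn : 0 < n := by
    obtain ⟨t, -⟩ := Finset.card_pos.1 (hl0.trans_eq hl.symm)
    exact t.pos
  let Y : ℕ → β := fun m => X ⟨m % n, Nat.mod_lt _ hn⟩
  have hY (t : Fin n) : Y t = X t := congrArg X (Fin.ext (Nat.mod_eq_of_lt t.2))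
  have hYnxt (t : Fin n) : Y (t + 1) = X (nxt t) := rfl
  have hper : Function.Periodic Y n := fun m => congrArg X (Fin.ext (Nat.add_mod_right m n))
  have hcn : changeCount Y n = l := by
    rw [← hl, Finset.card_filter, changeCount, Nat.count_eq_card_filter_range, Finset.card_filter,
      ← Fin.sum_univ_eq_sum_range fun i => if Y (i + 1) ≠ Y i then 1 else 0]
    simp only [hY, hYnxt]
  let ψ : Fin n → Fin l := fun t => ⟨changeCount Y t % l, Nat.mod_lt _ hl0⟩
  have hψ {t t' : Fin n} (h : ψ t = ψ t') : X t = X t' := by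
    rw [← hY, ← hY]
    exact eq_of_changeCount_modEq hper t.2 t'.2 (hcn ▸ congrArg Fin.val h)
  have hψnxt (t : Fin n) : (ψ (nxt t)).1 = changeCount Y (t + 1) % l := by
    have hval := nxt_val t
    simp only [ψ]
    split_ifs at hval with h
    · rw [hval, h, hcn, Nat.mod_self]; simp [changeCount]
    · rw [hval]
  have hchange (i : Fin l) : ∃ t, ψ t = i ∧ X (nxt t) ≠ X t := by
    obtain ⟨t, ht, hti, hne⟩ := exists_changeCount_eq (i.2.trans_eq hcn.symm)
    exact ⟨⟨t, ht⟩, Fin.ext ((congrArg (· % l) hti).trans (Nat.mod_eq_of_lt i.2)),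
      by rwa [← hYnxt, ← hY]⟩
  choose s hs hs' using hchange
  refine ⟨X ∘ s, ψ, fun t => hψ (hs _).symm, fun t h => ?_, fun t h => ?_,
    fun i => ⟨s i, hs i, hs' i⟩⟩
  · refine Fin.ext ((hψnxt t).trans ?_)
    simp only [ψ, changeCount_succ, hY, hYnxt, h, ne_eq, not_true, if_false, add_zero]
  · refine Fin.ext ((hψnxt t).trans ?_)
    rw [changeCount_succ, hYnxt, hY, if_pos h]
    simp only [ψ, nxt, Nat.mod_add_mod]

namespace IsCyclicCompression
variable {l : ℕ} {X : Fin n → β} {L : Fin l → β} {ψ : Fin n → Fin l}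

lemma two_le (h : IsCyclicCompression X L ψ) (hl0 : 0 < l) : 2 ≤ l := by
  by_contra hl
  obtain rfl : l = 1 := by omega
  obtain ⟨t, -, hne⟩ := h.exists_change 0
  exact hne (by rw [h.eq_comp, h.eq_comp t, Subsingleton.elim (ψ (nxt t))])

lemma nxt_ne_iff (h : IsCyclicCompression X L ψ) (hl : 2 ≤ l) (t : Fin n) :
    ψ (nxt t) ≠ ψ t ↔ X (nxt t) ≠ X t :=
  ⟨fun hne heq => hne (h.eq_of_eq t heq), fun hne => by
    rw [h.eq_nxt_of_ne t hne]; exact nxt_ne hl _⟩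

end IsCyclicCompression

open Classical in
lemma two_le_card_change {X : Fin n → β} {s t : Fin n} (h : X s ≠ X t) :
    2 ≤ (Finset.univ.filter fun t => X (nxt t) ≠ X t).card := by
  rcases Nat.eq_zero_or_pos (Finset.univ.filter fun t => X (nxt t) ≠ X t).card with hl | hl
  · simp only [Finset.card_eq_zero, Finset.filter_eq_empty_iff, Finset.mem_univ, not_not,
      forall_const] at hl
    exact absurd (forall_of_forall_nxt (p := fun s => X s = X t) rfl
      (fun j hj => hl.trans hj) s) h
  · obtain ⟨L, ψ, hL⟩ := exists_isCyclicCompression X rfl hl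
    exact hL.two_le hl

end Cyclic

section Sigma
variable {k : ℕ} (α : Fin k → ℕ)

lemma sum_castLE_eq_sum_range {m : ℕ} (hm : m ≤ k) :
    ∑ i : Fin m, α (Fin.castLE hm i) =
      ∑ i ∈ Finset.range m, if h : i < k then α ⟨i, h⟩ else 0 := by
  rw [Finset.sum_range]
  exact Finset.sum_congr rfl fun i _ => by rw [dif_pos (i.2.trans_le hm)]; rfl

lemma nxt_finSigmaFinEquiv_of_lt {j : Fin k} {i : ℕ} (hi : i + 1 < α j) :
    nxt (finSigmaFinEquiv ⟨j, ⟨i, by omega⟩⟩) = finSigmaFinEquiv (n := α) ⟨j, ⟨i + 1, hi⟩⟩ := by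
  have hsucc := finSigmaFinEquiv_apply (n := α) ⟨j, ⟨i + 1, hi⟩⟩
  have hi' := finSigmaFinEquiv_apply (n := α) ⟨j, ⟨i, by omega⟩⟩
  have hlt := (finSigmaFinEquiv (n := α) ⟨j, ⟨i + 1, hi⟩⟩).2
  apply Fin.ext
  rw [nxt_val]
  simp only at hsucc hi'
  split_ifs <;> omega

lemma nxt_finSigmaFinEquiv_of_eq {j : Fin k} {i : ℕ} (hi : i + 1 = α j) (h0 : 0 < α (nxt j)) :
    nxt (finSigmaFinEquiv ⟨j, ⟨i, by omega⟩⟩) = finSigmaFinEquiv (n := α) ⟨nxt j, ⟨0, h0⟩⟩ := by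
  have hlast := finSigmaFinEquiv_apply (n := α) ⟨j, ⟨i, by omega⟩⟩
  have hfirst := finSigmaFinEquiv_apply (n := α) ⟨nxt j, ⟨0, h0⟩⟩
  have hlt := (finSigmaFinEquiv (n := α) ⟨nxt j, ⟨0, h0⟩⟩).2
  have htotal := sum_castLE_eq_sum_range α le_rfl
  have hj := Finset.sum_range_succ (fun i => if h : i < k then α ⟨i, h⟩ else 0) j.1
  rw [dif_pos j.2, Fin.eta] at hj
  simp only [sum_castLE_eq_sum_range, Fin.castLE_rfl, id_eq, nxt_val] at hlast hfirst htotal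
  apply Fin.ext
  rw [nxt_val]
  by_cases hc : j.1 + 1 = k
  · rw [if_pos hc, Finset.range_zero, Finset.sum_empty] at hfirst
    rw [hc] at hj
    rw [if_pos (by omega), hfirst]
  · rw [if_neg hc] at hfirst
    rw [if_neg (by omega)]
    omega

end Sigma

/-! ### Belts and their two sides -/

lemma IsLoop.adj {P : Set E3} {k : ℕ} {L : Fin k → Set E3} (hL : IsLoop P L) (hk : 2 ≤ k)
    (j : Fin k) : Adj P (L j) (L (nxt j)) := by
  have hedge := hL.2.2 hk j
  refine ⟨hL.2.1 j, hL.2.1 _, fun heq => ?_, hedge.1.1⟩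
  have hdim := hedge.2
  rw [← heq, inter_self, (hL.2.1 j).2] at hdim
  omega

namespace IsBelt
variable {P : Set E3} {k : ℕ} {B : Fin k → Set E3}

lemma eq_nxt_or_eq_nxt (hB : IsBelt P B) {p q : Fin k} (hpq : p ≠ q)
    (hmeet : (B p ∩ B q).Nonempty) : q = nxt p ∨ p = nxt q := by
  rcases hB.1.eq_or_lt with rfl | hk
  · revert p q
    have hfin : ∀ p q : Fin 3, p ≠ q → q = nxt p ∨ p = nxt q := by decide
    exact fun p q hpq _ => hfin p q hpq
  · exact (hB.2.2.2 hk p q hpq).1 hmeet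

lemma adj (hB : IsBelt P B) (j : Fin k) : Adj P (B j) (B (nxt j)) :=
  hB.2.1.adj (by linarith [hB.1]) j

lemma adj_prv (hB : IsBelt P B) (j : Fin k) : Adj P (B j) (B (prv j)) := by
  simpa only [nxt_prv] using (hB.adj (prv j)).symm

lemma injective (hB : IsBelt P B) : Function.Injective B := by
  intro p q heq
  by_contra hpq
  have hmeet : (B p ∩ B q).Nonempty := by
    rw [heq, inter_self]
    exact (hB.2.1.2.1 q).1.1
  rcases hB.eq_nxt_or_eq_nxt hpq hmeet with rfl | rfl
  · exact (hB.adj p).ne heq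
  · exact (hB.adj q).ne heq.symm

lemma eq_nxt_or_eq_prv_of_adj (hB : IsBelt P B) {p q : Fin k} (h : Adj P (B p) (B q)) :
    q = nxt p ∨ q = prv p := by
  rcases hB.eq_nxt_or_eq_nxt (fun hpq => h.ne (congrArg B hpq)) h.nonempty with hq | rfl
  · exact Or.inl hq
  · exact Or.inr (prv_nxt q).symm

lemma notMem_of_mem_of_mem (hB : IsBelt P B) {p q r : Fin k} {x : E3} (hpq : p ≠ q) (hqr : q ≠ r)
    (hpr : p ≠ r) (hp : x ∈ B p) (hq : x ∈ B q) : x ∉ B r := by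
  intro hr
  rcases hB.1.eq_or_lt with rfl | hk
  · have hfin : ∀ p q r : Fin 3, p ≠ q → q ≠ r → p ≠ r → ∀ i, i = p ∨ i = q ∨ i = r := by decide
    have hall : ∀ i, x ∈ B i := by
      intro i
      rcases hfin p q r hpq hqr hpr i with rfl | rfl | rfl <;> assumption
    have hx : x ∈ B 0 ∩ B (nxt 0) ∩ B (nxt (nxt 0)) := ⟨⟨hall _, hall _⟩, hall _⟩
    rwa [hB.2.2.1 rfl 0] at hx
  · have hpq' := hB.eq_nxt_or_eq_nxt hpq ⟨x, hp, hq⟩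
    have hqr' := hB.eq_nxt_or_eq_nxt hqr ⟨x, hq, hr⟩
    have hpr' := hB.eq_nxt_or_eq_nxt hpr ⟨x, hp, hr⟩
    simp only [Fin.ext_iff, nxt_val, ne_eq] at hpq' hqr' hpr' hpq hqr hpr
    split_ifs at * <;> omega

lemma prv_ne_nxt (hB : IsBelt P B) (j : Fin k) : B (prv j) ≠ B (nxt j) := by
  have hk := hB.1
  intro heq
  have hval := congrArg Fin.val (hB.injective heq)
  rw [nxt_val, prv_val] at hval
  split_ifs at hval <;> omega

lemma next_notMem_range (hB : IsBelt P B) (R : RotationSystem P) (j : Fin k) :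
    R.next (B j) (B (prv j)) ∉ range B := by
  rintro ⟨m, hm⟩
  have h := hB.adj_prv j
  have hv := R.vert_mem h
  refine hB.notMem_of_mem_of_mem (q := prv j) (r := m) ?_ ?_ ?_ hv.1 hv.2 (hm ▸ R.vert_mem_next h)
  · exact fun heq => h.ne (congrArg B heq)
  · exact fun heq => (R.adj_next h).ne (by rw [← hm, heq])
  · exact fun heq => (R.adj_next_left h).ne (by rw [← hm, heq])

end IsBelt

namespace RotationSystem
variable {P : Set E3} (R : RotationSystem P) {k : ℕ} (B : Fin k → Set E3)

/-- The `i`-th facet next to the belt facet `B j` on the side of the belt reached by turning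
around `B j` with `R`, from the preceding to the following facet of the belt. -/
def sideFacet (j : Fin k) (i : ℕ) : Set E3 := (R.next (B j))^[i + 1] (B (prv j))

/-- On its side reached by turning with `R`, the belt `B` has `α j` neighbours of each facet
`B j`. -/
structure IsBeltSide (α : Fin k → ℕ) : Prop where
  pos : ∀ j, 0 < α j
  lt : ∀ j, α j + 1 < facetEdges P (B j)
  next_last : ∀ j, (R.next (B j))^[α j + 1] (B (prv j)) = B (nxt j)

variable {R B} {α α' : Fin k → ℕ} {i i' : ℕ} {j : Fin k}

lemma next_sideFacet (j : Fin k) (i : ℕ) :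
    R.next (B j) (R.sideFacet B j i) = R.sideFacet B j (i + 1) :=
  (Function.iterate_succ_apply' (R.next (B j)) (i + 1) (B (prv j))).symm

lemma adj_sideFacet (hB : IsBelt P B) (j : Fin k) (i : ℕ) : Adj P (B j) (R.sideFacet B j i) :=
  R.adj_iterate_next (hB.adj_prv j) _

namespace IsBeltSide

lemma sideFacet_eq (hα : R.IsBeltSide B α) (j : Fin k) : R.sideFacet B j (α j) = B (nxt j) :=
  hα.next_last j

lemma sideFacet_inj (hα : R.IsBeltSide B α) (hB : IsBelt P B) (hi : i < α j) (hi' : i' < α j)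
    (h : R.sideFacet B j i = R.sideFacet B j i') : i = i' := by
  have hlt := hα.lt j
  exact Nat.succ_injective (R.iterate_next_inj (hB.adj_prv j) (by omega) (by omega) h)

lemma sideFacet_notMem_range (hα : R.IsBeltSide B α) (hB : IsBelt P B) (hi : i < α j) :
    R.sideFacet B j i ∉ range B := by
  rintro ⟨m, hm⟩
  have hlt := hα.lt j
  have hprv := hB.adj_prv j
  rcases hB.eq_nxt_or_eq_prv_of_adj (hm ▸ adj_sideFacet hB j i) with rfl | rfl
  · have heq := R.iterate_next_inj hprv (i := i + 1) (by omega) hlt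
      (hm.symm.trans (hα.next_last j).symm)
    omega
  · have heq := R.iterate_next_inj hprv (i := i + 1) (j := 0) (by omega) (by omega) hm.symm
    omega

lemma exists_sideFacet_eq (hα : R.IsBeltSide B α) (hB : IsBelt P B)
    (hsum : facetEdges P (B j) = α j + α' j + 2) {G : Set E3}
    (hG : Adj P (B j) G) (hGB : G ∉ range B) :
    (∃ i < α j, R.sideFacet B j i = G) ∨ ∃ i < α' j, R.mirror.sideFacet B j i = G := by
  have hprv := hB.adj_prv j
  obtain ⟨i, hi, rfl⟩ := R.exists_lt_iterate_next_eq hprv hG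
  have hi0 : i ≠ 0 := by rintro rfl; exact hGB ⟨_, rfl⟩
  have hiα : i ≠ α j + 1 := by rintro rfl; exact hGB ⟨_, (hα.next_last j).symm⟩
  rcases lt_or_gt_of_ne hiα with hlt | hgt
  · exact Or.inl ⟨i - 1, by omega, by rw [sideFacet, Nat.sub_add_cancel (by omega)]⟩
  · refine Or.inr ⟨facetEdges P (B j) - i - 1, by omega, ?_⟩
    rw [sideFacet, R.iterate_mirror_next hprv (by omega)]
    congr 1
    omega

end IsBeltSide

variable (R) in
lemma exists_isBeltSide (hB : IsBelt P B) : ∃ α α' : Fin k → ℕ, R.IsBeltSide B α ∧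
    R.mirror.IsBeltSide B α' ∧ ∀ j, facetEdges P (B j) = α j + α' j + 2 := by
  have hsplit (j : Fin k) : ∃ a b, facetEdges P (B j) = a + 1 + (b + 1) + 2 ∧
      (R.next (B j))^[a + 2] (B (prv j)) = B (nxt j) ∧
      (R.mirror.next (B j))^[b + 2] (B (prv j)) = B (nxt j) := by
    have hprv := hB.adj_prv j
    obtain ⟨a, ha, hnext⟩ := R.exists_lt_iterate_next_eq hprv (hB.adj j)
    have hmirror : (R.mirror.next (B j))^[facetEdges P (B j) - a] (B (prv j)) = B (nxt j) := by
      rw [R.iterate_mirror_next hprv (Nat.sub_le _ _), Nat.sub_sub_self ha.le, hnext]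
    have ha0 : a ≠ 0 := by rintro rfl; exact hB.prv_ne_nxt j hnext
    have ha1 : a ≠ 1 := by rintro rfl; exact hB.next_notMem_range R j ⟨_, hnext.symm⟩
    have hb1 : facetEdges P (B j) - a ≠ 1 := by
      intro h
      rw [h] at hmirror
      exact hB.next_notMem_range R.mirror j ⟨_, hmirror.symm⟩
    obtain ⟨a, rfl⟩ : ∃ a', a = a' + 2 := ⟨a - 2, by omega⟩
    obtain ⟨b, hb⟩ : ∃ b, facetEdges P (B j) - (a + 2) = b + 2 :=
      ⟨facetEdges P (B j) - (a + 2) - 2, by omega⟩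
    exact ⟨a, b, by omega, hnext, hb ▸ hmirror⟩
  choose a b hsum ha hb using hsplit
  exact ⟨fun j => a j + 1, fun j => b j + 1,
    ⟨fun j => by omega, fun j => by have := hsum j; omega, ha⟩,
    ⟨fun j => by omega, fun j => by have := hsum j; omega, hb⟩, hsum⟩

end RotationSystem

/-! ### Walks along the boundary of a belt -/

/-- The number of indices `t` with `φ t = j`. -/
def fiberCard {n k : ℕ} (φ : Fin n → Fin k) (j : Fin k) : ℕ :=
  (Finset.univ.filter fun t => φ t = j).card

lemma sum_fiberCard {n k : ℕ} (φ : Fin n → Fin k) : ∑ j, fiberCard φ j = n := by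
  have hsum := Finset.card_eq_sum_card_fiberwise (f := φ) (s := Finset.univ) (t := Finset.univ)
    fun _ _ => Finset.mem_coe.2 (Finset.mem_univ _)
  rw [Finset.card_univ, Fintype.card_fin] at hsum
  exact hsum.symm

lemma fiberCard_pos {n k : ℕ} {φ : Fin n → Fin k} (hφ : Function.Surjective φ) (j : Fin k) :
    0 < fiberCard φ j := by
  obtain ⟨t, ht⟩ := hφ j
  exact Finset.card_pos.2 ⟨t, Finset.mem_filter.2 ⟨Finset.mem_univ t, ht⟩⟩

namespace RotationSystem
variable {P : Set E3} {R : RotationSystem P} {k n : ℕ} {B : Fin k → Set E3}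

/-- A closed walk along one of the two boundary cycles of the belt `B`: its `t`-th edge separates
the belt facet `B (φ t)` from the facet `X t` outside the belt. It goes around each belt facet in
the sense given by `R`. -/
structure BeltWalk (R : RotationSystem P) (B : Fin k → Set E3) (φ : Fin n → Fin k)
    (X : Fin n → Set E3) : Prop where
  adj : ∀ t, Adj P (B (φ t)) (X t)
  notMem_range : ∀ t, X t ∉ range B
  eq_of_eq : ∀ {t t'}, φ t = φ t' → X t = X t' → t = t'
  surjective : Function.Surjective φ
  step : ∀ t, (φ (nxt t) = φ t ∧ X (nxt t) = R.next (B (φ t)) (X t)) ∨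
    (φ (nxt t) = nxt (φ t) ∧ X (nxt t) = X t ∧ R.next (B (φ t)) (X t) = B (nxt (φ t)))

lemma IsBeltSide.sideFacet_nxt {α : Fin k → ℕ} (hα : R.IsBeltSide B α) (hB : IsBelt P B)
    {j : Fin k} {i : ℕ} (hi : i + 1 = α j) :
    R.next (B j) (R.sideFacet B j i) = B (nxt j) ∧
      R.sideFacet B (nxt j) 0 = R.sideFacet B j i := by
  have hnext : R.next (B j) (R.sideFacet B j i) = B (nxt j) := by
    rw [next_sideFacet, hi, hα.sideFacet_eq]
  refine ⟨hnext, ?_⟩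
  have hthird := R.next_third (adj_sideFacet (R := R) hB j i)
  rw [hnext] at hthird
  rw [sideFacet, zero_add, Function.iterate_one, prv_nxt, hthird]

lemma IsBeltSide.exists_beltWalk {α : Fin k → ℕ} (hα : R.IsBeltSide B α) (hB : IsBelt P B) :
    ∃ (n : ℕ) (φ : Fin n → Fin k) (X : Fin n → Set E3), R.BeltWalk B φ X ∧
      (∀ j, fiberCard φ j = α j) ∧ ∀ j, ∀ i < α j, ∃ t, φ t = j ∧ X t = R.sideFacet B j i := by
  let e := finSigmaFinEquiv (n := α)
  let φ : Fin (∑ j, α j) → Fin k := fun t => (e.symm t).1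
  let X : Fin (∑ j, α j) → Set E3 := fun t => R.sideFacet B (φ t) (e.symm t).2
  have hφ (j : Fin k) (i : Fin (α j)) : φ (e ⟨j, i⟩) = j := by
    simp only [φ, Equiv.symm_apply_apply]
  have hX (j : Fin k) (i : Fin (α j)) : X (e ⟨j, i⟩) = R.sideFacet B j i := by
    change R.sideFacet B (e.symm (e ⟨j, i⟩)).1 (e.symm (e ⟨j, i⟩)).2 = _
    rw [e.symm_apply_apply]
  have hcard (j : Fin k) : fiberCard φ j = α j := by
    rw [fiberCard, ← Fintype.card_subtype]
    exact (Fintype.card_congr ((e.symm.subtypeEquiv fun _ => Iff.rfl).trans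
      (Equiv.sigmaSubtype j))).trans (Fintype.card_fin _)
  refine ⟨_, φ, X, ⟨fun t => adj_sideFacet hB _ _,
    fun t => hα.sideFacet_notMem_range hB (e.symm t).2.2, fun {t t'} hφt hXt => ?_,
    fun j => ⟨e ⟨j, ⟨0, hα.pos j⟩⟩, hφ _ _⟩, fun t => ?_⟩, hcard,
    fun j i hi => ⟨e ⟨j, ⟨i, hi⟩⟩, hφ _ _, hX _ _⟩⟩
  · obtain ⟨⟨j, i⟩, rfl⟩ := e.surjective t
    obtain ⟨⟨j', i'⟩, rfl⟩ := e.surjective t'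
    rw [hφ, hφ] at hφt
    subst hφt
    rw [hX, hX] at hXt
    rw [Fin.ext (hα.sideFacet_inj hB i.2 i'.2 hXt)]
  · obtain ⟨⟨j, i, hi⟩, rfl⟩ := e.surjective t
    rcases (Nat.succ_le_of_lt hi).lt_or_eq with hlt | heq
    · left
      rw [nxt_finSigmaFinEquiv_of_lt α hlt, hφ, hX, hφ, hX]
      exact ⟨rfl, (next_sideFacet j i).symm⟩
    · right
      rw [nxt_finSigmaFinEquiv_of_eq α heq (hα.pos _), hφ, hX, hφ, hX]
      exact ⟨rfl, (hα.sideFacet_nxt hB heq).symm⟩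

variable (R) in
lemma exists_beltWalks (hB : IsBelt P B) :
    ∃ (n n' : ℕ) (φ : Fin n → Fin k) (φ' : Fin n' → Fin k) (X : Fin n → Set E3)
      (X' : Fin n' → Set E3), R.BeltWalk B φ X ∧ R.mirror.BeltWalk B φ' X' ∧
      (∀ j, facetEdges P (B j) = fiberCard φ j + fiberCard φ' j + 2) ∧
      ∀ j G, Adj P (B j) G → G ∉ range B → (∃ t, φ t = j ∧ X t = G) ∨ ∃ t, φ' t = j ∧ X' t = G := by
  obtain ⟨α, α', hα, hα', hsum⟩ := R.exists_isBeltSide hB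
  obtain ⟨n, φ, X, hW, hcard, hcover⟩ := hα.exists_beltWalk hB
  obtain ⟨n', φ', X', hW', hcard', hcover'⟩ := hα'.exists_beltWalk hB
  refine ⟨n, n', φ, φ', X, X', hW, hW', fun j => by rw [hcard, hcard', hsum], fun j G hG hGB => ?_⟩
  rcases hα.exists_sideFacet_eq hB (hsum j) hG hGB with ⟨i, hi, rfl⟩ | ⟨i, hi, rfl⟩
  · exact Or.inl (hcover j i hi)
  · exact Or.inr (hcover' j i hi)

namespace BeltWalk
variable {φ : Fin n → Fin k} {X : Fin n → Set E3}

lemma three_le (hW : R.BeltWalk B φ X) (hB : IsBelt P B) : 3 ≤ n := by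
  have hle := Fintype.card_le_of_surjective φ hW.surjective
  rw [Fintype.card_fin, Fintype.card_fin] at hle
  exact hB.1.trans hle

lemma facet_nxt_ne_iff (hW : R.BeltWalk B φ X) (hB : IsBelt P B) (t : Fin n) :
    X (nxt t) ≠ X t ↔ φ (nxt t) = φ t := by
  have hk := hB.1
  rcases hW.step t with ⟨hφ, hX⟩ | ⟨hφ, hX, -⟩
  · exact iff_of_true (hX ▸ (R.adj_next (hW.adj t)).ne.symm) hφ
  · exact iff_of_false (not_not.2 hX) (hφ ▸ nxt_ne (by omega) _)

lemma card_change (hW : R.BeltWalk B φ X) (hB : IsBelt P B) :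
    (Finset.univ.filter fun t => φ (nxt t) ≠ φ t).card = k := by
  have hk := hB.1
  have hlast {t : Fin n} (ht : φ (nxt t) ≠ φ t) : R.next (B (φ t)) (X t) = B (nxt (φ t)) :=
    ((hW.step t).resolve_left fun h => ht h.1).2.2
  rw [← Fintype.card_subtype]
  refine (Fintype.card_of_bijective (f := fun t : {t // φ (nxt t) ≠ φ t} => φ t)
    ⟨?_, fun j => ?_⟩).trans (Fintype.card_fin k)
  · rintro ⟨t, ht⟩ ⟨t', ht'⟩ heq
    refine Subtype.ext (hW.eq_of_eq heq ?_)
    have hthird := R.next_third (hW.adj t)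
    rw [hlast ht, show φ t = φ t' from heq, ← hlast ht', R.next_third (hW.adj t')] at hthird
    exact hthird.symm
  · by_contra! hconst
    obtain ⟨t, rfl⟩ := hW.surjective j
    obtain ⟨t', ht'⟩ := hW.surjective (nxt (φ t))
    refine nxt_ne (by omega) (φ t) (ht'.symm.trans ?_)
    refine forall_of_forall_nxt (p := fun s => φ s = φ t) (i := t) rfl (fun s hs => ?_) t'
    by_contra hne
    exact hconst ⟨s, fun h => hne (h.trans hs)⟩ hs

lemma card_facet_change (hW : R.BeltWalk B φ X) (hB : IsBelt P B)
    [DecidablePred fun t => X (nxt t) ≠ X t] :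
    (Finset.univ.filter fun t => X (nxt t) ≠ X t).card = ∑ j, (fiberCard φ j - 1) := by
  have hsplit := Finset.card_filter_add_card_filter_not (s := Finset.univ) fun t => φ (nxt t) ≠ φ t
  have hsum : ∑ j, (fiberCard φ j - 1) + ∑ j : Fin k, 1 = ∑ j, fiberCard φ j := by
    rw [← Finset.sum_add_distrib]
    exact Finset.sum_congr rfl fun j _ => Nat.sub_add_cancel (fiberCard_pos hW.surjective j)
  rw [sum_fiberCard, Finset.sum_const, Finset.card_univ, Fintype.card_fin, smul_eq_mul,
    mul_one] at hsum
  rw [hW.card_change hB, Finset.card_univ, Fintype.card_fin] at hsplit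
  simp only [not_ne_iff] at hsplit
  simp only [hW.facet_nxt_ne_iff hB]
  omega

end BeltWalk
end RotationSystem

/-! ### The components of the complement of a belt -/


/-- The boundary cycle of the belt `B` followed by a walk `φ`, `X`: the union of its edges. -/
def walkCurve {k n : ℕ} (B : Fin k → Set E3) (φ : Fin n → Fin k) (X : Fin n → Set E3) : Set E3 :=
  ⋃ t, B (φ t) ∩ X t

lemma IsSimplePolytope3.subset_frontier {P F : Set E3} (hP : IsSimplePolytope3 P)
    (hF : F ∈ facets P) : F ⊆ frontier P :=
  hP.frontier_eq_sUnion_facets ▸ subset_sUnion_of_mem hF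

namespace IsCompOf
variable {P C Q Q' F G S : Set E3}

lemma mem_sideFacets_of_mem (hC : IsCompOf C S) (hF : F ∈ sideFacets P C) (hFS : openFacet P F ⊆ S)
    (hG : G ∈ facets P) (hGS : openFacet P G ⊆ S) {x : E3} (hxF : x ∈ F) (hxG : x ∈ G)
    (hx : x ∈ S) : G ∈ sideFacets P C :=
  (mem_sideFacets_iff hG hC hGS hxG hx).2 ((mem_sideFacets_iff hF.1 hC hFS hxF hx).1 hF)

lemma disjoint_sideFacets (hQ : IsCompOf Q S) (hQ' : IsCompOf Q' S) (hne : Q ≠ Q') :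
    Disjoint (sideFacets P Q) (sideFacets P Q') := by
  refine disjoint_left.2 fun F hF hF' => ?_
  obtain ⟨x, hx⟩ := hF.1.1.1.intrinsicInterior hF.1.1.2.2.1
  exact hne (hQ.eq_of_mem hQ' (hF.2 hx) (hF'.2 hx))

lemma notMem_range_of_mem_sideFacets {k : ℕ} {B : Fin k → Set E3}
    (hQ : IsCompOf Q (frontier P \ ⋃ i, B i)) (hF : F ∈ sideFacets P Q) : F ∉ range B := by
  rintro ⟨j, rfl⟩
  obtain ⟨x, hx⟩ := hF.1.1.1.intrinsicInterior hF.1.1.2.2.1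
  exact (hQ.subset (hF.2 hx)).2 (mem_iUnion.2 ⟨j, intrinsicInterior_subset hx⟩)

end IsCompOf

namespace IsBelt
variable {P Q F G : Set E3} {k : ℕ} {B : Fin k → Set E3}

lemma openFacet_subset (hB : IsBelt P B) (hP : IsSimplePolytope3 P) (hF : F ∈ facets P)
    (hFB : F ∉ range B) : openFacet P F ⊆ frontier P \ ⋃ i, B i := by
  refine fun x hx => ⟨hP.subset_frontier hF hx.1, fun hxB => ?_⟩
  obtain ⟨j, hj⟩ := mem_iUnion.1 hxB
  exact hFB ⟨j, hx.2 _ (hB.2.1.2.1 j) hj⟩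

lemma mem_sideFacets_of_mem (hB : IsBelt P B) (hP : IsSimplePolytope3 P)
    (hQ : IsCompOf Q (frontier P \ ⋃ i, B i)) (hF : F ∈ sideFacets P Q) (hG : G ∈ facets P)
    {x : E3} (hxF : x ∈ F) (hxG : x ∈ G) (hxB : x ∉ ⋃ i, B i) : G ∈ sideFacets P Q := by
  have hGB : G ∉ range B := by
    rintro ⟨j, rfl⟩
    exact hxB (mem_iUnion.2 ⟨j, hxG⟩)
  exact hQ.mem_sideFacets_of_mem hF
    (hB.openFacet_subset hP hF.1 (hQ.notMem_range_of_mem_sideFacets hF)) hG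
    (hB.openFacet_subset hP hG hGB) hxF hxG ⟨hP.subset_frontier hF.1 hxF, hxB⟩

lemma exists_adj_mem_sideFacets (hB : IsBelt P B) (hP : IsSimplePolytope3 P)
    (hQ : IsCompOf Q (frontier P \ ⋃ i, B i)) : ∃ j, ∃ G ∈ sideFacets P Q, Adj P (B j) G := by
  by_contra! hnone
  have hBf := hB.2.1.2.1
  obtain ⟨F, hF⟩ := exists_mem_sideFacets hP hQ sdiff_subset fun F hF hFS => by
    refine hB.openFacet_subset hP hF ?_
    rintro ⟨j, rfl⟩
    obtain ⟨x, hxj, hx⟩ := hFS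
    exact hx.2 (mem_iUnion.2 ⟨j, hxj⟩)
  obtain ⟨x, hx⟩ := hF.1.1.1
  have j : Fin k := ⟨0, by have := hB.1; omega⟩
  obtain ⟨y, hy⟩ := (hBf j).1.1
  refine hQ.notMem_range_of_mem_sideFacets (mem_of_isPreconnected_of_adj_closed hP
    hP.isPreconnected_frontier subset_rfl (fun K hK => hK.1) (fun z _ K hK L hL hzK hzL => ?_)
    hF (hP.subset_frontier hF.1 hx) hx (hBf j) (hP.subset_frontier (hBf j) hy) hy) ⟨j, rfl⟩
  refine hB.mem_sideFacets_of_mem hP hQ hK hL hzK hzL fun hzB => ?_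
  obtain ⟨i, hi⟩ := mem_iUnion.1 hzB
  exact hnone i K hK
    ⟨hBf i, hK.1, fun h => hQ.notMem_range_of_mem_sideFacets hK ⟨i, h⟩, z, hi, hzK⟩

end IsBelt

namespace RotationSystem.BeltWalk
variable {P : Set E3} {R : RotationSystem P} {k n : ℕ} {B : Fin k → Set E3} {φ : Fin n → Fin k}
  {X : Fin n → Set E3}

lemma vert_nxt (hW : R.BeltWalk B φ X) (t : Fin n) :
    R.vert (X (nxt t)) (B (φ (nxt t))) = R.vert (B (φ t)) (X t) := by
  rcases hW.step t with ⟨hφ, hX⟩ | ⟨hφ, hX, hnext⟩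
  · rw [hφ, hX, R.vert_third (hW.adj t)]
  · rw [hφ, hX, ← hnext, R.vert_next (hW.adj t)]

lemma segment_eq (hW : R.BeltWalk B φ X) (t : Fin n) :
    segment ℝ (R.vert (X t) (B (φ t))) (R.vert (X (nxt t)) (B (φ (nxt t)))) = B (φ t) ∩ X t := by
  rw [hW.vert_nxt, R.inter_eq_segment (hW.adj t)]

lemma isSimpleEdgeCycleVia (hW : R.BeltWalk B φ X) (hB : IsBelt P B) :
    IsSimpleEdgeCycleVia P (walkCurve B φ X) fun t => R.vert (X t) (B (φ t)) := by
  refine ⟨hW.three_le hB, fun t t' heq => ?_, fun t => R.isVertexOf_vert (hW.adj t).symm,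
    fun t => (hW.segment_eq t).symm ▸ R.isEdgeOf_inter (hW.adj t),
    iUnion_congr fun t => (hW.segment_eq t).symm⟩
  rcases R.eq_and_eq_or_of_vert_eq (hW.adj t).symm (hW.adj t').symm heq with
    ⟨hX, hφ⟩ | ⟨hX, -⟩ | ⟨-, hX⟩
  · exact hW.eq_of_eq (hB.injective hφ).symm hX.symm
  · exact (hW.notMem_range t' ⟨_, hX.symm⟩).elim
  · exact (hW.notMem_range t ⟨_, hX⟩).elim

lemma edgesInCommon_walkCurve (hW : R.BeltWalk B φ X) (hB : IsBelt P B) (j : Fin k) :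
    edgesInCommon P (B j) (walkCurve B φ X) = fiberCard φ j := by
  have hBf := hB.2.1.2.1
  have himage : {e | IsEdgeOf e P ∧ e ⊆ B j ∧ e ⊆ walkCurve B φ X} =
      (fun t => B (φ t) ∩ X t) '' (Finset.univ.filter fun t => φ t = j : Finset (Fin n)) := by
    ext e
    simp only [Finset.coe_filter_univ, mem_image, mem_ofPred_eq]
    constructor
    · rintro ⟨he, hej, heγ⟩
      obtain ⟨G, hG, rfl⟩ := (R.setOf_isEdgeOf_subset_eq (hBf j)).subset ⟨he, hej⟩
      obtain ⟨x, hx, hxonly⟩ := R.exists_mem_inter_forall hG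
      obtain ⟨t, ht⟩ := mem_iUnion.1 (heγ hx)
      have hX : X t = G := (hxonly _ (hW.adj t).right ht.2).resolve_left fun h =>
        hW.notMem_range t ⟨j, h.symm⟩
      have hφ : B (φ t) = B j := (hxonly _ (hBf _) ht.1).resolve_right fun h =>
        (hW.adj t).ne (h.trans hX.symm)
      exact ⟨t, hB.injective hφ, by rw [hφ, hX]⟩
    · rintro ⟨t, rfl, rfl⟩
      exact ⟨R.isEdgeOf_inter (hW.adj t), inter_subset_left,
        subset_iUnion (fun t => B (φ t) ∩ X t) t⟩
  rw [edgesInCommon, himage, InjOn.ncard_image, ncard_coe_finset, fiberCard]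
  intro t ht t' ht' heq
  simp only [Finset.coe_filter_univ, mem_ofPred_eq] at ht ht'
  rcases R.eq_and_eq_or_of_inter_eq (hW.adj t) (hW.adj t') heq with ⟨-, hX⟩ | ⟨hX, -⟩
  · exact hW.eq_of_eq (ht.trans ht'.symm) hX.symm
  · exact (hW.notMem_range t ⟨_, hX⟩).elim

lemma forall_mem_sideFacets (hW : R.BeltWalk B φ X) (hB : IsBelt P B) (hP : IsSimplePolytope3 P)
    {C S : Set E3} (hC : IsCompOf C S) (hS : frontier P \ ⋃ i, B i ⊆ S) {s : Fin n}
    (hs : X s ∈ sideFacets P C) (t : Fin n) : X t ∈ sideFacets P C := by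
  have hXS (t : Fin n) : openFacet P (X t) ⊆ S :=
    (hB.openFacet_subset hP (hW.adj t).right (hW.notMem_range t)).trans hS
  refine forall_of_forall_nxt (p := fun t => X t ∈ sideFacets P C) hs (fun t ht => ?_) t
  rcases hW.step t with ⟨-, hX⟩ | ⟨-, hX, -⟩
  · have hadj : Adj P (X t) (X (nxt t)) := hX ▸ R.adj_next (hW.adj t)
    obtain ⟨x, hx, hxonly⟩ := R.exists_mem_inter_forall hadj
    refine hC.mem_sideFacets_of_mem ht (hXS t) hadj.right (hXS _) hx.1 hx.2
      (hS ⟨hP.subset_frontier ht.1 hx.1, fun hxB => ?_⟩)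
    obtain ⟨j, hj⟩ := mem_iUnion.1 hxB
    rcases hxonly _ (hB.2.1.2.1 j) hj with h | h
    · exact hW.notMem_range t ⟨j, h⟩
    · exact hW.notMem_range _ ⟨j, h⟩
  · rwa [hX]

lemma openFacet_subset_sdiff_walkCurve (hW : R.BeltWalk B φ X) (hP : IsSimplePolytope3 P)
    {F : Set E3} (hF : F ∈ facets P) : openFacet P F ⊆ frontier P \ walkCurve B φ X := by
  refine fun x hx => ⟨hP.subset_frontier hF hx.1, fun hxγ => ?_⟩
  obtain ⟨t, ht⟩ := mem_iUnion.1 hxγ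
  exact (hW.adj t).ne ((hx.2 _ (hW.adj t).left ht.1).trans (hx.2 _ (hW.adj t).right ht.2).symm)

lemma forall_belt_mem_sideFacets (hW : R.BeltWalk B φ X) (hB : IsBelt P B)
    (hP : IsSimplePolytope3 P) {C : Set E3} (hC : IsCompOf C (frontier P \ walkCurve B φ X))
    {i : Fin k} (hi : B i ∈ sideFacets P C) (j : Fin k) : B j ∈ sideFacets P C := by
  have hBf := hB.2.1.2.1
  refine forall_of_forall_nxt (p := fun j => B j ∈ sideFacets P C) hi (fun j hj => ?_) j
  obtain ⟨x, hx, hxonly⟩ := R.exists_mem_inter_forall (hB.adj j)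
  refine hC.mem_sideFacets_of_mem hj (hW.openFacet_subset_sdiff_walkCurve hP (hBf _)) (hBf _)
    (hW.openFacet_subset_sdiff_walkCurve hP (hBf _)) hx.1 hx.2
    ⟨hP.subset_frontier (hBf j) hx.1, fun hxγ => ?_⟩
  obtain ⟨t, ht⟩ := mem_iUnion.1 hxγ
  rcases hxonly _ (hW.adj t).right ht.2 with h | h <;> exact hW.notMem_range t ⟨_, h.symm⟩

end RotationSystem.BeltWalk

lemma exists_isCompOf_mem_sideFacets {P F S : Set E3} (hF : F ∈ facets P)
    (hFS : openFacet P F ⊆ S) : ∃ C, IsCompOf C S ∧ F ∈ sideFacets P C := by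
  obtain ⟨x, hx⟩ := hF.1.1.intrinsicInterior hF.1.2.2.1
  have hxS := hFS (intrinsicInterior_subset_openFacet hF hx)
  have hC : IsCompOf (connectedComponentIn S x) S := ⟨x, hxS, rfl⟩
  exact ⟨_, hC, (mem_sideFacets_iff hF hC hFS (intrinsicInterior_subset hx) hxS).2
    (mem_connectedComponentIn hxS)⟩

/-- On the side `Q` the belt `B` borders an `l`-loop along an edge-cycle which contains `α j`
edges of each facet `B j`. -/
def BordersLoopOn (P : Set E3) {k : ℕ} (B : Fin k → Set E3) (Q : Set E3) (α : Fin k → ℕ) (l : ℕ) :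
    Prop :=
  ∃ (L : Fin l → Set E3) (γ : Set E3), (∀ i, L i ∈ sideFacets P Q) ∧
    (∃ C C' : Set E3, IsCompOf C (frontier P \ γ) ∧ IsCompOf C' (frontier P \ γ) ∧ C ≠ C' ∧
      WalksRound P γ C B ∧ WalksRound P γ C' L) ∧
    ∀ j, edgesInCommon P (B j) γ = α j

lemma BordersLoopOn.exists_borders {P Q Q' F : Set E3} {k l : ℕ} {B : Fin k → Set E3}
    {α : Fin k → ℕ} (h : BordersLoopOn P B Q' α l) (hF : sideFacets P Q = {F}) :
    ∃ L : Fin l → Set E3, Borders P B L ∧ (sideFacets P Q = {F} → ∀ i, L i ∈ sideFacets P Q') ∧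
      (sideFacets P Q' = {F} → ∀ i, L i ∈ sideFacets P Q) :=
  let ⟨L, γ, hL, hC, _⟩ := h
  ⟨L, ⟨γ, hC⟩, fun _ => hL, fun hF' => hF ▸ hF' ▸ hL⟩

namespace RotationSystem
variable {P Q Q' : Set E3} {R R' : RotationSystem P} {k n n' : ℕ} {B : Fin k → Set E3}
  {φ : Fin n → Fin k} {φ' : Fin n' → Fin k} {X : Fin n → Set E3} {X' : Fin n' → Set E3}

/-- A walk along a belt on its side `Q`, passing all edges between the belt and that side. -/
structure SideWalk (R : RotationSystem P) (B : Fin k → Set E3) (Q : Set E3) (φ : Fin n → Fin k)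
    (X : Fin n → Set E3) : Prop extends R.BeltWalk B φ X where
  mem_sideFacets : ∀ t, X t ∈ sideFacets P Q
  exists_eq : ∀ j, ∀ G ∈ sideFacets P Q, Adj P (B j) G → ∃ t, φ t = j ∧ X t = G

lemma BeltWalk.sideWalk_of_mem (hW : R.BeltWalk B φ X) (hW' : R'.BeltWalk B φ' X')
    (hB : IsBelt P B) (hP : IsSimplePolytope3 P) (hQ : IsCompOf Q (frontier P \ ⋃ i, B i))
    (hQ' : IsCompOf Q' (frontier P \ ⋃ i, B i)) (hne : Q ≠ Q')
    (hcover : ∀ j G, Adj P (B j) G → G ∉ range B →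
      (∃ t, φ t = j ∧ X t = G) ∨ ∃ t, φ' t = j ∧ X' t = G) {s : Fin n}
    (hs : X s ∈ sideFacets P Q) : R.SideWalk B Q φ X ∧ R'.SideWalk B Q' φ' X' := by
  have hdisj := disjoint_left.1 (hQ.disjoint_sideFacets (P := P) hQ' hne)
  have hX := hW.forall_mem_sideFacets hB hP hQ subset_rfl hs
  have hX' (t : Fin n') : X' t ∈ sideFacets P Q' := by
    obtain ⟨j, G, hG, hadj⟩ := hB.exists_adj_mem_sideFacets hP hQ'
    rcases hcover j G hadj (hQ'.notMem_range_of_mem_sideFacets hG) with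
      ⟨t', -, rfl⟩ | ⟨t', -, rfl⟩
    · exact (hdisj (hX t') hG).elim
    · exact hW'.forall_mem_sideFacets hB hP hQ' subset_rfl hG t
  refine ⟨⟨hW, hX, fun j G hG hadj => ?_⟩, ⟨hW', hX', fun j G hG hadj => ?_⟩⟩
  · rcases hcover j G hadj (hQ.notMem_range_of_mem_sideFacets hG) with h | ⟨t, -, rfl⟩
    · exact h
    · exact (hdisj hG (hX' t)).elim
  · rcases hcover j G hadj (hQ'.notMem_range_of_mem_sideFacets hG) with ⟨t, -, rfl⟩ | h
    · exact (hdisj (hX t) hG).elim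
    · exact h

lemma exists_sideWalks (R : RotationSystem P) (hB : IsBelt P B) (hP : IsSimplePolytope3 P)
    (hQ : IsCompOf Q (frontier P \ ⋃ i, B i)) (hQ' : IsCompOf Q' (frontier P \ ⋃ i, B i))
    (hne : Q ≠ Q') :
    ∃ (R₁ R₂ : RotationSystem P) (n₁ n₂ : ℕ) (φ₁ : Fin n₁ → Fin k) (φ₂ : Fin n₂ → Fin k)
      (X₁ : Fin n₁ → Set E3) (X₂ : Fin n₂ → Set E3), R₁.SideWalk B Q φ₁ X₁ ∧
      R₂.SideWalk B Q' φ₂ X₂ ∧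
      ∀ j, facetEdges P (B j) = fiberCard φ₁ j + fiberCard φ₂ j + 2 := by
  obtain ⟨n, n', φ, φ', X, X', hW, hW', hsum, hcover⟩ := R.exists_beltWalks hB
  obtain ⟨j, G, hG, hadj⟩ := hB.exists_adj_mem_sideFacets hP hQ
  rcases hcover j G hadj (hQ.notMem_range_of_mem_sideFacets hG) with ⟨t, -, rfl⟩ | ⟨t, -, rfl⟩
  · obtain ⟨h, h'⟩ := hW.sideWalk_of_mem hW' hB hP hQ hQ' hne hcover hG
    exact ⟨_, _, _, _, _, _, _, _, h, h', hsum⟩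
  · obtain ⟨h', h⟩ := hW'.sideWalk_of_mem hW hB hP hQ hQ' hne
      (fun j G hadj hG => (hcover j G hadj hG).symm) hG
    exact ⟨_, _, _, _, _, _, _, _, h', h, fun j => by rw [hsum, add_comm (fiberCard φ j)]⟩

namespace SideWalk

lemma exists_components (hW : R.SideWalk B Q φ X) (hB : IsBelt P B) (hP : IsSimplePolytope3 P)
    (hQ : IsCompOf Q (frontier P \ ⋃ i, B i)) :
    ∃ C C', IsCompOf C (frontier P \ walkCurve B φ X) ∧
      IsCompOf C' (frontier P \ walkCurve B φ X) ∧ C ≠ C' ∧ (∀ j, B j ∈ sideFacets P C) ∧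
      ∀ t, X t ∈ sideFacets P C' := by
  have hBf := hB.2.1.2.1
  let i : Fin k := ⟨0, by have := hB.1; omega⟩
  let s : Fin n := ⟨0, by have := hW.three_le hB; omega⟩
  have hopen {F : Set E3} (hF : F ∈ facets P) := hW.openFacet_subset_sdiff_walkCurve hP hF
  obtain ⟨C, hC, hi⟩ := exists_isCompOf_mem_sideFacets (hBf i) (hopen (hBf i))
  obtain ⟨C', hC', hs⟩ := exists_isCompOf_mem_sideFacets (hW.adj s).right (hopen (hW.adj s).right)
  refine ⟨C, C', hC, hC', ?_, hW.forall_belt_mem_sideFacets hB hP hC hi,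
    hW.forall_mem_sideFacets hB hP hC' (sdiff_subset_sdiff_right <| iUnion_subset fun t =>
      inter_subset_left.trans (subset_iUnion B _)) hs⟩
  rintro rfl
  obtain ⟨x, hx⟩ := (hBf i).1.1.intrinsicInterior (hBf i).1.2.2.1
  obtain ⟨y, hy⟩ := (hW.adj s).right.1.1.intrinsicInterior (hW.adj s).right.1.2.2.1
  refine hQ.notMem_range_of_mem_sideFacets (mem_of_isPreconnected_of_adj_closed hP
    hC.isPreconnected (hC.subset.trans sdiff_subset) (fun F hF => hF.1)
    (fun z hz F hF G hG hzF hzG => ?_) (hW.mem_sideFacets s) (hs.2 hy)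
    (intrinsicInterior_subset hy) (hBf i) (hi.2 hx) (intrinsicInterior_subset hx)) ⟨i, rfl⟩
  refine hB.mem_sideFacets_of_mem hP hQ hF hG hzF hzG fun hzB => ?_
  obtain ⟨j, hj⟩ := mem_iUnion.1 hzB
  obtain ⟨t, rfl, rfl⟩ := hW.exists_eq j F hF
    ⟨hBf j, hF.1, fun h => hQ.notMem_range_of_mem_sideFacets hF ⟨j, h⟩, z, hj, hzF⟩
  exact (hC.subset hz).2 (mem_iUnion.2 ⟨t, hj, hzF⟩)

lemma walksRound_belt (hW : R.SideWalk B Q φ X) (hB : IsBelt P B) {C : Set E3}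
    (hC : ∀ j, B j ∈ sideFacets P C) : WalksRound P (walkCurve B φ X) C B :=
  ⟨hB.2.1, fun j => (hC j).2, n, _, φ, hW.isSimpleEdgeCycleVia hB,
    fun t => (hW.segment_eq t).trans_subset inter_subset_left,
    fun t => (hW.step t).imp And.left And.left, hW.surjective, fun _ => hW.card_change hB⟩

open Classical in
lemma walksRound_compression (hW : R.SideWalk B Q φ X) (hB : IsBelt P B) {C : Set E3} {l : ℕ}
    {L : Fin l → Set E3} {ψ : Fin n → Fin l} (hL : IsCyclicCompression X L ψ) (hl : 2 ≤ l)
    (hcard : (Finset.univ.filter fun t => X (nxt t) ≠ X t).card = l)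
    (hC : ∀ t, X t ∈ sideFacets P C) : WalksRound P (walkCurve B φ X) C L := by
  have hmem (i : Fin l) : L i ∈ sideFacets P C := by
    obtain ⟨t, rfl, -⟩ := hL.exists_change i
    exact hL.eq_comp t ▸ hC t
  have hedge (i : Fin l) : IsEdgeOf (L i ∩ L (nxt i)) P := by
    obtain ⟨t, rfl, hne⟩ := hL.exists_change i
    have hX := ((hW.step t).resolve_right fun h => hne h.2.1).2
    rw [← hL.eq_nxt_of_ne t hne, ← hL.eq_comp, ← hL.eq_comp, hX]
    exact R.isEdgeOf_inter (R.adj_next (hW.adj t))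
  refine ⟨⟨by omega, fun i => (hmem i).1, fun _ => hedge⟩, fun i => (hmem i).2, n, _, ψ,
    hW.isSimpleEdgeCycleVia hB, fun t => ?_, fun t => ?_, fun i => ?_, fun _ => ?_⟩
  · rw [hW.segment_eq, ← hL.eq_comp]
    exact inter_subset_right
  · exact (eq_or_ne (X (nxt t)) (X t)).imp (hL.eq_of_eq t) (hL.eq_nxt_of_ne t)
  · exact (hL.exists_change i).imp fun t ht => ht.1
  · simp only [hL.nxt_ne_iff hl]
    convert hcard

lemma eq_singleton_of_forall_eq (hW : R.SideWalk B Q φ X) (hB : IsBelt P B)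
    (hP : IsSimplePolytope3 P) (hQ : IsCompOf Q (frontier P \ ⋃ i, B i)) {F : Set E3}
    (hX : ∀ t, X t = F) : sideFacets P Q = {F} ∧ facetEdges P F = k := by
  have hadj (j : Fin k) : Adj P F (B j) := by
    obtain ⟨t, rfl⟩ := hW.surjective j
    exact hX t ▸ (hW.adj t).symm
  have hF : F ∈ sideFacets P Q := by
    obtain ⟨t, -⟩ := hW.surjective ⟨0, by have := hB.1; omega⟩
    exact hX t ▸ hW.mem_sideFacets t
  have hnext (j : Fin k) : R.next F (B (nxt j)) = B j := by
    obtain ⟨t, rfl⟩ := hW.surjective j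
    have hstep := (hW.step t).resolve_left fun h =>
      (hW.facet_nxt_ne_iff hB t).2 h.1 ((hX _).trans (hX t).symm)
    rw [← hstep.2.2, hX, R.next_next (hadj _).symm]
  have hneighbours : {G | Adj P F G} = range B := by
    refine (R.setOf_adj_subset (hadj ⟨0, by have := hB.1; omega⟩) (mem_range_self _) ?_).antisymm
      (range_subset_iff.2 hadj)
    rintro _ ⟨j, rfl⟩
    exact ⟨prv j, by rw [← hnext, nxt_prv]⟩
  constructor
  · refine Subset.antisymm (fun G hG => ?_) (singleton_subset_iff.2 hF)
    obtain ⟨x, hx⟩ := hF.1.1.1.intrinsicInterior hF.1.1.2.2.1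
    obtain ⟨y, hy⟩ := hG.1.1.1.intrinsicInterior hG.1.1.2.2.1
    refine mem_of_isPreconnected_of_adj_closed hP hQ.isPreconnected (hQ.subset.trans sdiff_subset)
      (singleton_subset_iff.2 hF.1) (fun z hz K hK L hL hzK hzL => ?_) rfl (hF.2 hx)
      (intrinsicInterior_subset hx) hG.1 (hG.2 hy) (intrinsicInterior_subset hy)
    rw [mem_singleton_iff.1 hK] at hzK
    by_contra hne
    obtain ⟨j, rfl⟩ := hneighbours.subset ⟨hF.1, hL, Ne.symm hne, z, hzK, hzL⟩
    exact (hQ.subset hz).2 (mem_iUnion.2 ⟨j, hzL⟩)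
  · rw [R.facetEdges_eq_ncard_adj hF.1, hneighbours, ← image_univ,
      ncard_image_of_injective _ hB.injective, ncard_univ, Nat.card_fin]

lemma singleton_or_bordersLoopOn (hW : R.SideWalk B Q φ X) (hB : IsBelt P B)
    (hP : IsSimplePolytope3 P) (hQ : IsCompOf Q (frontier P \ ⋃ i, B i)) :
    (∑ j, (fiberCard φ j - 1) = 0 ∧ ∃ F, sideFacets P Q = {F} ∧ facetEdges P F = k) ∨
      (2 ≤ ∑ j, (fiberCard φ j - 1) ∧
        BordersLoopOn P B Q (fiberCard φ) (∑ j, (fiberCard φ j - 1))) := by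
  classical
  have hcard := hW.card_facet_change hB
  rcases Nat.eq_zero_or_pos (∑ j, (fiberCard φ j - 1)) with hl | hl
  · refine Or.inl ⟨hl, X ⟨0, by have := hW.three_le hB; omega⟩, ?_⟩
    rw [hl, Finset.card_eq_zero, Finset.filter_eq_empty_iff] at hcard
    exact hW.eq_singleton_of_forall_eq hB hP hQ (forall_of_forall_nxt rfl fun t ht =>
      (not_not.1 (hcard (Finset.mem_univ t))).trans ht)
  · obtain ⟨L, ψ, hL⟩ := exists_isCyclicCompression X (by convert hcard) hl
    obtain ⟨C, C', hC, hC', hne, hCB, hCX⟩ := hW.exists_components hB hP hQ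
    refine Or.inr ⟨hL.two_le hl, L, _, fun i => ?_, ⟨C, C', hC, hC', hne, hW.walksRound_belt hB hCB,
      hW.walksRound_compression hB hL (hL.two_le hl) (by convert hcard) hCX⟩,
      hW.edgesInCommon_walkCurve hB⟩
    obtain ⟨t, rfl, -⟩ := hL.exists_change i
    exact hL.eq_comp t ▸ hW.mem_sideFacets t

end SideWalk
end RotationSystem

/-! ### Counting the edges of a belt -/

lemma IsSimplePolytope3.facetEdges_ne {P F : Set E3} (hP : IsSimplePolytope3 P)
    (hF : F ∈ facets P) {m : ℕ} (hm : pVec P m = 0) : facetEdges P F ≠ m := by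
  intro hFm
  rw [pVec, ncard_eq_zero (hP.1.finite_facets.subset fun G hG => hG.1)] at hm
  exact eq_empty_iff_forall_notMem.1 hm F ⟨hF, hFm⟩

lemma IsBelt.card_le_pVec {P : Set E3} {k : ℕ} {B : Fin k → Set E3} (hB : IsBelt P B)
    (hP : IsSimplePolytope3 P) (m : ℕ) :
    (Finset.univ.filter fun j => facetEdges P (B j) = m).card ≤ pVec P m := by
  rw [← ncard_coe_finset, ← ncard_image_of_injective _ hB.injective]
  refine ncard_le_ncard ?_ (hP.1.finite_facets.subset fun F hF => hF.1)
  rintro _ ⟨j, hj, rfl⟩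
  exact ⟨hB.2.1.2.1 j, by simpa using hj⟩

lemma IsBelt.four_le_facetEdges {P : Set E3} {k : ℕ} {B : Fin k → Set E3} (hB : IsBelt P B)
    (hP : IsSimplePolytope3 P) (j : Fin k) : 4 ≤ facetEdges P (B j) := by
  obtain ⟨R⟩ := hP.exists_rotationSystem
  obtain ⟨n, n', φ, φ', X, X', hW, hW', hedges, -⟩ := R.exists_beltWalks hB
  have := fiberCard_pos hW.surjective j
  have := fiberCard_pos hW'.surjective j
  have := hedges j
  omega

lemma IsBelt.facetEdges_mem_Icc {P : Set E3} {k : ℕ} {B : Fin k → Set E3} (hB : IsBelt P B)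
    (hP : IsSimplePolytope3 P) {m : ℕ} (hm : ∀ i, m < i → pVec P i = 0) (j : Fin k) :
    facetEdges P (B j) ∈ Finset.Icc 4 m :=
  Finset.mem_Icc.2 ⟨hB.four_le_facetEdges hP j,
    not_lt.1 fun h => hP.facetEdges_ne (hB.2.1.2.1 j) (hm _ h) rfl⟩

lemma IsBelt.surrounds_or_borders {P Q Q' : Set E3} {k : ℕ} {B : Fin k → Set E3}
    (hB : IsBelt P B) (hP : IsSimplePolytope3 P)
    (hQ : IsCompOf Q (frontier P \ ⋃ i, B i))
    (hQ' : IsCompOf Q' (frontier P \ ⋃ i, B i)) (hne : Q ≠ Q') :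
    (∃ F F', sideFacets P Q = {F} ∧ sideFacets P Q' = {F'} ∧
        facetEdges P F = k ∧ facetEdges P F' = k ∧ ∀ j, facetEdges P (B j) = 4) ∨
      (∃ F, (sideFacets P Q = {F} ∨ sideFacets P Q' = {F}) ∧ facetEdges P F = k ∧
        2 ≤ ∑ j, (facetEdges P (B j) - 4) ∧
        ∃ L : Fin (∑ j, (facetEdges P (B j) - 4)) → Set E3, Borders P B L ∧
          (sideFacets P Q = {F} → ∀ i, L i ∈ sideFacets P Q') ∧
          (sideFacets P Q' = {F} → ∀ i, L i ∈ sideFacets P Q)) ∨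
      ∃ α α' : Fin k → ℕ, 2 ≤ ∑ j, (α j - 1) ∧ 2 ≤ ∑ j, (α' j - 1) ∧
        BordersLoopOn P B Q α (∑ j, (α j - 1)) ∧ BordersLoopOn P B Q' α' (∑ j, (α' j - 1)) ∧
        ∑ j, (α j - 1) + ∑ j, (α' j - 1) = ∑ j, (facetEdges P (B j) - 4) := by
  obtain ⟨R⟩ := hP.exists_rotationSystem
  obtain ⟨R₁, R₂, n, n', φ, φ', X, X', hW, hW', hedges⟩ :=
    RotationSystem.exists_sideWalks R hB hP hQ hQ' hne
  have hα j : 0 < fiberCard φ j := fiberCard_pos hW.surjective j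
  have hα' j : 0 < fiberCard φ' j := fiberCard_pos hW'.surjective j
  have hsum : ∑ j, (fiberCard φ j - 1) + ∑ j, (fiberCard φ' j - 1) =
      ∑ j, (facetEdges P (B j) - 4) := by
    rw [← Finset.sum_add_distrib]
    exact Finset.sum_congr rfl fun j _ => by have := hα j; have := hα' j; have := hedges j; omega
  rcases hW.singleton_or_bordersLoopOn hB hP hQ with ⟨h0, F, hF, hFk⟩ | ⟨h2, hL⟩ <;>
    rcases hW'.singleton_or_bordersLoopOn hB hP hQ' with ⟨h0', F', hF', hFk'⟩ | ⟨h2', hL'⟩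
  · refine Or.inl ⟨F, F', hF, hF', hFk, hFk', fun j => ?_⟩
    have h := Finset.sum_eq_zero_iff.1 h0 j (Finset.mem_univ _)
    have h' := Finset.sum_eq_zero_iff.1 h0' j (Finset.mem_univ _)
    have := hα j; have := hα' j; have := hedges j
    omega
  · rw [h0, zero_add] at hsum
    exact Or.inr (Or.inl ⟨F, Or.inl hF, hFk, hsum ▸ h2', (hsum ▸ hL').exists_borders hF⟩)
  · rw [h0', add_zero] at hsum
    obtain ⟨L, hL, hLQ, hLQ'⟩ := (hsum ▸ hL).exists_borders hF'
    exact Or.inr (Or.inl ⟨F', Or.inr hF', hFk', hsum ▸ h2, L, hL, hLQ', hLQ⟩)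
  · exact Or.inr (Or.inr ⟨_, _, h2, h2', hL, hL', hsum⟩)

lemma sum_comp_eq_of_mem_Icc {k : ℕ} {f : Fin k → ℕ} (hf : ∀ j, f j ∈ Finset.Icc 4 7)
    {b : ℕ → ℕ} (hb : ∀ i, b i = (Finset.univ.filter fun j => f j = i).card) (g : ℕ → ℕ) :
    ∑ j, g (f j) = b 4 * g 4 + b 5 * g 5 + b 6 * g 6 + b 7 * g 7 := by
  rw [← Finset.sum_fiberwise_of_maps_to' (fun j _ => hf j)]
  simp only [Finset.sum_const, smul_eq_mul, ← hb]
  simp [Finset.sum_Icc_succ_top]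

lemma loop_length_bounds {k l₁ l₂ b₄ b₅ b₆ b₇ : ℕ} (hk : k = b₄ + b₅ + b₆ + b₇)
    (hl : l₁ + l₂ = b₅ + 2 * b₆ + 3 * b₇) (h₇ : b₇ ≤ 1) :
    (l₁ + l₂ : ℤ) = 2 * k - 2 * b₄ - b₅ + b₇ ∧ l₁ + l₂ ≤ 2 * k + 1 ∧
      (min l₁ l₂ : ℤ) ≤ (k : ℤ) - b₄ - ⌈((b₅ : ℚ) - b₇) / 2⌉ ∧
      (k : ℤ) - b₄ - ⌈((b₅ : ℚ) - b₇) / 2⌉ ≤ (k : ℤ) ∧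
      (b₇ = 0 → k ≤ l₁ → k ≤ l₂ → l₁ = k ∧ l₂ = k ∧ b₄ = 0 ∧ b₅ = 0 ∧ b₆ = k) := by
  have hceil : ⌈((b₅ : ℚ) - b₇) / 2⌉ ≤ (k : ℤ) - b₄ - min (l₁ : ℤ) l₂ := by
    rw [Int.ceil_le, div_le_iff₀ two_pos]
    have hmin : (b₅ : ℤ) - b₇ ≤ ((k : ℤ) - b₄ - min (l₁ : ℤ) l₂) * 2 := by omega
    exact_mod_cast hmin
  have hceil0 : 0 ≤ ⌈((b₅ : ℚ) - b₇) / 2⌉ := by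
    refine Int.ceil_nonneg_of_neg_one_lt ?_
    linarith [b₅.cast_nonneg (α := ℚ), (Nat.cast_le_one (α := ℚ)).2 h₇]
  omega

/-! ### Belts bordering a loop of two facets -/

namespace RotationSystem
variable {P F G e e' : Set E3} {x : E3}

lemma eq_inter_of_subset (R : RotationSystem P) (he : IsEdgeOf e P) (hF : F ∈ facets P)
    (hG : G ∈ facets P) (hFG : F ≠ G) (heF : e ⊆ F) (heG : e ⊆ G) : e = F ∩ G := by
  obtain ⟨F', G', h, rfl⟩ := R.exists_eq_inter he
  rcases R.eq_or_eq_of_inter_subset h hF heF with rfl | rfl <;>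
    rcases R.eq_or_eq_of_inter_subset h hG heG with rfl | rfl
  exacts [absurd rfl hFG, rfl, inter_comm _ _, absurd rfl hFG]

lemma exists_eq_of_subset_iUnion (R : RotationSystem P) {ι : Sort*} {s : ι → Set E3}
    (he : IsEdgeOf e P) (hs : ∀ i, IsEdgeOf (s i) P) (hsub : e ⊆ ⋃ i, s i) : ∃ i, e = s i := by
  obtain ⟨F, G, h, rfl⟩ := R.exists_eq_inter he
  obtain ⟨x, hx, hall⟩ := R.exists_mem_inter_forall h
  obtain ⟨i, hi⟩ := mem_iUnion.1 (hsub hx)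
  obtain ⟨F', G', h', heq⟩ := R.exists_eq_inter (hs i)
  rw [heq] at hi
  refine ⟨i, heq ▸ R.eq_inter_of_subset (R.isEdgeOf_inter h) h'.left h'.right h'.ne ?_ ?_⟩
  · rcases hall F' h'.left hi.1 with rfl | rfl
    exacts [inter_subset_left, inter_subset_right]
  · rcases hall G' h'.right hi.2 with rfl | rfl
    exacts [inter_subset_left, inter_subset_right]

end RotationSystem

lemma IsVertexOf.eq_or_eq_of_mem_segment {P : Set E3} {p x y : E3} (hp : IsVertexOf p P)
    (hx : IsVertexOf x P) (hy : IsVertexOf y P) (h : p ∈ segment ℝ x y) : p = x ∨ p = y :=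
  ((mem_extremePoints_iff_forall_segment.1 (isExtreme_singleton.1 hp.2.2.2)).2 x
    (hx.2.2.2.subset rfl) y (hy.2.2.2.subset rfl) h).imp Eq.symm Eq.symm

/-- A closed path of edges with distinct vertices `v`, whose `a`-th edge separates the facet
`B (φ a)` from the facet `L (σ a)`, for two families of distinct facets without common members. -/
structure SeparatingCycle (P : Set E3) {k l n : ℕ} (B : Fin k → Set E3) (L : Fin l → Set E3)
    (v : Fin n → E3) (φ : Fin n → Fin k) (σ : Fin n → Fin l) : Prop where
  three_le : 3 ≤ n
  injective : Function.Injective v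
  isVertexOf : ∀ a, IsVertexOf (v a) P
  segment_eq : ∀ a, segment ℝ (v a) (v (nxt a)) = B (φ a) ∩ L (σ a)
  injective_left : Function.Injective B
  injective_right : Function.Injective L
  ne : ∀ j i, B j ≠ L i
  mem_facets_left : ∀ j, B j ∈ facets P
  mem_facets_right : ∀ i, L i ∈ facets P

namespace SeparatingCycle
variable {P : Set E3} {k l n : ℕ} {B : Fin k → Set E3} {L : Fin l → Set E3} {v : Fin n → E3}
  {φ : Fin n → Fin k} {σ : Fin n → Fin l} {a b : Fin n}

lemma mem (h : SeparatingCycle P B L v φ σ) (a : Fin n) : v a ∈ B (φ a) ∩ L (σ a) :=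
  h.segment_eq a ▸ left_mem_segment _ _ _

lemma nxt_mem (h : SeparatingCycle P B L v φ σ) (a : Fin n) :
    v (nxt a) ∈ B (φ a) ∩ L (σ a) :=
  h.segment_eq a ▸ right_mem_segment _ _ _

lemma adj (h : SeparatingCycle P B L v φ σ) (a : Fin n) : Adj P (L (σ a)) (B (φ a)) :=
  ⟨h.mem_facets_right _, h.mem_facets_left _, (h.ne _ _).symm, v a, (h.mem a).symm⟩

lemma eq_or_eq_nxt_of_mem (h : SeparatingCycle P B L v φ σ) {p : E3} (hp : IsVertexOf p P)
    (hmem : p ∈ B (φ a) ∩ L (σ a)) : p = v a ∨ p = v (nxt a) :=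
  hp.eq_or_eq_of_mem_segment (h.isVertexOf a) (h.isVertexOf _) (h.segment_eq a ▸ hmem)

lemma eq_of_eq (h : SeparatingCycle P B L v φ σ) (hφ : φ a = φ b) (hσ : σ a = σ b) : a = b := by
  have hmem := h.mem a
  have hmem' := h.nxt_mem a
  rw [hφ, hσ] at hmem hmem'
  have hn := h.three_le
  rcases h.eq_or_eq_nxt_of_mem (h.isVertexOf _) hmem with hab | hab
  · exact h.injective hab
  · obtain rfl := h.injective hab
    rcases h.eq_or_eq_nxt_of_mem (h.isVertexOf _) hmem' with hback | hab'
    · exact absurd (h.injective hback) (nxt_nxt_ne hn b)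
    · exact nxt_injective (h.injective hab')

lemma nxt_eq_iff (h : SeparatingCycle P B L v φ σ) (R : RotationSystem P) (a : Fin n) :
    φ (nxt a) = φ a ↔ σ (nxt a) ≠ σ a := by
  have hnxt := nxt_ne (by linarith [h.three_le]) a
  refine ⟨fun hφ hσ => hnxt (h.eq_of_eq hφ hσ), fun hσ => ?_⟩
  by_contra hφ
  obtain ⟨F, G, hFG, hv⟩ := R.exists_eq_vert (h.isVertexOf (nxt a))
  have hthree {K : Set E3} (hK : K ∈ facets P) (hvK : v (nxt a) ∈ K) :=
    R.eq_or_of_vert_mem hFG hK (hv ▸ hvK)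
  have hB := hthree (h.mem_facets_left _) (h.mem (nxt a)).1
  have hL := hthree (h.mem_facets_right _) (h.mem (nxt a)).2
  have hB' := hthree (h.mem_facets_left _) (h.nxt_mem a).1
  have hL' := hthree (h.mem_facets_right _) (h.nxt_mem a).2
  have hneB := h.injective_left.ne hφ
  have hneL := h.injective_right.ne hσ
  have h₁ := h.ne (φ (nxt a)) (σ (nxt a))
  have h₂ := h.ne (φ (nxt a)) (σ a)
  have h₃ := h.ne (φ a) (σ (nxt a))
  have h₄ := h.ne (φ a) (σ a)
  clear hthree hv
  grind

lemma card_change_add_card_change (h : SeparatingCycle P B L v φ σ) (R : RotationSystem P) :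
    (Finset.univ.filter fun a => φ (nxt a) ≠ φ a).card +
      (Finset.univ.filter fun a => σ (nxt a) ≠ σ a).card = n := by
  have hsplit := Finset.card_filter_add_card_filter_not (s := Finset.univ)
    fun a => φ (nxt a) ≠ φ a
  simpa only [not_ne_iff, h.nxt_eq_iff R, Finset.card_univ, Fintype.card_fin] using hsplit

lemma next_eq (h : SeparatingCycle P B L v φ σ) (R : RotationSystem P) (a : Fin n) :
    (∃ b, σ b = σ a ∧ R.next (L (σ a)) (B (φ a)) = B (φ b)) ∨
      ∃ i ≠ σ a, R.next (L (σ a)) (B (φ a)) = L i := by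
  have hn := h.three_le
  have hadj := h.adj a
  obtain ⟨b, hba, hb⟩ : ∃ b ≠ a, R.vert (L (σ a)) (B (φ a)) ∈ B (φ b) ∩ L (σ b) := by
    rcases h.eq_or_eq_nxt_of_mem (R.isVertexOf_vert hadj) (R.vert_mem hadj).symm with hv | hv
    · refine ⟨prv a, fun hprv => nxt_ne (by omega) a ?_, ?_⟩
      · rw [← congrArg nxt hprv, nxt_prv]
      · rw [hv, ← congrArg v (nxt_prv a)]
        exact h.nxt_mem _
    · exact ⟨nxt a, nxt_ne (by omega) a, hv ▸ h.mem _⟩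
  by_cases hσ : σ b = σ a
  · refine Or.inl ⟨b, hσ, ?_⟩
    rcases R.eq_or_of_vert_mem hadj (h.mem_facets_left _) hb.1 with hB | hB | hB
    · exact absurd hB (h.ne _ _)
    · exact absurd (h.eq_of_eq (h.injective_left hB) hσ) hba
    · exact hB.symm
  · refine Or.inr ⟨σ b, hσ, ?_⟩
    rcases R.eq_or_of_vert_mem hadj (h.mem_facets_right _) hb.2 with hL | hL | hL
    · exact absurd (h.injective_right hL) hσ
    · exact absurd hL.symm (h.ne _ _)
    · exact hL.symm

end SeparatingCycle

lemma eq_nxt_of_ne : ∀ {s i : Fin 2}, s ≠ i → s = nxt i := by decide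

namespace SeparatingCycle
variable {P : Set E3} {k n : ℕ} {B : Fin k → Set E3} {L : Fin 2 → Set E3} {v : Fin n → E3}
  {φ : Fin n → Fin k} {σ : Fin n → Fin 2}

lemma exists_next_eq (h : SeparatingCycle P B L v φ σ) (R : RotationSystem P) (i : Fin 2)
    (hi : i ∈ range σ) (hadj : Adj P (L i) (L (nxt i))) :
    ∃ a, σ a = i ∧ R.next (L i) (B (φ a)) = L (nxt i) := by
  by_contra! hnext
  obtain ⟨a, rfl⟩ := hi
  obtain ⟨b, -, hb⟩ : L (nxt (σ a)) ∈ (fun b => B (φ b)) '' (σ ⁻¹' {σ a}) := by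
    have ha : a ∈ σ ⁻¹' {σ a} := mem_singleton _
    refine R.setOf_adj_subset (h.adj a) (mem_image_of_mem (fun b => B (φ b)) ha) ?_ hadj
    rintro _ ⟨b, hb, rfl⟩
    obtain hb : σ b = σ a := hb
    rcases h.next_eq R b with ⟨c, hc, hbc⟩ | ⟨i, hi, hbi⟩
    · exact ⟨c, hc.trans hb, (hb ▸ hbc).symm⟩
    · rw [hb] at hi hbi
      exact absurd (eq_nxt_of_ne hi ▸ hbi) (hnext b hb)
  exact h.ne _ _ hb

lemma setOf_adj_eq (h : SeparatingCycle P B L v φ σ) (R : RotationSystem P) (i : Fin 2)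
    (hi : i ∈ range σ) (hadj : Adj P (L i) (L (nxt i))) :
    {G | Adj P (L i) G} = insert (L (nxt i)) ((fun a => B (φ a)) '' (σ ⁻¹' {i})) := by
  refine (R.setOf_adj_subset hadj (mem_insert _ _) ?_).antisymm (insert_subset hadj ?_)
  · rintro _ (rfl | ⟨a, rfl, rfl⟩)
    · obtain ⟨a, ha, hnext⟩ := h.exists_next_eq R.mirror i hi hadj
      refine Or.inr ⟨a, ha, ?_⟩
      have hadj' := h.adj a
      rw [ha] at hadj'
      rw [← hnext]
      exact (R.next_next hadj'.symm).symm
    · rcases h.next_eq R a with ⟨b, hb, hab⟩ | ⟨i, hi, hai⟩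
      · exact Or.inr ⟨b, hb, hab.symm⟩
      · exact Or.inl (eq_nxt_of_ne hi ▸ hai)
  · rintro _ ⟨a, rfl, rfl⟩
    exact h.adj a

lemma facetEdges_eq (h : SeparatingCycle P B L v φ σ) (R : RotationSystem P) (i : Fin 2)
    (hi : i ∈ range σ) (hadj : Adj P (L i) (L (nxt i))) :
    facetEdges P (L i) = fiberCard σ i + 1 := by
  rw [R.facetEdges_eq_ncard_adj hadj.left, h.setOf_adj_eq R i hi hadj, ncard_insert_of_notMem,
    InjOn.ncard_image, fiberCard, ← ncard_coe_finset]
  · congr 2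
    ext a
    simp
  · rintro a rfl b hb heq
    exact h.eq_of_eq (h.injective_left heq) hb.symm
  · rintro ⟨a, -, heq⟩
    exact h.ne _ _ heq

lemma card_change_right (h : SeparatingCycle P B L v φ σ) (R : RotationSystem P)
    (hσ : Function.Surjective σ) (hadj : Adj P (L 0) (L 1)) :
    (Finset.univ.filter fun a => σ (nxt a) ≠ σ a).card = 2 := by
  classical
  refine le_antisymm ?_ ?_
  · refine (Finset.card_le_card_of_injOn (t := {R.vert (L 0) (L 1), R.vert (L 1) (L 0)})
      (fun a => v (nxt a)) (fun a ha => ?_)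
      fun a _ b _ hab => nxt_injective (h.injective hab)).trans Finset.card_le_two
    have hmem : v (nxt a) ∈ L 0 ∩ L 1 := by
      have hmem₁ := (h.mem (nxt a)).2
      have hmem₂ := (h.nxt_mem a).2
      obtain ha : σ (nxt a) ≠ σ a := by simpa using ha
      have hcases : ∀ s t : Fin 2, s ≠ t → s = 0 ∧ t = 1 ∨ s = 1 ∧ t = 0 := by decide
      rcases hcases _ _ ha with ⟨h₁, h₂⟩ | ⟨h₁, h₂⟩ <;> rw [h₁] at hmem₁ <;> rw [h₂] at hmem₂
      exacts [⟨hmem₁, hmem₂⟩, ⟨hmem₂, hmem₁⟩]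
    rw [R.inter_eq_segment hadj] at hmem
    have := (h.isVertexOf (nxt a)).eq_or_eq_of_mem_segment (R.isVertexOf_vert hadj.symm)
      (R.isVertexOf_vert hadj) hmem
    simpa using this.symm
  · obtain ⟨s, hs⟩ := hσ 0
    obtain ⟨t, ht⟩ := hσ 1
    have hne : σ s ≠ σ t := by rw [hs, ht]; decide
    simpa only [ne_eq] using two_le_card_change hne

lemma add_four_eq (h : SeparatingCycle P B L v φ σ) (R : RotationSystem P)
    (hσ : Function.Surjective σ) (hadj : ∀ i, Adj P (L i) (L (nxt i)))
    (hφ : (Finset.univ.filter fun a => φ (nxt a) ≠ φ a).card = k) :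
    k + 4 = facetEdges P (L 0) + facetEdges P (L 1) := by
  have hn := h.card_change_add_card_change R
  rw [hφ, h.card_change_right R hσ (hadj 0)] at hn
  have hfibers := sum_fiberCard σ
  rw [Fin.sum_univ_two] at hfibers
  rw [h.facetEdges_eq R 0 (hσ 0) (hadj 0), h.facetEdges_eq R 1 (hσ 1) (hadj 1)]
  omega

end SeparatingCycle

lemma IsLoop.injective_of_two {P : Set E3} {L : Fin 2 → Set E3} (hL : IsLoop P L) :
    Function.Injective L := by
  intro i j hij
  by_contra hne
  exact (hL.adj le_rfl j).ne (hij.symm.trans (congrArg L (eq_nxt_of_ne hne)))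

lemma Borders.isLoop_right {P : Set E3} {k l : ℕ} {B : Fin k → Set E3} {L : Fin l → Set E3} :
    Borders P B L → IsLoop P L
  | ⟨_, _, _, _, _, _, _, hL⟩ => hL.1

lemma Borders.ne {P : Set E3} {k l : ℕ} {B : Fin k → Set E3} {L : Fin l → Set E3}
    (h : Borders P B L) (j : Fin k) (i : Fin l) : B j ≠ L i := by
  obtain ⟨γ, C, C', hC, hC', hne, ⟨hB, hBC, -⟩, ⟨-, hLC, -⟩⟩ := h
  intro heq
  obtain ⟨x, hx⟩ := (hB.2.1 j).1.1.intrinsicInterior (hB.2.1 j).1.2.2.1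
  exact hne (hC.eq_of_mem hC' (hBC j hx) (hLC i (heq ▸ hx)))

lemma Borders.exists_separatingCycle {P : Set E3} {k l : ℕ} {B : Fin k → Set E3}
    {L : Fin l → Set E3} (h : Borders P B L) (R : RotationSystem P) (hk : 2 ≤ k)
    (hB : Function.Injective B) (hL : Function.Injective L) :
    ∃ (n : ℕ) (v : Fin n → E3) (φ : Fin n → Fin k) (σ : Fin n → Fin l),
      SeparatingCycle P B L v φ σ ∧ Function.Surjective σ ∧
        (Finset.univ.filter fun a => φ (nxt a) ≠ φ a).card = k := by
  have hBL := h.ne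
  obtain ⟨γ, C, C', -, -, -,
    ⟨hBloop, -, n, v, φ, ⟨hn, hv, hvert, hedge, hγ⟩, hvB, -, -, hcard⟩,
    ⟨hLloop, -, m, v', ψ, ⟨-, -, -, hedge', hγ'⟩, hvL, -, hψ, -⟩⟩ := h
  have hcommon (a : Fin n) : ∃ i, segment ℝ (v a) (v (nxt a)) = B (φ a) ∩ L i := by
    obtain ⟨b, hb⟩ := R.exists_eq_of_subset_iUnion (hedge a) hedge'
      (hγ' ▸ hγ ▸ subset_iUnion (fun a => segment ℝ (v a) (v (nxt a))) a)
    exact ⟨ψ b, R.eq_inter_of_subset (hedge a) (hBloop.2.1 _) (hLloop.2.1 _) (hBL _ _) (hvB a)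
      (hb ▸ hvL b)⟩
  choose σ hσ using hcommon
  have hcycle : SeparatingCycle P B L v φ σ :=
    ⟨hn, hv, hvert, hσ, hB, hL, hBL, hBloop.2.1, hLloop.2.1⟩
  refine ⟨n, v, φ, σ, hcycle, fun i => ?_, hcard hk⟩
  obtain ⟨b, rfl⟩ := hψ i
  obtain ⟨a, ha⟩ := R.exists_eq_of_subset_iUnion (hedge' b) hedge
    (hγ ▸ hγ' ▸ subset_iUnion (fun b => segment ℝ (v' b) (v' (nxt b))) b)
  have hsub : L (σ a) ∩ B (φ a) ⊆ L (ψ b) := inter_comm (B _) _ ▸ hσ a ▸ ha ▸ hvL b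
  rcases R.eq_or_eq_of_inter_subset (hcycle.adj a) (hLloop.2.1 _) hsub with heq | heq
  · exact ⟨a, hL heq.symm⟩
  · exact absurd heq.symm (hBL _ _)

lemma IsSimplePolytope3.four_le_facetEdges {P F G : Set E3} (hP : IsSimplePolytope3 P)
    (h3 : pVec P 3 = 0) (h : Adj P F G) : 4 ≤ facetEdges P F := by
  obtain ⟨R⟩ := hP.exists_rotationSystem
  exact (R.three_le_facetEdges h).lt_of_ne' (hP.facetEdges_ne h.left h3)

lemma IsBelt.add_four_eq_of_borders {P : Set E3} {k : ℕ} {B : Fin k → Set E3} (hB : IsBelt P B)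
    (hP : IsSimplePolytope3 P) {L : Fin 2 → Set E3} (hL : Borders P B L) :
    k + 4 = facetEdges P (L 0) + facetEdges P (L 1) := by
  obtain ⟨R⟩ := hP.exists_rotationSystem
  have hk := hB.1
  have hloop : IsLoop P L := hL.isLoop_right
  obtain ⟨n, v, φ, σ, hcycle, hσ, hcard⟩ :=
    hL.exists_separatingCycle R (by omega) hB.injective hloop.injective_of_two
  exact hcycle.add_four_eq R hσ (hloop.adj le_rfl) hcard

lemma IsBelt.eq_and_four_le_of_borders {P : Set E3} {k : ℕ} {B : Fin k → Set E3}
    (hB : IsBelt P B) (hP : IsSimplePolytope3 P) (h3 : pVec P 3 = 0) {L : Fin 2 → Set E3}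
    (hL : Borders P B L) :
    (k : ℤ) = facetEdges P (L 0) + facetEdges P (L 1) - 4 ∧ 4 ≤ k := by
  have hadj : Adj P (L 0) (L 1) := hL.isLoop_right.adj le_rfl 0
  have hadd := hB.add_four_eq_of_borders hP hL
  have h0 := hP.four_le_facetEdges h3 hadj
  have h1 := hP.four_le_facetEdges h3 hadj.symm
  omega

/-- The loop lemma: for a simple 3-polytope with `p₃ = 0`, `pₖ = 0` for `k ≥ 8` and
`p₇ ≤ 1`, and a `k`-belt `B` consisting of `bᵢ` `i`-gons (`4 ≤ i ≤ 7`), with `P₁, P₂`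
the two components of `∂P ∖ |B|` and `W₁, W₂` the corresponding sets of facets, one of
the three alternatives (1)–(3) holds; moreover, any `2`-loop bordering `B` forces
`k = sᵢ + sⱼ - 4 ≥ 4`. -/
theorem loop_lemma (P : Set E3) (hP : IsSimplePolytope3 P)
    (h3 : pVec P 3 = 0) (h8 : ∀ m, 8 ≤ m → pVec P m = 0) (h7 : pVec P 7 ≤ 1)
    {k : ℕ} (B : Fin k → Set E3) (hB : IsBelt P B)
    (b : ℕ → ℕ)
    (hb : ∀ i, b i = (Finset.univ.filter (fun j : Fin k => facetEdges P (B j) = i)).card)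
    (P₁ P₂ : Set E3)
    (hP₁ : IsCompOf P₁ (frontier P \ ⋃ i, B i))
    (hP₂ : IsCompOf P₂ (frontier P \ ⋃ i, B i))
    (hP12 : P₁ ≠ P₂)
    (W₁ W₂ : Set (Set E3))
    (hW₁ : W₁ = {F | IsFacetOf F P ∧ intrinsicInterior ℝ F ⊆ P₁})
    (hW₂ : W₂ = {F | IsFacetOf F P ∧ intrinsicInterior ℝ F ⊆ P₂}) :
    ((∃ Fs Ft : Set E3, W₁ = {Fs} ∧ W₂ = {Ft} ∧
        facetEdges P Fs = k ∧ facetEdges P Ft = k ∧ ∀ j, facetEdges P (B j) = 4) ∨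
     (∃ Fs : Set E3, (W₁ = {Fs} ∨ W₂ = {Fs}) ∧ facetEdges P Fs = k ∧
        2 ≤ b 5 + 2 * b 6 + 3 * b 7 ∧
        ∃ L : Fin (b 5 + 2 * b 6 + 3 * b 7) → Set E3, Borders P B L ∧
          (W₁ = {Fs} → ∀ i, L i ∈ W₂) ∧ (W₂ = {Fs} → ∀ i, L i ∈ W₁)) ∨
     (∃ (l₁ l₂ : ℕ) (L₁ : Fin l₁ → Set E3) (L₂ : Fin l₂ → Set E3) (γ₁ γ₂ : Set E3),
        2 ≤ l₁ ∧ 2 ≤ l₂ ∧ (∀ i, L₁ i ∈ W₁) ∧ (∀ i, L₂ i ∈ W₂) ∧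
        (∃ C C' : Set E3, IsCompOf C (frontier P \ γ₁) ∧ IsCompOf C' (frontier P \ γ₁) ∧
          C ≠ C' ∧ WalksRound P γ₁ C B ∧ WalksRound P γ₁ C' L₁) ∧
        (∃ C C' : Set E3, IsCompOf C (frontier P \ γ₂) ∧ IsCompOf C' (frontier P \ γ₂) ∧
          C ≠ C' ∧ WalksRound P γ₂ C B ∧ WalksRound P γ₂ C' L₂) ∧
        -- (a)
        l₁ = ∑ j : Fin k, (edgesInCommon P (B j) γ₁ - 1) ∧
        l₂ = ∑ j : Fin k, (edgesInCommon P (B j) γ₂ - 1) ∧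
        -- (b)
        (l₁ + l₂ : ℤ) = 2 * k - 2 * b 4 - b 5 + b 7 ∧ l₁ + l₂ ≤ 2 * k + 1 ∧
        -- (c)
        (min l₁ l₂ : ℤ) ≤ (k : ℤ) - b 4 - ⌈((b 5 : ℚ) - b 7) / 2⌉ ∧
        (k : ℤ) - b 4 - ⌈((b 5 : ℚ) - b 7) / 2⌉ ≤ (k : ℤ) ∧
        -- (d)
        (b 7 = 0 → k ≤ l₁ → k ≤ l₂ →
          l₁ = k ∧ l₂ = k ∧ b 4 = 0 ∧ b 5 = 0 ∧ b 6 = k))) ∧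
    (∀ L : Fin 2 → Set E3, Borders P B L →
      (k : ℤ) = facetEdges P (L 0) + facetEdges P (L 1) - 4 ∧ 4 ≤ k) := by
  have hB47 := hB.facetEdges_mem_Icc hP h8
  have hk : k = b 4 + b 5 + b 6 + b 7 := by
    simpa using sum_comp_eq_of_mem_Icc hB47 hb fun _ => 1
  have hS : ∑ j, (facetEdges P (B j) - 4) = b 5 + 2 * b 6 + 3 * b 7 := by
    rw [sum_comp_eq_of_mem_Icc hB47 hb (· - 4)]
    omega
  have hb7 : b 7 ≤ 1 := (hb 7).trans_le ((hB.card_le_pVec hP 7).trans h7)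
  obtain rfl : W₁ = sideFacets P P₁ := hW₁
  obtain rfl : W₂ = sideFacets P P₂ := hW₂
  refine ⟨?_, fun L hL => hB.eq_and_four_le_of_borders hP h3 hL⟩
  have hsides := hB.surrounds_or_borders hP hP₁ hP₂ hP12
  rw [hS] at hsides
  refine hsides.imp_right (Or.imp_right ?_)
  rintro ⟨α, α', h2, h2', ⟨L, γ, hL, hγ, hα⟩, ⟨L', γ', hL', hγ', hα'⟩, hl⟩
  exact ⟨_, _, L, L', γ, γ', h2, h2', hL, hL', hγ, hγ', by simp only [hα], by simp only [hα'],
    loop_length_bounds hk hl hb7⟩
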